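/- arXiv:2601.18590 — 2 statements merged into one kernel-verified Lean document; each statement's English description precedes it below -/
import Mathlib

section
/- Let q be a prime power and let δ ∈ (0, 1 − 1/q²) be a constant. Then there exists a constant c_δ > 0, depending only on q and δ, such that for all sufficiently large n the following holds with d = ⌊δn⌋: if k is an integer with 1 ≤ k ≤ n satisfying (q^{2n−k} − 1)/(q − 1) < c_δ · √n · q^{2n} / ∑_{i=0}^{d−1} C(n,i)(q²−1)^i, then there exists a k-dimensional linear subspace C ⊆ 𝔽_q^{2n} that is symplectic self-orthogonal (C ⊆ C^{⊥_S}) and such that every nonzero vector of C^{⊥_S} has symplectic weight at least d, i.e., d_S(C^{⊥_S}) ≥ d. -/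
open Finset
open scoped Classical

/-- Symplectic weight of a vector in `F^{2n}`, written as `Fin n → F × F`. -/
noncomputable def sympWt {F : Type} [Zero F] [DecidableEq F] {n : ℕ} (u : Fin n → F × F) : ℕ :=
  hammingNorm u

/-- The symplectic inner product on `F^{2n}`: `⟨(a|b),(a'|b')⟩_S = ⟨a,b'⟩ - ⟨b,a'⟩`. -/
def sympInner {F : Type} [Field F] {n : ℕ} (u v : Fin n → F × F) : F :=
  ∑ i, ((u i).1 * (v i).2 - (u i).2 * (v i).1)

/-!
The graph of a uniformly random symmetric matrix is a random Lagrangian subspace `L` of the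
symplectic space of length `n + r`, where `r = n - k`. If `L` contains no nonzero vector supported
on the last `r` coordinates, its projection to the first `n` coordinates is the dual of a
self-orthogonal code of dimension `k`; if `L` also avoids the vectors whose projection is nonzero of
low weight, this dual has large distance.

A generic set of `j` low-weight vectors lies in `L` with probability `q ^ (j choose 2 - j (n + r))`
if it is isotropic, and with probability zero otherwise. Almost all sets are generic, because few
points of a ball have a translate that falls back into the ball, and character sums show that a
low-weight vector is orthogonal to such a set with probability close to `q ^ (-j)`. Hence the
number of low-weight lines in `L` has its first `J` binomial moments close to those of a Poisson
variable of mean `μ`, and Bonferroni's inequality truncated at an odd order `J ≥ 8 μ` shows that it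
vanishes with probability at least `q ^ (-2 J) / 4`. The moment estimates are accurate for `J` up to
a constant times `√n`, which is where the factor `√n` comes from.
-/

section SymplecticForm

variable {F V : Type*} [Field F] [AddCommGroup V] [Module F V]

/-- A set of vectors is isotropic for a bilinear form if the form vanishes on all pairs of its
elements. -/
def IsIsotropic (ω : LinearMap.BilinForm F V) (s : Set V) : Prop :=
  ∀ x ∈ s, ∀ y ∈ s, ω x y = 0

lemma IsIsotropic.mono {ω : LinearMap.BilinForm F V} {s t : Set V} (ht : IsIsotropic ω t)
    (hst : s ⊆ t) : IsIsotropic ω s :=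
  fun x hx y hy => ht x (hst hx) y (hst hy)

lemma IsIsotropic.insert {ω : LinearMap.BilinForm F V} (hω : ω.IsAlt) {s : Set V}
    (hs : IsIsotropic ω s) {x : V} (hx : ∀ y ∈ s, ω x y = 0) : IsIsotropic ω (insert x s) := by
  rintro a (rfl | ha) b (rfl | hb)
  · exact hω.self_eq_zero _
  · exact hx b hb
  · exact hω.isRefl _ _ (hx a ha)
  · exact hs a ha b hb

variable {ι : Type*}

/-- The half `a` of a vector `(a|b)`. -/
def fstPart : (ι → F × F) →ₗ[F] (ι → F) := (LinearMap.fst F F F).compLeft ι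

/-- The half `b` of a vector `(a|b)`. -/
def sndPart : (ι → F × F) →ₗ[F] (ι → F) := (LinearMap.snd F F F).compLeft ι

lemma fstPart_apply (x : ι → F × F) (i : ι) : fstPart x i = (x i).1 := rfl

lemma sndPart_apply (x : ι → F × F) (i : ι) : sndPart x i = (x i).2 := rfl

lemma eq_zero_of_fstPart_of_sndPart {x : ι → F × F} (h₁ : fstPart x = 0) (h₂ : sndPart x = 0) :
    x = 0 :=
  funext fun i => Prod.ext (congrFun h₁ i) (congrFun h₂ i)

variable [Fintype ι]

/-- The symplectic form `⟨a, b'⟩ - ⟨b, a'⟩` as a bilinear form, for an arbitrary finite set of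
coordinates. -/
def sympForm : LinearMap.BilinForm F (ι → F × F) :=
  (dotProductBilin F F).compl₁₂ fstPart sndPart - (dotProductBilin F F).compl₁₂ sndPart fstPart

lemma sympForm_apply (x y : ι → F × F) :
    sympForm x y = fstPart x ⬝ᵥ sndPart y - sndPart x ⬝ᵥ fstPart y := rfl

lemma sympForm_eq_sum (x y : ι → F × F) :
    sympForm x y = ∑ i, ((x i).1 * (y i).2 - (x i).2 * (y i).1) := by
  simp only [sympForm_apply, dotProduct, fstPart_apply, sndPart_apply, sum_sub_distrib]

lemma sympForm_isAlt : (sympForm : LinearMap.BilinForm F (ι → F × F)).IsAlt := fun x => by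
  rw [sympForm_apply, dotProduct_comm, sub_self]

lemma sympForm_nondegenerate : (sympForm : LinearMap.BilinForm F (ι → F × F)).Nondegenerate := by
  have hleft (x : ι → F × F) (hx : ∀ y, sympForm x y = 0) : x = 0 := by
    refine eq_zero_of_fstPart_of_sndPart (dotProduct_eq_zero _ fun v => ?_)
      (dotProduct_eq_zero _ fun v => ?_)
    · simpa [sympForm_eq_sum, dotProduct, fstPart_apply] using hx fun i => (0, v i)
    · simpa [sympForm_eq_sum, dotProduct, sndPart_apply] using hx fun i => (v i, 0)
  exact ⟨hleft, fun y hy => hleft y fun x => sympForm_isAlt.isRefl _ _ (hy x)⟩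

end SymplecticForm

lemma two_le_card (α : Type*) [Fintype α] [Nontrivial α] : (2 : ℝ) ≤ Fintype.card α :=
  mod_cast Fintype.one_lt_card

section GraphCount

variable {F ι : Type*} [Field F] [Fintype ι]

lemma exists_dotProduct_eq_one_of_notMem_span {s : Set (ι → F)} {v : ι → F}
    (hv : v ∉ Submodule.span F s) : ∃ f : ι → F, f ⬝ᵥ v = 1 ∧ ∀ y ∈ s, f ⬝ᵥ y = 0 := by
  obtain ⟨φ, hφv, hφs⟩ := Submodule.exists_le_ker_of_notMem hv
  obtain ⟨f, rfl⟩ := (dotProductEquiv F ι).surjective φ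
  refine ⟨(f ⬝ᵥ v)⁻¹ • f, ?_, fun y hy => ?_⟩
  · rw [smul_dotProduct, smul_eq_mul]
    exact inv_mul_cancel₀ hφv
  · rw [smul_dotProduct, show f ⬝ᵥ y = 0 from hφs (Submodule.subset_span hy), smul_zero]

lemma card_eq_card_mul_card_fiber {G H : Type*} [AddCommGroup G] [AddCommGroup H] [DecidableEq H]
    (g : G →+ H) {s : Finset G} {t : Finset H} (hst : ∀ a ∈ s, g a ∈ t) (b₀ : H)
    (htrans : ∀ b ∈ t, ∃ d, g d = b₀ - b ∧ ∀ a, a + d ∈ s ↔ a ∈ s) :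
    #s = #t * #{a ∈ s | g a = b₀} := by
  rw [card_eq_sum_card_fiberwise hst, sum_const_nat]
  intro b hb
  obtain ⟨d, hd, hs⟩ := htrans b hb
  refine card_equiv (Equiv.addRight d) fun a => ?_
  simp only [mem_filter, Equiv.coe_addRight, hs, map_add, hd]
  refine and_congr_right fun _ => ?_
  rw [← eq_sub_iff_add_eq, sub_sub_cancel]

lemma exists_isSymm_mulVec_eq {s : Set (ι → F)} {a : ι → F} (ha : a ∉ Submodule.span F s)
    {d : ι → F} (hd : ∀ y ∈ s, d ⬝ᵥ y = 0) :
    ∃ A : Matrix ι ι F, A.IsSymm ∧ A.mulVec a = d ∧ ∀ y ∈ s, A.mulVec y = 0 := by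
  obtain ⟨f, hfa, hfs⟩ := exists_dotProduct_eq_one_of_notMem_span ha
  let A := Matrix.vecMulVec d f + Matrix.vecMulVec f d - (d ⬝ᵥ a) • Matrix.vecMulVec f f
  have hA (v : ι → F) :
      A.mulVec v = (f ⬝ᵥ v) • d + (d ⬝ᵥ v - (d ⬝ᵥ a) * (f ⬝ᵥ v)) • f := by
    simp only [A, Matrix.sub_mulVec, Matrix.add_mulVec, Matrix.smul_mulVec,
      Matrix.vecMulVec_mulVec, op_smul_eq_smul, smul_smul, sub_smul, add_sub_assoc]
  refine ⟨A, ?_, by simp [hA, hfa], fun y hy => by simp [hA, hfs y hy, hd y hy]⟩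
  ext i j
  simp only [A, Matrix.transpose_apply, Matrix.sub_apply, Matrix.add_apply, Matrix.smul_apply,
    Matrix.vecMulVec_apply, smul_eq_mul]
  ring

/-- The graph `{(a|b) : A a = b}` of a square matrix, a Lagrangian subspace if `A` is
symmetric. -/
def matrixGraph (A : Matrix ι ι F) : Submodule F (ι → F × F) :=
  LinearMap.eqLocus (A.mulVecLin ∘ₗ fstPart) sndPart

lemma mem_matrixGraph {A : Matrix ι ι F} {x : ι → F × F} :
    x ∈ matrixGraph A ↔ A.mulVec (fstPart x) = sndPart x := Iff.rfl

lemma isIsotropic_matrixGraph {A : Matrix ι ι F} (hA : A.IsSymm) :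
    IsIsotropic sympForm (matrixGraph A : Set (ι → F × F)) := by
  intro x hx y hy
  rw [sympForm_apply, ← mem_matrixGraph.1 hx, ← mem_matrixGraph.1 hy, Matrix.dotProduct_mulVec,
    ← Matrix.mulVec_transpose, hA.eq, sub_self]

lemma linearIndepOn_fstPart_of_subset_matrixGraph {A : Matrix ι ι F} {t : Set (ι → F × F)}
    (htA : t ⊆ matrixGraph A) (ht : LinearIndepOn F id t) : LinearIndepOn F fstPart t := by
  refine ht.map_injOn fstPart fun x hx y hy hxy => ?_
  have hspan := Submodule.span_le.2 htA
  rw [Set.image_id] at hx hy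
  have hsub := sub_mem (hspan hx) (hspan hy)
  have hfst : fstPart (x - y) = 0 := by rw [map_sub, hxy, sub_self]
  refine sub_eq_zero.1 (eq_zero_of_fstPart_of_sndPart hfst ?_)
  rw [← mem_matrixGraph.1 hsub, hfst, Matrix.mulVec_zero]

variable [Fintype F]

/-- The symmetric matrices whose graph contains `t`. -/
noncomputable def symmThrough (t : Finset (ι → F × F)) : Finset (Matrix ι ι F) :=
  {A | A.IsSymm ∧ (t : Set (ι → F × F)) ⊆ matrixGraph A}

lemma mem_symmThrough {t : Finset (ι → F × F)} {A : Matrix ι ι F} :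
    A ∈ symmThrough t ↔ A.IsSymm ∧ ∀ x ∈ t, A.mulVec (fstPart x) = sndPart x := by
  simp only [symmThrough, mem_filter, mem_univ, true_and, Set.subset_def, SetLike.mem_coe,
    mem_matrixGraph]

lemma symmThrough_empty_nonempty : (symmThrough (∅ : Finset (ι → F × F))).Nonempty :=
  ⟨0, mem_symmThrough.2 ⟨Matrix.isSymm_zero, by simp⟩⟩

lemma symmThrough_anti {s t : Finset (ι → F × F)} (hst : s ⊆ t) :
    symmThrough t ⊆ symmThrough s := fun A hA => by
  rw [mem_symmThrough] at hA ⊢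
  exact ⟨hA.1, fun x hx => hA.2 x (hst hx)⟩

lemma card_dotProduct_eq_mul_pow {α : Type*} {v : α → ι → F} {t : Finset α}
    (ht : LinearIndepOn F v (t : Set α)) (c : α → F) :
    #{b : ι → F | ∀ y ∈ t, b ⬝ᵥ v y = c y} * Fintype.card F ^ #t
      = Fintype.card F ^ Fintype.card ι := by
  induction t using Finset.induction_on with
  | empty => simp
  | insert x t hx ih =>
    rw [coe_insert, linearIndepOn_insert (mem_coe.not.2 hx)] at ht
    obtain ⟨f, hfx, hft⟩ := exists_dotProduct_eq_one_of_notMem_span ht.2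
    have hfiber : #{b : ι → F | ∀ y ∈ t, b ⬝ᵥ v y = c y} =
        #(univ : Finset F) * #{b : ι → F | (∀ y ∈ t, b ⬝ᵥ v y = c y) ∧ b ⬝ᵥ v x = c x} := by
      rw [← filter_filter]
      refine card_eq_card_mul_card_fiber ((dotProductBilin F F).flip (v x)).toAddMonoidHom
        (fun _ _ => mem_univ _) (c x) fun e _ => ?_
      · refine ⟨(c x - e) • f, ?_, fun b => ?_⟩
        · change ((c x - e) • f) ⬝ᵥ v x = c x - e
          rw [smul_dotProduct, hfx, smul_eq_mul, mul_one]
        · simp only [mem_filter, mem_univ, true_and, add_dotProduct, smul_dotProduct]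
          refine forall₂_congr fun y hy => ?_
          rw [hft _ ⟨y, hy, rfl⟩, smul_zero, add_zero]
    simp only [forall_mem_insert, and_comm (a := _ ⬝ᵥ v x = c x)]
    rw [← ih ht.1, card_insert_of_notMem hx, hfiber, card_univ]
    ring

lemma card_symmThrough_insert {t : Finset (ι → F × F)} {x : ι → F × F} (hx : x ∉ t)
    (ht : LinearIndepOn F fstPart (insert x t : Set (ι → F × F)))
    (hxt : ∀ y ∈ t, sympForm x y = 0) :
    #(symmThrough (insert x t)) * Fintype.card F ^ Fintype.card ι
      = #(symmThrough t) * Fintype.card F ^ #t := by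
  rw [linearIndepOn_insert (mem_coe.not.2 hx)] at ht
  have hfiber : #(symmThrough t) =
      #{b : ι → F | ∀ y ∈ t, b ⬝ᵥ fstPart y = fstPart x ⬝ᵥ sndPart y} *
        #{A ∈ symmThrough t | Matrix.mulVec A (fstPart x) = sndPart x} := by
    let g : Matrix ι ι F →+ (ι → F) := ((Matrix.mulVecBilin F F).flip (fstPart x)).toAddMonoidHom
    refine card_eq_card_mul_card_fiber g (fun A hA => ?_) (sndPart x) fun e he => ?_
    · rw [mem_symmThrough] at hA
      refine mem_filter.2 ⟨mem_univ _, fun y hy => ?_⟩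
      change A.mulVec (fstPart x) ⬝ᵥ fstPart y = _
      rw [← hA.2 y hy, Matrix.dotProduct_mulVec, ← Matrix.mulVec_transpose, hA.1.eq]
    · have hd : ∀ y ∈ fstPart '' (t : Set (ι → F × F)), (sndPart x - e) ⬝ᵥ y = 0 := by
        rintro _ ⟨y, hy, rfl⟩
        rw [sub_dotProduct, (mem_filter.1 he).2 y hy, ← neg_eq_zero, neg_sub]
        exact hxt y hy
      obtain ⟨A₀, hA₀, hA₀x, hA₀t⟩ := exists_isSymm_mulVec_eq ht.2 hd
      refine ⟨A₀, hA₀x, fun A => ?_⟩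
      rw [mem_symmThrough, mem_symmThrough]
      refine and_congr ⟨fun h => by simpa using h.sub hA₀, fun h => h.add hA₀⟩
        (forall₂_congr fun y hy => ?_)
      rw [Matrix.add_mulVec, hA₀t _ ⟨y, hy, rfl⟩, add_zero]
  have hinsert : symmThrough (insert x t) =
      {A ∈ symmThrough t | Matrix.mulVec A (fstPart x) = sndPart x} := by
    ext A
    simp only [mem_symmThrough, mem_filter, forall_mem_insert]
    tauto
  have hrows : #{b : ι → F | ∀ y ∈ t, b ⬝ᵥ fstPart y = fstPart x ⬝ᵥ sndPart y} *
      Fintype.card F ^ #t = Fintype.card F ^ Fintype.card ι := by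
    convert card_dotProduct_eq_mul_pow ht.1 fun y => fstPart x ⬝ᵥ sndPart y
  rw [hinsert, hfiber, ← hrows]
  ring

lemma card_symmThrough_mul_pow {t : Finset (ι → F × F)}
    (ht : LinearIndepOn F fstPart (t : Set (ι → F × F)))
    (hiso : IsIsotropic sympForm (t : Set (ι → F × F))) :
    #(symmThrough t) * Fintype.card F ^ (#t * Fintype.card ι)
      = #(symmThrough (∅ : Finset (ι → F × F))) * Fintype.card F ^ (#t).choose 2 := by
  induction t using Finset.induction_on with
  | empty => simp
  | insert x t hx ih =>
    rw [coe_insert] at ht hiso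
    have hstep := card_symmThrough_insert hx ht fun y hy =>
      hiso x (Set.mem_insert _ _) y (Set.mem_insert_of_mem _ hy)
    have ih := ih (ht.mono (Set.subset_insert _ _)) (hiso.mono (Set.subset_insert _ _))
    rw [card_insert_of_notMem hx, Nat.choose_succ_succ' #t 1, Nat.choose_one_right]
    calc _ = #(symmThrough (insert x t)) * Fintype.card F ^ Fintype.card ι
            * Fintype.card F ^ (#t * Fintype.card ι) := by ring
      _ = #(symmThrough t) * Fintype.card F ^ (#t * Fintype.card ι)
            * Fintype.card F ^ #t := by rw [hstep]; ring
      _ = _ := by rw [ih]; ring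

/-- The proportion of symmetric matrices whose graph contains `t`. -/
noncomputable def symmDensity (t : Finset (ι → F × F)) : ℝ :=
  #(symmThrough t) / #(symmThrough (∅ : Finset (ι → F × F)))

lemma symmDensity_nonneg (t : Finset (ι → F × F)) : 0 ≤ symmDensity t := by
  unfold symmDensity
  positivity

lemma symmDensity_anti {s t : Finset (ι → F × F)} (hst : s ⊆ t) :
    symmDensity t ≤ symmDensity s :=
  div_le_div_of_nonneg_right (Nat.cast_le.2 (card_le_card (symmThrough_anti hst)))
    (Nat.cast_nonneg _)

lemma symmDensity_of_isIsotropic {t : Finset (ι → F × F)}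
    (ht : LinearIndepOn F fstPart (t : Set (ι → F × F)))
    (hiso : IsIsotropic sympForm (t : Set (ι → F × F))) :
    symmDensity t = (Fintype.card F : ℝ) ^ (#t).choose 2 /
      (Fintype.card F : ℝ) ^ (#t * Fintype.card ι) := by
  have hsymm : (#(symmThrough (∅ : Finset (ι → F × F))) : ℝ) ≠ 0 :=
    Nat.cast_ne_zero.2 symmThrough_empty_nonempty.card_ne_zero
  rw [symmDensity, div_eq_div_iff hsymm (by positivity), mul_comm (_ ^ _) (_ : ℝ)]
  exact_mod_cast card_symmThrough_mul_pow ht hiso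

lemma symmDensity_of_not_isIsotropic {t : Finset (ι → F × F)}
    (ht : ¬ IsIsotropic sympForm (t : Set (ι → F × F))) : symmDensity t = 0 := by
  have hempty : symmThrough t = ∅ := by
    refine eq_empty_of_forall_notMem fun A hA => ht ?_
    obtain ⟨hA, htA⟩ := (mem_filter.1 hA).2
    exact (isIsotropic_matrixGraph hA).mono htA
  rw [symmDensity, hempty, card_empty, Nat.cast_zero, zero_div]

lemma symmDensity_le_of_linearIndepOn {t : Finset (ι → F × F)}
    (ht : LinearIndepOn F id (t : Set (ι → F × F))) :
    symmDensity t ≤ (Fintype.card F : ℝ) ^ (#t).choose 2 /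
      (Fintype.card F : ℝ) ^ (#t * Fintype.card ι) := by
  obtain hempty | ⟨A, hA⟩ := (symmThrough t).eq_empty_or_nonempty
  · rw [symmDensity, hempty, card_empty, Nat.cast_zero, zero_div]
    positivity
  · obtain ⟨hA, htA⟩ := (mem_filter.1 hA).2
    exact (symmDensity_of_isIsotropic (linearIndepOn_fstPart_of_subset_matrixGraph htA ht)
      ((isIsotropic_matrixGraph hA).mono htA)).le

end GraphCount

section GenericSets

lemma succ_mul_card_filter_powersetCard_succ {α : Type*} {P : Finset α → Prop}
    (hP : ∀ s t, s ⊆ t → P t → P s) (s : Finset α) (j : ℕ) :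
    (j + 1) * #{t ∈ s.powersetCard (j + 1) | P t} =
      ∑ t ∈ s.powersetCard j with P t, #{x ∈ s | x ∉ t ∧ P (insert x t)} := by
  have hcard : ∀ u ∈ ({t ∈ s.powersetCard (j + 1) | P t} : Finset (Finset α)), #u = j + 1 :=
    fun u hu => (mem_powersetCard.1 (mem_filter.1 hu).1).2
  rw [mul_comm, ← sum_const_nat hcard, ← card_sigma, ← card_sigma]
  refine card_bij' (fun (p : (_ : Finset α) × α) _ => ⟨p.1.erase p.2, p.2⟩)
    (fun p _ => ⟨insert p.2 p.1, p.2⟩) ?_ ?_ ?_ ?_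
  · rintro ⟨u, x⟩ hux
    simp only [mem_sigma, mem_filter, mem_powersetCard] at hux ⊢
    obtain ⟨⟨⟨hus, huj⟩, huP⟩, hxu⟩ := hux
    refine ⟨⟨⟨(erase_subset _ _).trans hus, ?_⟩, hP _ _ (erase_subset _ _) huP⟩, hus hxu,
      notMem_erase _ _, ?_⟩
    · rw [card_erase_of_mem hxu, huj, Nat.add_sub_cancel]
    · rwa [insert_erase hxu]
  · rintro ⟨t, x⟩ htx
    simp only [mem_sigma, mem_filter, mem_powersetCard] at htx ⊢
    obtain ⟨⟨⟨hts, htj⟩, -⟩, hxs, hxt, hP⟩ := htx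
    exact ⟨⟨⟨insert_subset hxs hts, by rw [card_insert_of_notMem hxt, htj]⟩, hP⟩,
      mem_insert_self _ _⟩
  · rintro ⟨u, x⟩ hux
    simp only [insert_erase (mem_sigma.1 hux).2]
  · rintro ⟨t, x⟩ htx
    simp only [erase_insert (mem_filter.1 (mem_sigma.1 htx).2).2.1]

variable {F V : Type*} [Field F] [AddCommGroup V] [Module F V]

variable (F) in
/-- A finite linearly independent set `t` is generic with respect to `I` and `Z` if its span avoids
`Z` up to zero, and meets `I` only along the lines spanned by the elements of `t`. -/
structure IsGeneric (I Z : Set V) (t : Finset V) : Prop where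
  linearIndepOn : LinearIndepOn F id (t : Set V)
  eq_zero_of_mem : ∀ v ∈ Submodule.span F (t : Set V), v ∈ Z → v = 0
  exists_eq_smul : ∀ v ∈ Submodule.span F (t : Set V), v ∈ I → ∃ x ∈ t, ∃ c : F, v = c • x

namespace IsGeneric

variable {I Z : Set V} {t : Finset V}

lemma mono (hI : 0 ∉ I) {s : Finset V} (hst : s ⊆ t) (ht : IsGeneric F I Z t) :
    IsGeneric F I Z s where
  linearIndepOn := ht.linearIndepOn.mono (coe_subset.2 hst)
  eq_zero_of_mem v hv := ht.eq_zero_of_mem v (Submodule.span_mono (coe_subset.2 hst) hv)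
  exists_eq_smul v hv hvI := by
    obtain ⟨x, hxt, c, rfl⟩ :=
      ht.exists_eq_smul v (Submodule.span_mono (coe_subset.2 hst) hv) hvI
    have hc : c ≠ 0 := by
      rintro rfl
      exact hI (by rwa [zero_smul] at hvI)
    refine ⟨x, ?_, c, rfl⟩
    have hxs : id x ∈ Submodule.span F (id '' (s : Set V)) := by
      rwa [Set.image_id, id, ← Submodule.smul_mem_iff _ hc]
    have hinsert : insert x (s : Set V) ⊆ t := Set.insert_subset hxt (coe_subset.2 hst)
    exact (ht.linearIndepOn.mono (coe_subset.2 hst)).mem_span_iff.1 hxs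
      (ht.linearIndepOn.mono hinsert)

lemma linearIndepOn_map {W : Type*} [AddCommGroup W] [Module F W] (ht : IsGeneric F I Z t)
    {f : V →ₗ[F] W} (hf : ∀ x, f x = 0 → x ∈ Z) : LinearIndepOn F f (t : Set V) := by
  refine ht.linearIndepOn.map_injOn f fun x hx y hy hxy => ?_
  rw [Set.image_id] at hx hy
  refine sub_eq_zero.1 (ht.eq_zero_of_mem _ (sub_mem hx hy) (hf _ ?_))
  rw [map_sub, hxy, sub_self]

end IsGeneric

/-- A projective system of representatives `I'` of the cone `I` is pseudorandom with error `θ` if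
only a fraction `θ` of it falls into translates of the cone `Z`, or into translates of `I` by
vectors outside `Z`, and if the vectors orthogonal to a generic set of `j` vectors make up a
fraction `q⁻ʲ` of it, up to `θ`. -/
structure IsPseudorandom [Fintype F] (ω : LinearMap.BilinForm F V) (I Z : Set V) (I' : Finset V)
    (θ : ℝ) : Prop where
  nonneg : 0 ≤ θ
  zero_notMem : 0 ∉ I
  zero_mem : 0 ∈ Z
  smul_mem_I : ∀ c : F, c ≠ 0 → ∀ x ∈ I, c • x ∈ I
  smul_mem_Z : ∀ c : F, c ≠ 0 → ∀ x ∈ Z, c • x ∈ Z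
  subset : ∀ x ∈ I', x ∈ I
  eq_of_eq_smul : ∀ x ∈ I', ∀ y ∈ I', ∀ c : F, x = c • y → x = y
  card_add_mem_Z_le : ∀ y, (#{x ∈ I' | x + y ∈ Z} : ℝ) ≤ θ * #I'
  card_add_mem_I_le : ∀ y ∉ Z, (#{x ∈ I' | x + y ∈ I} : ℝ) ≤ θ * #I'
  abs_card_orthogonal_sub_le : ∀ t, IsGeneric F I Z t →
    |(#{x ∈ I' | ∀ y ∈ t, ω x y = 0} : ℝ) - #I' / (Fintype.card F : ℝ) ^ #t| ≤ θ * #I'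

variable (F) in
/-- The elements of `I'` that may destroy the genericity of `t` when adjoined to it. -/
noncomputable def obstructions (I Z : Set V) (I' t : Finset V) : Finset V :=
  {x ∈ I' | ∃ v ∈ Submodule.span F (t : Set V), x + v ∈ Z ∨ v ∉ Z ∧ x + v ∈ I}

/-- The generic isotropic subsets of `I'` with `j` elements. -/
noncomputable def genericIsotropicSets (ω : LinearMap.BilinForm F V) (I Z : Set V) (I' : Finset V)
    (j : ℕ) : Finset (Finset V) :=
  {t ∈ I'.powersetCard j | IsGeneric F I Z t ∧ IsIsotropic ω (t : Set V)}

variable (F) in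
/-- The subsets of `I'` with `j` elements that are not generic. -/
noncomputable def nongenericSets (I Z : Set V) (I' : Finset V) (j : ℕ) : Finset (Finset V) :=
  {t ∈ I'.powersetCard j | ¬ IsGeneric F I Z t}

lemma mem_obstructions {I Z : Set V} {I' t : Finset V} {x : V} :
    x ∈ obstructions F I Z I' t ↔
      x ∈ I' ∧ ∃ v ∈ Submodule.span F (t : Set V), x + v ∈ Z ∨ v ∉ Z ∧ x + v ∈ I :=
  mem_filter

lemma mem_genericIsotropicSets {ω : LinearMap.BilinForm F V} {I Z : Set V} {I' t : Finset V}
    {j : ℕ} : t ∈ genericIsotropicSets ω I Z I' j ↔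
      (t ⊆ I' ∧ #t = j) ∧ IsGeneric F I Z t ∧ IsIsotropic ω (t : Set V) := by
  rw [genericIsotropicSets, mem_filter, mem_powersetCard]

lemma mem_nongenericSets {I Z : Set V} {I' t : Finset V} {j : ℕ} :
    t ∈ nongenericSets F I Z I' j ↔ (t ⊆ I' ∧ #t = j) ∧ ¬ IsGeneric F I Z t := by
  rw [nongenericSets, mem_filter, mem_powersetCard]

variable [Fintype F] in
lemma card_span_le_pow [Fintype V] (t : Finset V) :
    #{v | v ∈ Submodule.span F (t : Set V)} ≤ Fintype.card F ^ #t := by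
  rw [← Fintype.card_subtype]
  refine (Module.card_eq_pow_finrank (K := F)).trans_le ?_
  exact Nat.pow_le_pow_right Fintype.card_pos (finrank_span_finset_le_card t)

namespace IsPseudorandom

variable [Fintype F] {ω : LinearMap.BilinForm F V} {I Z : Set V} {I' t : Finset V} {θ : ℝ}

lemma isGeneric_empty (h : IsPseudorandom ω I Z I' θ) : IsGeneric F I Z ∅ where
  linearIndepOn := by simp
  eq_zero_of_mem v hv _ := by simpa using hv
  exists_eq_smul v hv hvI := by
    rw [coe_empty, Submodule.span_empty, Submodule.mem_bot] at hv
    exact absurd (hv ▸ hvI) h.zero_notMem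

lemma mem_of_mem_span (h : IsPseudorandom ω I Z I' θ) (ht : IsGeneric F I Z t) (htI : t ⊆ I')
    {x : V} (hx : x ∈ I') (hxt : x ∈ Submodule.span F (t : Set V)) : x ∈ t := by
  obtain ⟨y, hyt, c, hxy⟩ := ht.exists_eq_smul x hxt (h.subset x hx)
  rwa [h.eq_of_eq_smul x hx y (htI hyt) c hxy]

lemma exists_nongeneric_subset (h : IsPseudorandom ω I Z I' θ) (htI : t ⊆ I')
    (ht : ¬ IsGeneric F I Z t) :
    ∃ R ⊆ t, ¬ IsGeneric F I Z R ∧ LinearIndepOn F id (R : Set V) ∧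
      (t : Set V) ⊆ Submodule.span F (R : Set V) := by
  obtain ⟨R, hRt, -, htR, hR⟩ := exists_linearIndepOn_extension
    (linearIndepOn_empty F (id : V → V)) (Set.empty_subset (t : Set V))
  obtain ⟨R, rfl⟩ := (t.finite_toSet.subset hRt).exists_finset_coe
  rw [coe_subset] at hRt
  simp only [Set.image_id] at htR
  refine ⟨R, hRt, fun hgen => ht ?_, hR, htR⟩
  have hsub : t ⊆ R := fun x hx =>
    h.mem_of_mem_span hgen (hRt.trans htI) (htI hx) (htR (mem_coe.2 hx))
  rwa [hsub.antisymm hRt]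

lemma notMem_span_of_notMem_obstructions (h : IsPseudorandom ω I Z I' θ) {x : V} (hx : x ∈ I')
    (hxt : x ∉ obstructions F I Z I' t) : x ∉ Submodule.span F (t : Set V) := fun hmem =>
  hxt (mem_obstructions.2 ⟨hx, -x, neg_mem hmem, Or.inl (by rw [add_neg_cancel]; exact h.zero_mem)⟩)

lemma isGeneric_insert (h : IsPseudorandom ω I Z I' θ) (ht : IsGeneric F I Z t) {x : V}
    (hx : x ∈ I') (hxt : x ∉ obstructions F I Z I' t) : IsGeneric F I Z (insert x t) := by
  have hspan : x ∉ Submodule.span F (t : Set V) := h.notMem_span_of_notMem_obstructions hx hxt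
  have hfree : ∀ v ∈ Submodule.span F (t : Set V), x + v ∉ Z ∧ (v ∉ Z → x + v ∉ I) := by
    simpa only [mem_obstructions, hx, true_and, not_exists, not_and, not_or] using hxt
  have hscale {a : F} (ha : a ≠ 0) (v : V) : a⁻¹ • (a • x + v) = x + a⁻¹ • v := by
    rw [smul_add, inv_smul_smul₀ ha]
  refine ⟨?_, fun w hw hwZ => ?_, fun w hw hwI => ?_⟩
  · rw [coe_insert]
    exact ht.linearIndepOn.id_insert hspan
  all_goals
    rw [coe_insert, Submodule.mem_span_insert] at hw
    obtain ⟨a, v, hv, rfl⟩ := hw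
    obtain rfl | ha := eq_or_ne a 0
  · rw [zero_smul, zero_add] at hwZ ⊢
    exact ht.eq_zero_of_mem v hv hwZ
  · have := h.smul_mem_Z _ (inv_ne_zero ha) _ hwZ
    rw [hscale ha] at this
    exact absurd this (hfree _ (Submodule.smul_mem _ _ hv)).1
  · rw [zero_smul, zero_add] at hwI ⊢
    obtain ⟨y, hy, c, hvy⟩ := ht.exists_eq_smul v hv hwI
    exact ⟨y, mem_insert_of_mem hy, c, hvy⟩
  · have hI := h.smul_mem_I _ (inv_ne_zero ha) _ hwI
    rw [hscale ha] at hI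
    have hv' := Submodule.smul_mem _ a⁻¹ hv
    have hvZ : a⁻¹ • v ∈ Z := not_not.1 fun hvZ => (hfree _ hv').2 hvZ hI
    have hv0 : v = 0 := by simpa [ha] using ht.eq_zero_of_mem _ hv' hvZ
    exact ⟨x, mem_insert_self _ _, a, by rw [hv0, add_zero]⟩

-- Up to obstructions, the extensions of `t` are the elements of `I'` orthogonal to it.
lemma abs_card_extensions_sub_le (h : IsPseudorandom ω I Z I' θ) (hω : ω.IsAlt)
    (ht : IsGeneric F I Z t) (hiso : IsIsotropic ω (t : Set V)) :
    |(#{x ∈ I' | x ∉ t ∧ IsGeneric F I Z (insert x t) ∧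
        IsIsotropic ω ((insert x t : Finset V) : Set V)} : ℝ) - #I' / (Fintype.card F : ℝ) ^ #t| ≤
      θ * #I' + #(obstructions F I Z I' t) := by
  obtain ⟨O, hO, horth⟩ : ∃ O : Finset V, (∀ x, x ∈ O ↔ x ∈ I' ∧ ∀ y ∈ t, ω x y = 0) ∧
      |(#O : ℝ) - #I' / (Fintype.card F : ℝ) ^ #t| ≤ θ * #I' :=
    ⟨_, fun x => mem_filter, h.abs_card_orthogonal_sub_le t ht⟩
  set E : Finset V := {x ∈ I' | x ∉ t ∧ IsGeneric F I Z (insert x t) ∧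
    IsIsotropic ω ((insert x t : Finset V) : Set V)} with hE
  have hEO : E ⊆ O := fun x hx => by
    simp only [hE, hO, mem_filter] at hx ⊢
    exact ⟨hx.1, fun y hy => hx.2.2.2 x (mem_insert_self _ _) y (mem_insert_of_mem hy)⟩
  have hOE : O ⊆ E ∪ obstructions F I Z I' t := fun x hx => by
    obtain ⟨hxI, hxt⟩ := (hO x).1 hx
    refine mem_union.2 (or_iff_not_imp_right.2 fun hxo => mem_filter.2 ⟨hxI, ?_, ?_, ?_⟩)
    · exact fun hxt => h.notMem_span_of_notMem_obstructions hxI hxo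
        (Submodule.subset_span (mem_coe.2 hxt))
    · exact h.isGeneric_insert ht hxI hxo
    · rw [coe_insert]
      exact hiso.insert hω hxt
  have hEO' : (#E : ℝ) ≤ #O := Nat.cast_le.2 (card_le_card hEO)
  have hOE' : (#O : ℝ) ≤ #E + #(obstructions F I Z I' t) := by
    exact_mod_cast (card_le_card hOE).trans (card_union_le _ _)
  rw [abs_le] at horth ⊢
  constructor <;> linarith

lemma nongenericSets_succ_subset (h : IsPseudorandom ω I Z I' θ) (r : ℕ) :
    nongenericSets F I Z I' (r + 1) ⊆
      ((nongenericSets F I Z I' r).sigma fun _ => I').image (fun p => insert p.2 p.1) ∪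
      ((I'.powersetCard r).sigma (obstructions F I Z I')).image (fun p => insert p.2 p.1) := by
  intro R hR
  obtain ⟨⟨hRI, hRr⟩, hRgen⟩ := mem_nongenericSets.1 hR
  obtain ⟨x, hx⟩ := card_pos.1 (by rw [hRr]; exact Nat.succ_pos r)
  have hcard : #(R.erase x) = r := by rw [card_erase_of_mem hx, hRr, Nat.add_sub_cancel]
  have hsub : R.erase x ⊆ I' := (erase_subset _ _).trans hRI
  by_cases hgen : IsGeneric F I Z (R.erase x)
  · refine mem_union_right _ (mem_image.2 ⟨⟨R.erase x, x⟩, mem_sigma.2 ⟨?_, ?_⟩, insert_erase hx⟩)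
    · exact mem_powersetCard.2 ⟨hsub, hcard⟩
    · refine not_not.1 fun hxo => hRgen ?_
      have := h.isGeneric_insert hgen (hRI hx) hxo
      rwa [insert_erase hx] at this
  · exact mem_union_left _ (mem_image.2 ⟨⟨R.erase x, x⟩, mem_sigma.2
      ⟨mem_nongenericSets.2 ⟨⟨hsub, hcard⟩, hgen⟩, hRI hx⟩, insert_erase hx⟩)

variable [Finite V]

lemma card_obstructions_le (h : IsPseudorandom ω I Z I' θ) (t : Finset V) :
    (#(obstructions F I Z I' t) : ℝ) ≤ 2 * θ * #I' * (Fintype.card F : ℝ) ^ #t := by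
  have := Fintype.ofFinite V
  have hcover : obstructions F I Z I' t ⊆
      ({v | v ∈ Submodule.span F (t : Set V)} : Finset V).biUnion fun v =>
        {x ∈ I' | x + v ∈ Z} ∪ {x ∈ I' | v ∉ Z ∧ x + v ∈ I} := fun x hx => by
    obtain ⟨hxI, v, hv, hxv⟩ := mem_obstructions.1 hx
    refine mem_biUnion.2 ⟨v, mem_filter.2 ⟨mem_univ _, hv⟩, mem_union.2 ?_⟩
    exact hxv.imp (fun hZ => mem_filter.2 ⟨hxI, hZ⟩) fun hI => mem_filter.2 ⟨hxI, hI⟩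
  have hpiece (v : V) :
      (#({x ∈ I' | x + v ∈ Z} ∪ {x ∈ I' | v ∉ Z ∧ x + v ∈ I}) : ℝ) ≤ 2 * θ * #I' := by
    have hunion : (#({x ∈ I' | x + v ∈ Z} ∪ {x ∈ I' | v ∉ Z ∧ x + v ∈ I}) : ℝ) ≤
        #{x ∈ I' | x + v ∈ Z} + #{x ∈ I' | v ∉ Z ∧ x + v ∈ I} :=
      mod_cast card_union_le _ _
    have hZ := h.card_add_mem_Z_le v
    have hI : (#{x ∈ I' | v ∉ Z ∧ x + v ∈ I} : ℝ) ≤ θ * #I' := by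
      by_cases hv : v ∈ Z
      · simpa [hv] using mul_nonneg h.nonneg (Nat.cast_nonneg _)
      · simpa [hv] using h.card_add_mem_I_le v hv
    linarith
  have hθ : 0 ≤ 2 * θ * #I' := by have := h.nonneg; positivity
  calc (#(obstructions F I Z I' t) : ℝ)
      ≤ ∑ v with v ∈ Submodule.span F (t : Set V),
          (#({x ∈ I' | x + v ∈ Z} ∪ {x ∈ I' | v ∉ Z ∧ x + v ∈ I}) : ℝ) :=
        mod_cast (card_le_card hcover).trans card_biUnion_le
    _ ≤ #{v | v ∈ Submodule.span F (t : Set V)} * (2 * θ * #I') :=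
        (sum_le_card_nsmul _ _ _ fun v _ => hpiece v).trans_eq (nsmul_eq_mul _ _)
    _ ≤ (Fintype.card F : ℝ) ^ #t * (2 * θ * #I') :=
        mul_le_mul_of_nonneg_right (mod_cast card_span_le_pow t) hθ
    _ = _ := mul_comm _ _

lemma card_nongenericSets_le (h : IsPseudorandom ω I Z I' θ) (r : ℕ) :
    (#(nongenericSets F I Z I' r) : ℝ) ≤
      2 * θ * (#I' : ℝ) ^ r * ((Fintype.card F : ℝ) ^ r - 1) := by
  have hq := two_le_card F
  have hθ := h.nonneg
  induction r with
  | zero => simp [nongenericSets, h.isGeneric_empty]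
  | succ r ih =>
    have hobs : ∑ t ∈ I'.powersetCard r, (#(obstructions F I Z I' t) : ℝ) ≤
        (#I' : ℝ) ^ r * (2 * θ * #I' * (Fintype.card F : ℝ) ^ r) := by
      refine (sum_le_card_nsmul _ _ (2 * θ * #I' * (Fintype.card F : ℝ) ^ r)
        fun t ht => ?_).trans ?_
      · rw [← (mem_powersetCard.1 ht).2]
        exact h.card_obstructions_le t
      · rw [nsmul_eq_mul, card_powersetCard]
        exact mul_le_mul_of_nonneg_right (mod_cast Nat.choose_le_pow _ _) (by positivity)
    calc (#(nongenericSets F I Z I' (r + 1)) : ℝ)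
        ≤ #(nongenericSets F I Z I' r) * #I' +
            ∑ t ∈ I'.powersetCard r, (#(obstructions F I Z I' t) : ℝ) := by
          have := (card_le_card (h.nongenericSets_succ_subset r)).trans ((card_union_le _ _).trans
            (add_le_add card_image_le card_image_le))
          rw [card_sigma, card_sigma, sum_const, smul_eq_mul] at this
          exact_mod_cast this
      _ ≤ 2 * θ * (#I' : ℝ) ^ r * ((Fintype.card F : ℝ) ^ r - 1) * #I' +
            (#I' : ℝ) ^ r * (2 * θ * #I' * (Fintype.card F : ℝ) ^ r) := by gcongr
      _ = 2 * θ * (#I' : ℝ) ^ (r + 1) * (2 * (Fintype.card F : ℝ) ^ r - 1) := by ring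
      _ ≤ 2 * θ * (#I' : ℝ) ^ (r + 1) * ((Fintype.card F : ℝ) ^ (r + 1) - 1) := by
          rw [pow_succ' (Fintype.card F : ℝ)]
          gcongr

lemma abs_succ_mul_card_genericIsotropicSets_sub_le (h : IsPseudorandom ω I Z I' θ)
    (hω : ω.IsAlt) (j : ℕ) :
    |((j : ℝ) + 1) * #(genericIsotropicSets ω I Z I' (j + 1)) -
        #(genericIsotropicSets ω I Z I' j) * (#I' / (Fintype.card F : ℝ) ^ j)| ≤
      3 * θ * (Fintype.card F : ℝ) ^ (2 * j) *
        (#(genericIsotropicSets ω I Z I' j) * (#I' / (Fintype.card F : ℝ) ^ j)) := by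
  have hq : (1 : ℝ) ≤ Fintype.card F := mod_cast Fintype.card_pos
  have hθ := h.nonneg
  have hrec : ((j : ℝ) + 1) * #(genericIsotropicSets ω I Z I' (j + 1)) =
      ∑ t ∈ genericIsotropicSets ω I Z I' j, (#{x ∈ I' | x ∉ t ∧
        IsGeneric F I Z (insert x t) ∧ IsIsotropic ω ((insert x t : Finset V) : Set V)} : ℝ) := by
    unfold genericIsotropicSets
    norm_cast
    convert succ_mul_card_filter_powersetCard_succ
      (P := fun t => IsGeneric F I Z t ∧ IsIsotropic ω (t : Set V))
      (fun s t hst ht => ⟨ht.1.mono h.zero_notMem hst, ht.2.mono (coe_subset.2 hst)⟩) I' j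
  rw [hrec, ← nsmul_eq_mul, ← sum_const, ← sum_sub_distrib, mul_sum]
  refine (abs_sum_le_sum_abs _ _).trans (sum_le_sum fun t ht => ?_)
  obtain ⟨⟨-, rfl⟩, hgen, hiso⟩ := mem_genericIsotropicSets.1 ht
  have hext := h.abs_card_extensions_sub_le hω hgen hiso
  have hobs := h.card_obstructions_le t
  set q : ℝ := (Fintype.card F : ℝ)
  have hpow : θ * #I' * 1 ≤ θ * #I' * q ^ #t := by gcongr; exact one_le_pow₀ hq
  have hscale : 3 * θ * q ^ (2 * #t) * (#I' / q ^ #t) = 3 * θ * #I' * q ^ #t := by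
    rw [two_mul, pow_add]
    field_simp
  linarith

end IsPseudorandom

end GenericSets

section PoissonSieve

lemma alternating_sum_choose_le {J : ℕ} (hJ : Odd J) (N : ℕ) :
    ∑ j ∈ range (J + 1), (-1 : ℝ) ^ j * (N.choose j : ℝ) ≤ if N = 0 then 1 else 0 := by
  suffices h : ∑ j ∈ range (J + 1), (-1 : ℤ) ^ j * (N.choose j : ℤ) ≤ if N = 0 then 1 else 0 by
    exact_mod_cast h
  cases N with
  | zero => simp [sum_range_succ']
  | succ n => simp [Int.alternating_sum_range_choose_eq_choose, hJ.neg_one_pow]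

lemma pow_div_factorial_mul_exp_le {μ : ℝ} (hμ : 0 ≤ μ) {J : ℕ} (hμJ : 8 * μ ≤ J) :
    μ ^ (J + 1) / (J + 1).factorial * Real.exp μ ≤ 1 / 2 ^ (J + 1) := by
  have hlog : 9 / 8 ≤ Real.log 4 := by
    rw [show (4 : ℝ) = 2 ^ 2 by norm_num, Real.log_pow]
    have := Real.log_two_gt_d9
    push_cast
    linarith
  have hpow : Real.exp (9 * μ) ≤ 4 ^ (J + 1) := by
    rw [← Real.exp_log (by norm_num : (0 : ℝ) < 4), ← Real.exp_nat_mul]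
    refine Real.exp_le_exp.2 ?_
    push_cast
    nlinarith
  have hterm := Real.pow_div_factorial_le_exp (8 * μ) (by positivity) (J + 1)
  rw [le_div_iff₀ (by positivity), ← mul_le_mul_iff_left₀ (by positivity : (0 : ℝ) < 4 ^ (J + 1))]
  calc μ ^ (J + 1) / (J + 1).factorial * Real.exp μ * 2 ^ (J + 1) * 4 ^ (J + 1)
      = (8 * μ) ^ (J + 1) / (J + 1).factorial * Real.exp μ := by
        rw [mul_pow, show (8 : ℝ) = 2 * 4 by norm_num, mul_pow]
        ring
    _ ≤ Real.exp (8 * μ) * Real.exp μ := by gcongr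
    _ = Real.exp (9 * μ) := by rw [← Real.exp_add]; ring_nf
    _ ≤ 1 * 4 ^ (J + 1) := by rwa [one_mul]

lemma half_exp_neg_le_alternating_sum {μ : ℝ} (hμ : 0 ≤ μ) {J : ℕ} (hJ : 1 ≤ J)
    (hμJ : 8 * μ ≤ J) :
    Real.exp (-μ) / 2 ≤ ∑ j ∈ range (J + 1), (-1 : ℝ) ^ j * (μ ^ j / j.factorial) := by
  have hnorm : ‖((-μ : ℝ) : ℂ)‖ = μ := by
    rw [Complex.norm_real, Real.norm_eq_abs, abs_neg, abs_of_nonneg hμ]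
  have htaylor := Complex.exp_bound' (x := ((-μ : ℝ) : ℂ)) (n := J + 1) (by
    rw [hnorm, div_le_div_iff₀ (by positivity) (by norm_num)]
    push_cast
    linarith)
  have hcast : Complex.exp ((-μ : ℝ) : ℂ) -
      ∑ m ∈ range (J + 1), ((-μ : ℝ) : ℂ) ^ m / (m.factorial : ℂ) =
      ((Real.exp (-μ) - ∑ j ∈ range (J + 1), (-1 : ℝ) ^ j * (μ ^ j / j.factorial) : ℝ) : ℂ) := by
    push_cast
    congr 1
    refine sum_congr rfl fun m _ => ?_
    rw [neg_pow, mul_div_assoc]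
  rw [hcast, hnorm, Complex.norm_real, Real.norm_eq_abs] at htaylor
  have hremainder : μ ^ (J + 1) / (J + 1).factorial * 2 ≤ Real.exp (-μ) / 2 := by
    have hquarter : (1 : ℝ) / 2 ^ (J + 1) ≤ 1 / 2 ^ 2 :=
      one_div_le_one_div_of_le (by norm_num) (pow_le_pow_right₀ (by norm_num) (by lia))
    rw [Real.exp_neg, ← one_div, div_div, le_div_iff₀ (by positivity)]
    linarith [pow_div_factorial_mul_exp_le hμ hμJ]
  linarith [le_of_abs_le htaylor]

lemma card_filter_eq_zero_ge {Ω : Type*} (s : Finset Ω) (X : Ω → ℕ) {μ ε ε' : ℝ} (hμ : 0 ≤ μ)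
    (hε : 0 ≤ ε) {J : ℕ} (hJ : Odd J) (hμJ : 8 * μ ≤ J)
    (hmoment : ∀ j ≤ J, |∑ A ∈ s, ((X A).choose j : ℝ) - #s * (μ ^ j / j.factorial)| ≤
      #s * (ε * (μ ^ j / j.factorial) + ε')) :
    #s * (Real.exp (-μ) / 2 - (ε * Real.exp μ + (J + 1) * ε')) ≤ (#{A ∈ s | X A = 0} : ℝ) := by
  have hterm (j : ℕ) (hj : j ∈ range (J + 1)) :
      #s * ((-1) ^ j * (μ ^ j / j.factorial)) - #s * (ε * (μ ^ j / j.factorial) + ε') ≤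
        (-1) ^ j * ∑ A ∈ s, ((X A).choose j : ℝ) := by
    have hj := abs_le.1 (hmoment j (Nat.lt_succ_iff.1 (mem_range.1 hj)))
    obtain hsign | hsign := neg_one_pow_eq_or ℝ j <;> rw [hsign] <;> linarith
  have hexp : ∑ j ∈ range (J + 1), ε * (μ ^ j / j.factorial) ≤ ε * Real.exp μ := by
    rw [← mul_sum]
    exact mul_le_mul_of_nonneg_left (Real.sum_le_exp_of_nonneg hμ _) hε
  calc #s * (Real.exp (-μ) / 2 - (ε * Real.exp μ + (J + 1) * ε'))
      ≤ #s * (∑ j ∈ range (J + 1), (-1) ^ j * (μ ^ j / j.factorial) -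
          ∑ j ∈ range (J + 1), (ε * (μ ^ j / j.factorial) + ε')) := by
        refine mul_le_mul_of_nonneg_left ?_ (Nat.cast_nonneg _)
        rw [sum_add_distrib, sum_const, card_range, nsmul_eq_mul, Nat.cast_succ]
        linarith [half_exp_neg_le_alternating_sum hμ hJ.pos hμJ]
    _ = ∑ j ∈ range (J + 1), (#s * ((-1) ^ j * (μ ^ j / j.factorial)) -
          #s * (ε * (μ ^ j / j.factorial) + ε')) := by
        rw [sum_sub_distrib, mul_sub, mul_sum, mul_sum]
    _ ≤ ∑ j ∈ range (J + 1), (-1) ^ j * ∑ A ∈ s, ((X A).choose j : ℝ) := sum_le_sum hterm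
    _ = ∑ A ∈ s, ∑ j ∈ range (J + 1), (-1) ^ j * ((X A).choose j : ℝ) := by
        simp only [mul_sum]
        exact sum_comm
    _ ≤ ∑ A ∈ s, if X A = 0 then 1 else 0 :=
        sum_le_sum fun A _ => alternating_sum_choose_le hJ (X A)
    _ = _ := by rw [sum_boole]

/-- The recursion `(j + 1) m_{j+1} = μ m_j` of `μ ^ j / j!` is stable under small relative
errors. -/
lemma abs_sub_pow_div_factorial_le {m : ℕ → ℝ} {μ κ : ℝ} (hμ : 0 ≤ μ) (hκ : 0 ≤ κ) (hκ1 : κ ≤ 1)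
    (hm0 : m 0 = 1) {J : ℕ}
    (hrec : ∀ j < J, |(j + 1) * m (j + 1) - μ * m j| ≤ κ * (μ * m j)) {j : ℕ} (hj : j ≤ J) :
    |m j - μ ^ j / j.factorial| ≤ (2 ^ j - 1) * κ * (μ ^ j / j.factorial) := by
  induction j with
  | zero => simp [hm0]
  | succ j ih =>
    have ih := ih (Nat.le_of_succ_le hj)
    have hrec := hrec j hj
    set p := μ ^ j / j.factorial with hp
    have hp0 : 0 ≤ p := by positivity
    have hpow : (1 : ℝ) ≤ 2 ^ j := one_le_pow₀ one_le_two
    have hj0 : (0 : ℝ) < j + 1 := by positivity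
    have hfact : μ ^ (j + 1) / (j + 1).factorial = μ * p / (j + 1) := by
      rw [hp, Nat.factorial_succ, pow_succ']
      push_cast
      field_simp
    have hnum : |(j + 1) * m (j + 1) - μ * p| ≤ (2 ^ (j + 1) - 1) * κ * (μ * p) := by
      have hκκ : κ * ((2 ^ j - 1) * κ * (μ * p)) ≤ 1 * ((2 ^ j - 1) * κ * (μ * p)) :=
        mul_le_mul_of_nonneg_right hκ1 (by have := sub_nonneg.2 hpow; positivity)
      rw [abs_le] at hrec ih ⊢
      have hlower := mul_le_mul_of_nonneg_left ih.1 hμ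
      have hupper := mul_le_mul_of_nonneg_left ih.2 hμ
      have hκupper := mul_le_mul_of_nonneg_left ih.2 (mul_nonneg hκ hμ)
      rw [pow_succ]
      constructor <;> linarith
    have hsub : m (j + 1) - μ * p / (j + 1) = ((j + 1) * m (j + 1) - μ * p) / (j + 1) := by
      field_simp
    rw [hfact, hsub, abs_div, abs_of_pos hj0, ← mul_div_assoc ((2 ^ (j + 1) - 1) * κ)]
    exact div_le_div_of_nonneg_right hnum hj0.le

end PoissonSieve

section Moments

lemma sum_choose_card_filter {Ω α : Type*} (s : Finset Ω) (u : Finset α) (R : Ω → α → Prop)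
    (j : ℕ) : ∑ A ∈ s, (#{x ∈ u | R A x}).choose j =
      ∑ t ∈ u.powersetCard j, #{A ∈ s | ∀ x ∈ t, R A x} := by
  have hcard (A : Ω) :
      (#{x ∈ u | R A x}).choose j = #{t ∈ u.powersetCard j | ∀ x ∈ t, R A x} := by
    rw [← card_powersetCard]
    congr 1
    ext t
    simp only [mem_powersetCard, mem_filter, subset_iff, imp_and, forall_and]
    tauto
  simp only [hcard]
  exact sum_card_bipartiteAbove_eq_sum_card_bipartiteBelow _

variable {F ι : Type*} [Field F] [Fintype F] [Fintype ι] {I Z : Set (ι → F × F)}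
  {I' : Finset (ι → F × F)} {θ : ℝ}

/-- The approximate mean of the number of elements of `I'` in the graph of a random symmetric
matrix: a vector of the graph is determined by its first half. -/
noncomputable def expectedCount (I' : Finset (ι → F × F)) : ℝ :=
  #I' / (Fintype.card F : ℝ) ^ Fintype.card ι

/-- The contribution of the generic sets to the `j`-th binomial moment of the number of elements
of `I'` in the graph of a random symmetric matrix. -/
noncomputable def genericMoment (I Z : Set (ι → F × F)) (I' : Finset (ι → F × F)) (j : ℕ) : ℝ :=
  ∑ t ∈ genericIsotropicSets sympForm I Z I' j, symmDensity t

lemma expectedCount_nonneg : 0 ≤ expectedCount I' := by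
  unfold expectedCount
  positivity

lemma sum_choose_eq_mul_sum_symmDensity (I' : Finset (ι → F × F)) (j : ℕ) :
    ∑ A ∈ symmThrough ∅, ((#{x ∈ I' | x ∈ matrixGraph A}).choose j : ℝ) =
      #(symmThrough (∅ : Finset (ι → F × F))) * ∑ t ∈ I'.powersetCard j, symmDensity t := by
  have hcount := sum_choose_card_filter (symmThrough ∅) I' (fun A x => x ∈ matrixGraph A) j
  have hsymm : (#(symmThrough (∅ : Finset (ι → F × F))) : ℝ) ≠ 0 :=
    Nat.cast_ne_zero.2 symmThrough_empty_nonempty.card_ne_zero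
  rw [mul_sum, ← Nat.cast_sum, hcount, Nat.cast_sum]
  refine sum_congr rfl fun t _ => ?_
  rw [symmDensity, mul_div_cancel₀ _ hsymm]
  congr 2
  ext A
  simp [mem_symmThrough, mem_matrixGraph]

lemma sum_symmDensity_eq_genericMoment_add (j : ℕ) :
    ∑ t ∈ I'.powersetCard j, symmDensity t =
      genericMoment I Z I' j + ∑ t ∈ nongenericSets F I Z I' j, symmDensity t := by
  rw [← sum_filter_add_sum_filter_not (I'.powersetCard j) (IsGeneric F I Z)]
  congr 1
  rw [genericMoment, genericIsotropicSets, ← filter_filter]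
  refine (sum_filter_of_ne fun t _ ht => ?_).symm
  exact not_not.1 fun hiso => ht (symmDensity_of_not_isIsotropic hiso)

lemma genericMoment_eq (hZ : ∀ x, fstPart x = 0 → x ∈ Z) (j : ℕ) :
    genericMoment I Z I' j = #(genericIsotropicSets sympForm I Z I' j) *
      ((Fintype.card F : ℝ) ^ j.choose 2 / (Fintype.card F : ℝ) ^ (j * Fintype.card ι)) := by
  rw [genericMoment, ← nsmul_eq_mul]
  refine sum_eq_card_nsmul fun t ht => ?_
  obtain ⟨⟨-, rfl⟩, hgen, hiso⟩ := mem_genericIsotropicSets.1 ht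
  exact symmDensity_of_isIsotropic (hgen.linearIndepOn_map hZ) hiso

variable (F) in
/-- The non-generic linearly independent subsets of `I'` with `r` elements. They witness the failure
of genericity: every non-generic set lies in the span of such a subset of itself. -/
noncomputable def nongenericBases (I Z : Set (ι → F × F)) (I' : Finset (ι → F × F)) (r : ℕ) :
    Finset (Finset (ι → F × F)) :=
  (nongenericSets F I Z I' r).filter fun R : Finset (ι → F × F) =>
    LinearIndepOn F id (R : Set (ι → F × F))

omit [Fintype F] [Fintype ι] in
lemma mem_nongenericBases {r : ℕ} {R : Finset (ι → F × F)} :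
    R ∈ nongenericBases F I Z I' r ↔
      R ∈ nongenericSets F I Z I' r ∧ LinearIndepOn F id (R : Set (ι → F × F)) :=
  mem_filter

lemma card_span_pow_mul_symmDensity_le {R : Finset (ι → F × F)}
    (hR : LinearIndepOn F id (R : Set (ι → F × F))) {J j : ℕ} (hRJ : #R ≤ J) (hj : j ≤ J) :
    #({v | v ∈ Submodule.span F (R : Set (ι → F × F))} : Finset _) ^ j * symmDensity R ≤
      (Fintype.card F : ℝ) ^ (2 * J ^ 2) / (Fintype.card F : ℝ) ^ (#R * (Fintype.card ι + 1)) := by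
  have hq : (1 : ℝ) ≤ Fintype.card F := mod_cast Fintype.card_pos
  have hspan : #({v | v ∈ Submodule.span F (R : Set (ι → F × F))} : Finset _) ^ j ≤
      Fintype.card F ^ (J ^ 2) :=
    calc _ ≤ (Fintype.card F ^ #R) ^ j := Nat.pow_le_pow_left (card_span_le_pow R) j
      _ ≤ _ := by
          rw [← pow_mul]
          exact Nat.pow_le_pow_right Fintype.card_pos (by nlinarith)
  have hexp : (#R).choose 2 + #R ≤ J ^ 2 := by
    calc (#R).choose 2 + #R ≤ #R * (#R - 1) + #R := by
          rw [Nat.choose_two_right]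
          exact Nat.add_le_add_right (Nat.div_le_self _ _) _
      _ = #R ^ 2 := by cases #R with
          | zero => rfl
          | succ r => rw [Nat.add_sub_cancel]; ring
      _ ≤ J ^ 2 := Nat.pow_le_pow_left hRJ 2
  calc _ ≤ (Fintype.card F : ℝ) ^ (J ^ 2) * ((Fintype.card F : ℝ) ^ (#R).choose 2 /
          (Fintype.card F : ℝ) ^ (#R * Fintype.card ι)) :=
        mul_le_mul (mod_cast hspan) (symmDensity_le_of_linearIndepOn hR) (symmDensity_nonneg R)
          (by positivity)
    _ = (Fintype.card F : ℝ) ^ (J ^ 2 + ((#R).choose 2 + #R)) /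
          (Fintype.card F : ℝ) ^ (#R * (Fintype.card ι + 1)) := by
        rw [pow_add, pow_add, mul_add_one, pow_add]
        field_simp
    _ ≤ _ := by gcongr; lia

lemma exp_le_pow {q x : ℝ} (hq : 2 ≤ q) {J : ℕ} (hx : 8 * x ≤ J) : Real.exp x ≤ q ^ J :=
  calc Real.exp x ≤ Real.exp (J * Real.log 2) := by
        have hlog : (J : ℝ) * (1 / 8) ≤ J * Real.log 2 := by
          gcongr
          linarith [Real.log_two_gt_d9]
        exact Real.exp_le_exp.2 (by linarith)
    _ = 2 ^ J := by rw [Real.exp_nat_mul, Real.exp_log two_pos]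
    _ ≤ q ^ J := pow_le_pow_left₀ zero_le_two hq J

lemma cast_succ_le_pow {q : ℝ} (hq : 2 ≤ q) (J : ℕ) : (J : ℝ) + 1 ≤ q ^ J := by
  have htwo : (J : ℝ) + 1 ≤ 2 ^ J := mod_cast Nat.lt_two_pow_self
  exact htwo.trans (pow_le_pow_left₀ zero_le_two hq J)

lemma inv_pow_le_exp_neg_sub {q θ μ : ℝ} {J : ℕ} (hq : 2 ≤ q) (hθ0 : 0 ≤ θ)
    (hμ : 8 * μ ≤ J) (hθ : 20 * θ * q ^ (7 * J ^ 2) ≤ 1) :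
    1 / (4 * q ^ (2 * J)) ≤ Real.exp (-μ) / 2 -
      (2 ^ J * (3 * θ * q ^ (2 * J)) * Real.exp μ + (J + 1) * (2 * θ * q ^ (4 * J ^ 2))) := by
  have hq1 : 1 ≤ q := one_le_two.trans hq
  have hJJ : J ≤ J ^ 2 := Nat.le_self_pow two_ne_zero J
  have hexp : Real.exp μ ≤ q ^ J := exp_le_pow hq hμ
  have hexp_neg : 1 / q ^ (2 * J) ≤ Real.exp (-μ) := by
    rw [Real.exp_neg, ← one_div]
    gcongr
    exact hexp.trans (pow_le_pow_right₀ hq1 (by lia))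
  have hgeneric : 2 ^ J * (3 * θ * q ^ (2 * J)) * Real.exp μ ≤ 3 * θ * q ^ (5 * J ^ 2) :=
    calc _ ≤ q ^ J * (3 * θ * q ^ (2 * J)) * q ^ J := by gcongr
      _ = 3 * θ * q ^ (4 * J) := by ring
      _ ≤ _ := by gcongr; lia
  have hnongeneric : (J + 1) * (2 * θ * q ^ (4 * J ^ 2)) ≤ 2 * θ * q ^ (5 * J ^ 2) :=
    calc _ ≤ q ^ J ^ 2 * (2 * θ * q ^ (4 * J ^ 2)) := by
          gcongr
          exact (cast_succ_le_pow hq J).trans (pow_le_pow_right₀ hq1 hJJ)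
      _ = _ := by ring
  have herror : 5 * θ * q ^ (5 * J ^ 2) ≤ 1 / (4 * q ^ (2 * J)) := by
    rw [le_div_iff₀ (by positivity)]
    calc _ = 20 * θ * q ^ (5 * J ^ 2 + 2 * J) := by ring
      _ ≤ 20 * θ * q ^ (7 * J ^ 2) := by gcongr; lia
      _ ≤ 1 := hθ
  have hquarter : 1 / (4 * q ^ (2 * J)) = 1 / q ^ (2 * J) / 4 := by field_simp
  linarith

namespace IsPseudorandom

lemma genericMoment_zero (h : IsPseudorandom sympForm I Z I' θ)
    (hZ : ∀ x, fstPart x = 0 → x ∈ Z) : genericMoment I Z I' 0 = 1 := by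
  have hempty : genericIsotropicSets sympForm I Z I' 0 = {∅} := by
    rw [genericIsotropicSets, powersetCard_zero, filter_singleton, if_pos]
    exact ⟨h.isGeneric_empty, by simp [IsIsotropic]⟩
  simp [genericMoment_eq hZ, hempty]

lemma abs_genericMoment_succ_sub_le (h : IsPseudorandom sympForm I Z I' θ)
    (hZ : ∀ x, fstPart x = 0 → x ∈ Z) (j : ℕ) :
    |(j + 1) * genericMoment I Z I' (j + 1) - expectedCount I' * genericMoment I Z I' j| ≤
      3 * θ * (Fintype.card F : ℝ) ^ (2 * j) * (expectedCount I' * genericMoment I Z I' j) := by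
  have hcount := h.abs_succ_mul_card_genericIsotropicSets_sub_le sympForm_isAlt j
  have hmain := genericMoment_eq (I := I) (I' := I') hZ
  set g : ℕ → ℝ := fun j => #(genericIsotropicSets sympForm I Z I' j)
  set q : ℝ := (Fintype.card F : ℝ)
  have hq : 0 < q := Nat.cast_pos.2 Fintype.card_pos
  set D : ℝ := q ^ (j.choose 2) * q ^ j / (q ^ (j * Fintype.card ι) * q ^ Fintype.card ι)
  have hD : 0 < D := by positivity
  have hsucc : genericMoment I Z I' (j + 1) = g (j + 1) * D := by
    rw [hmain, Nat.choose_succ_succ' j 1, Nat.choose_one_right, add_mul, one_mul, pow_add, pow_add,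
      mul_comm (q ^ j)]
  have hmul : expectedCount I' * genericMoment I Z I' j = g j * (#I' / q ^ j) * D := by
    change #I' / q ^ Fintype.card ι * _ = _
    rw [hmain]
    simp only [g, D]
    field_simp
  calc _ = |(j + 1) * g (j + 1) - g j * (#I' / q ^ j)| * D := by
        rw [hsucc, hmul, ← mul_assoc, ← sub_mul, abs_mul, abs_of_pos hD]
    _ ≤ 3 * θ * q ^ (2 * j) * (g j * (#I' / q ^ j)) * D := by gcongr
    _ = _ := by rw [hmul, mul_assoc]

lemma sum_symmDensity_nongenericSets_le_sum (h : IsPseudorandom sympForm I Z I' θ) {J j : ℕ}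
    (hj : j ≤ J) :
    ∑ t ∈ nongenericSets F I Z I' j, symmDensity t ≤
      ∑ r ∈ range (J + 1), ∑ R ∈ nongenericBases F I Z I' r,
        #({v | v ∈ Submodule.span F (R : Set (ι → F × F))} : Finset _) ^ j * symmDensity R := by
  let inSpan (R : Finset (ι → F × F)) : Finset (Finset (ι → F × F)) :=
    ({v | v ∈ Submodule.span F (R : Set (ι → F × F))} : Finset _).powersetCard j
  have hbasis (t : Finset (ι → F × F)) (ht : t ∈ nongenericSets F I Z I' j) :
      symmDensity t ≤ ∑ r ∈ range (J + 1), ∑ R ∈ nongenericBases F I Z I' r,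
        if t ∈ inSpan R then symmDensity R else 0 := by
    obtain ⟨⟨htI, rfl⟩, hgen⟩ := mem_nongenericSets.1 ht
    obtain ⟨R, hRt, hRgen, hR, htR⟩ := h.exists_nongeneric_subset htI hgen
    have hnonneg (R : Finset (ι → F × F)) : 0 ≤ if t ∈ inSpan R then symmDensity R else 0 := by
      split_ifs
      exacts [symmDensity_nonneg R, le_rfl]
    have hr : #R ∈ range (J + 1) := mem_range.2 (Nat.lt_succ_of_le ((card_le_card hRt).trans hj))
    have htR' : t ∈ inSpan R :=
      mem_powersetCard.2 ⟨fun x hx => mem_filter.2 ⟨mem_univ _, htR hx⟩, rfl⟩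
    calc symmDensity t ≤ symmDensity R := symmDensity_anti hRt
      _ = if t ∈ inSpan R then symmDensity R else 0 := (if_pos htR').symm
      _ ≤ _ := single_le_sum (fun R _ => hnonneg R)
          (mem_nongenericBases.2 ⟨mem_nongenericSets.2 ⟨⟨hRt.trans htI, rfl⟩, hRgen⟩, hR⟩)
      _ ≤ _ := single_le_sum (fun r _ => sum_nonneg fun R _ => hnonneg R) hr
  refine (sum_le_sum hbasis).trans ?_
  rw [sum_comm]
  refine sum_le_sum fun r _ => ?_
  rw [sum_comm]
  refine sum_le_sum fun R _ => ?_
  rw [← sum_filter, sum_const, nsmul_eq_mul]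
  refine mul_le_mul_of_nonneg_right ?_ (symmDensity_nonneg R)
  have hcard : #(inSpan R) ≤ _ := (card_powersetCard _ _).trans_le (Nat.choose_le_pow _ _)
  exact_mod_cast (card_le_card fun t ht => (mem_filter.1 ht).2).trans hcard

lemma sum_nongenericBases_le (h : IsPseudorandom sympForm I Z I' θ) {J r j : ℕ} (hr : r ≤ J)
    (hj : j ≤ J) (hμ : expectedCount I' ≤ J) :
    ∑ R ∈ nongenericBases F I Z I' r,
      #({v | v ∈ Submodule.span F (R : Set (ι → F × F))} : Finset _) ^ j * symmDensity R ≤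
      2 * θ * (Fintype.card F : ℝ) ^ (3 * J ^ 2) := by
  have hq := two_le_card F
  have hθ := h.nonneg
  set q : ℝ := (Fintype.card F : ℝ)
  have hμr : expectedCount I' ^ r ≤ q ^ J ^ 2 :=
    calc expectedCount I' ^ r ≤ (q ^ J) ^ r :=
          pow_le_pow_left₀ expectedCount_nonneg (by linarith [cast_succ_le_pow hq J]) r
      _ ≤ q ^ J ^ 2 := by
          rw [← pow_mul]
          exact pow_le_pow_right₀ (one_le_two.trans hq) (by nlinarith)
  calc _ ≤ #(nongenericSets F I Z I' r) *
          (q ^ (2 * J ^ 2) / q ^ (r * (Fintype.card ι + 1))) := by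
        rw [← nsmul_eq_mul, ← sum_const]
        refine (sum_le_sum fun R hR => ?_).trans
          (sum_le_sum_of_subset_of_nonneg (filter_subset _ _) fun _ _ _ => by positivity)
        obtain ⟨hRr, hRind⟩ := mem_nongenericBases.1 hR
        obtain ⟨⟨-, rfl⟩, -⟩ := mem_nongenericSets.1 hRr
        exact card_span_pow_mul_symmDensity_le hRind hr hj
    _ ≤ 2 * θ * (#I' : ℝ) ^ r * q ^ r * (q ^ (2 * J ^ 2) / q ^ (r * (Fintype.card ι + 1))) := by
        gcongr
        refine (h.card_nongenericSets_le r).trans ?_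
        gcongr
        exact sub_le_self _ zero_le_one
    _ = 2 * θ * (expectedCount I' ^ r * q ^ (2 * J ^ 2)) := by
        change _ = 2 * θ * ((#I' / q ^ Fintype.card ι) ^ r * q ^ (2 * J ^ 2))
        rw [div_pow, ← pow_mul, mul_add_one, pow_add, mul_comm r]
        field_simp
    _ ≤ 2 * θ * (q ^ J ^ 2 * q ^ (2 * J ^ 2)) := by gcongr
    _ = _ := by ring

lemma sum_symmDensity_nongenericSets_le (h : IsPseudorandom sympForm I Z I' θ) {J j : ℕ}
    (hj : j ≤ J) (hμ : expectedCount I' ≤ J) :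
    ∑ t ∈ nongenericSets F I Z I' j, symmDensity t ≤
      2 * θ * (Fintype.card F : ℝ) ^ (4 * J ^ 2) := by
  have hq := two_le_card F
  have hθ := h.nonneg
  set q : ℝ := (Fintype.card F : ℝ)
  calc _ ≤ ∑ r ∈ range (J + 1), 2 * θ * q ^ (3 * J ^ 2) :=
        (h.sum_symmDensity_nongenericSets_le_sum hj).trans <| sum_le_sum fun r hr =>
          h.sum_nongenericBases_le (Nat.lt_succ_iff.1 (mem_range.1 hr)) hj hμ
    _ = (J + 1) * (2 * θ * q ^ (3 * J ^ 2)) := by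
        rw [sum_const, card_range, nsmul_eq_mul, Nat.cast_succ]
    _ ≤ q ^ J ^ 2 * (2 * θ * q ^ (3 * J ^ 2)) := by
        gcongr
        exact (cast_succ_le_pow hq J).trans
          (pow_le_pow_right₀ (one_le_two.trans hq) (Nat.le_self_pow two_ne_zero J))
    _ = _ := by ring

lemma abs_sum_choose_sub_le (h : IsPseudorandom sympForm I Z I' θ)
    (hZ : ∀ x, fstPart x = 0 → x ∈ Z) {J j : ℕ} (hμ : expectedCount I' ≤ J)
    (hθJ : 3 * θ * (Fintype.card F : ℝ) ^ (2 * J) ≤ 1) (hj : j ≤ J) :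
    |∑ A ∈ symmThrough ∅, ((#{x ∈ I' | x ∈ matrixGraph A}).choose j : ℝ) -
        #(symmThrough (∅ : Finset (ι → F × F))) * (expectedCount I' ^ j / j.factorial)| ≤
      #(symmThrough (∅ : Finset (ι → F × F))) *
        (2 ^ J * (3 * θ * (Fintype.card F : ℝ) ^ (2 * J)) * (expectedCount I' ^ j / j.factorial) +
          2 * θ * (Fintype.card F : ℝ) ^ (4 * J ^ 2)) := by
  have hq : (1 : ℝ) ≤ Fintype.card F := mod_cast Fintype.card_pos
  have hθ := h.nonneg
  have hμ0 : 0 ≤ expectedCount I' := expectedCount_nonneg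
  have hm0 (i : ℕ) : 0 ≤ genericMoment I Z I' i := sum_nonneg fun t _ => symmDensity_nonneg t
  have hrec (i : ℕ) (hi : i < J) :
      |(i + 1) * genericMoment I Z I' (i + 1) - expectedCount I' * genericMoment I Z I' i| ≤
        3 * θ * (Fintype.card F : ℝ) ^ (2 * J) * (expectedCount I' * genericMoment I Z I' i) := by
    refine (h.abs_genericMoment_succ_sub_le hZ i).trans ?_
    have := hm0 i
    gcongr
  have hgeneric := abs_sub_pow_div_factorial_le hμ0 (by positivity) hθJ
    (h.genericMoment_zero hZ) hrec hj
  have hnongeneric : |∑ t ∈ nongenericSets F I Z I' j, symmDensity t| ≤ _ :=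
    (abs_of_nonneg (sum_nonneg fun t _ => symmDensity_nonneg t)).trans_le
      (h.sum_symmDensity_nongenericSets_le hj hμ)
  rw [sum_choose_eq_mul_sum_symmDensity, ← mul_sub, abs_mul, Nat.abs_cast,
    sum_symmDensity_eq_genericMoment_add (I := I) (Z := Z), add_sub_right_comm]
  gcongr
  refine (abs_add_le _ _).trans (add_le_add (hgeneric.trans ?_) hnongeneric)
  gcongr
  exact (sub_le_self _ zero_le_one).trans (pow_le_pow_right₀ one_le_two hj)

theorem card_symmThrough_empty_le (h : IsPseudorandom sympForm I Z I' θ)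
    (hZ : ∀ x, fstPart x = 0 → x ∈ Z) {J : ℕ} (hJ : Odd J) (hμ : 8 * expectedCount I' ≤ J)
    (hθ : 20 * θ * (Fintype.card F : ℝ) ^ (7 * J ^ 2) ≤ 1) :
    #(symmThrough (∅ : Finset (ι → F × F))) / (4 * (Fintype.card F : ℝ) ^ (2 * J)) ≤
      (#{A ∈ symmThrough (∅ : Finset (ι → F × F)) | ∀ x ∈ I', x ∉ matrixGraph A} : ℝ) := by
  have hq := two_le_card F
  have hθ0 := h.nonneg
  have hμ0 : 0 ≤ expectedCount I' := expectedCount_nonneg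
  have hJJ : J ≤ J ^ 2 := Nat.le_self_pow two_ne_zero J
  have hθJ : 3 * θ * (Fintype.card F : ℝ) ^ (2 * J) ≤ 1 :=
    calc _ ≤ 20 * θ * (Fintype.card F : ℝ) ^ (7 * J ^ 2) := by
          gcongr
          · norm_num
          · exact one_le_two.trans hq
          · norm_num
      _ ≤ 1 := hθ
  have hsieve := card_filter_eq_zero_ge (symmThrough ∅) (fun A => #{x ∈ I' | x ∈ matrixGraph A})
    hμ0 (by positivity) hJ hμ fun j hj => h.abs_sum_choose_sub_le hZ (by linarith) hθJ hj
  simp only [card_eq_zero, filter_eq_empty_iff] at hsieve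
  refine le_trans ?_ hsieve
  rw [div_eq_mul_one_div]
  gcongr
  exact inv_pow_le_exp_neg_sub hq hθ0 hμ hθ

end IsPseudorandom

end Moments

section Hamming

variable {ι α : Type*} [Fintype ι] [DecidableEq α]

section Norm

variable [Zero α]

lemma prod_ite_eq_zero (x : ι → α) (a b : ℝ) :
    ∏ i, (if x i = 0 then a else b) =
      a ^ (Fintype.card ι - hammingNorm x) * b ^ hammingNorm x := by
  have hcard := card_filter_add_card_filter_not (s := univ) (fun i => x i = 0)
  rw [card_univ] at hcard
  rw [prod_ite, prod_const, prod_const, hammingNorm, ← hcard, Nat.add_sub_cancel]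

lemma pow_hammingNorm (u : ℝ) (x : ι → α) : u ^ hammingNorm x = ∏ i, if x i = 0 then 1 else u := by
  rw [prod_ite_eq_zero, one_pow, one_mul]

lemma prod_ite_eq_zero_le (x : ι → α) {a b ρ : ℝ} (ha : 0 ≤ a) (hb : 0 ≤ b) (hab : b ≤ a * ρ) :
    ∏ i, (if x i = 0 then a else b) ≤ a ^ Fintype.card ι * ρ ^ hammingNorm x := by
  rw [prod_ite_eq_zero]
  calc _ ≤ a ^ (Fintype.card ι - hammingNorm x) * (a * ρ) ^ hammingNorm x := by gcongr
    _ = _ := by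
        rw [mul_pow, ← mul_assoc, ← pow_add, Nat.sub_add_cancel hammingNorm_le_card_fintype]

lemma sum_ite_eq_zero [Fintype α] (u : ℝ) :
    ∑ a : α, (if a = 0 then 1 else u) = 1 + (Fintype.card α - 1) * u := by
  rw [← add_sum_erase _ _ (mem_univ (0 : α)), if_pos rfl,
    sum_congr rfl fun a ha => if_neg (ne_of_mem_erase ha), sum_const,
    card_erase_of_mem (mem_univ _), nsmul_eq_mul, card_univ, Nat.cast_pred Fintype.card_pos]

lemma sum_pow_hammingNorm [DecidableEq ι] [Fintype α] (u : ℝ) :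
    ∑ x : ι → α, u ^ hammingNorm x = (1 + (Fintype.card α - 1) * u) ^ Fintype.card ι := by
  simp only [pow_hammingNorm]
  rw [← Fintype.prod_sum fun _ a => if a = 0 then 1 else u]
  simp only [sum_ite_eq_zero, prod_const, card_univ]

lemma card_hammingNorm_le_le [DecidableEq ι] [Fintype α] (m : ℕ) {y : ℝ} (hy0 : 0 < y)
    (hy1 : y ≤ 1) :
    (#{x : ι → α | hammingNorm x ≤ m} : ℝ) ≤
      (1 + (Fintype.card α - 1) * y) ^ Fintype.card ι / y ^ m := by
  rw [le_div_iff₀ (by positivity), ← sum_pow_hammingNorm, ← nsmul_eq_mul, ← sum_const]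
  refine (sum_le_sum fun x hx => pow_le_pow_of_le_one hy0.le hy1 (mem_filter.1 hx).2).trans
    (sum_le_sum_of_subset_of_nonneg (subset_univ _) fun _ _ _ => by positivity)

lemma card_two_mul_hammingNorm_lt_le [DecidableEq ι] [Fintype α] (m : ℕ) {x : ℝ} (hx0 : 0 < x)
    (hx1 : x ≤ 1) :
    (#{s : ι → α | 2 * hammingNorm s < m} : ℝ) ≤
      (1 + (Fintype.card α - 1) * x ^ 2) ^ Fintype.card ι / (x ^ 2) ^ m * x ^ m := by
  have hα : (1 : ℝ) ≤ Fintype.card α := mod_cast Fintype.card_pos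
  have hbase : 0 ≤ (Fintype.card α - 1) * x ^ 2 := mul_nonneg (sub_nonneg.2 hα) (sq_nonneg x)
  have hsub : #{s : ι → α | 2 * hammingNorm s < m} ≤ #{s : ι → α | hammingNorm s ≤ m / 2} :=
    card_le_card (monotone_filter_right _ fun s _ hs => by lia)
  calc _ ≤ (#{s : ι → α | hammingNorm s ≤ m / 2} : ℝ) := mod_cast hsub
    _ ≤ (1 + (Fintype.card α - 1) * x ^ 2) ^ Fintype.card ι / (x ^ 2) ^ (m / 2) :=
        card_hammingNorm_le_le _ (by positivity) (pow_le_one₀ hx0.le hx1)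
    _ ≤ (1 + (Fintype.card α - 1) * x ^ 2) ^ Fintype.card ι / x ^ m := by
        rw [← pow_mul]
        exact div_le_div_of_nonneg_left (by positivity) (by positivity)
          (pow_le_pow_of_le_one hx0.le hx1 (Nat.mul_div_le m 2))
    _ = _ := by
        rw [← pow_mul, two_mul, pow_add]
        field_simp

end Norm

section Translate

variable [AddGroup α] [Fintype α]

lemma sum_ite_eq_zero_mul_ite_add_eq_zero {a : α} (ha : a ≠ 0) (x : ℝ) :
    ∑ b : α, (if b = 0 then 1 else x) * (if b + a = 0 then 1 else x) =
      2 * x + (Fintype.card α - 2) * x ^ 2 := by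
  have hsplit (b : α) : (if b = 0 then 1 else x) * (if b + a = 0 then 1 else x) =
      x ^ 2 + (if b = 0 then x - x ^ 2 else 0) + (if b = -a then x - x ^ 2 else 0) := by
    simp only [← eq_neg_iff_add_eq_zero]
    by_cases hb : b = 0
    · have hba : b ≠ -a := fun hba => ha (neg_eq_zero.1 (hba ▸ hb))
      rw [if_pos hb, if_pos hb, if_neg hba, if_neg hba]
      ring
    · rw [if_neg hb, if_neg hb]
      split_ifs <;> ring
  simp only [hsplit, sum_add_distrib, sum_const, card_univ, nsmul_eq_mul, sum_ite_eq', mem_univ,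
    if_true]
  ring

/-- Weighting `s` by `x ^ (wt s + wt (s + z))` factors the count over the coordinates, and each
coordinate in the support of `z` gains the factor `ρ`. -/
lemma card_hammingNorm_le_and_hammingNorm_add_le_le [DecidableEq ι] [Nontrivial α] (m : ℕ)
    {x ρ : ℝ} (hx0 : 0 < x) (hx1 : x ≤ 1) (hρ : 1 - (1 - x) ^ 2 / Fintype.card α ≤ ρ) (z : ι → α) :
    (#{s : ι → α | hammingNorm s ≤ m ∧ hammingNorm (s + z) ≤ m} : ℝ) ≤
      (1 + (Fintype.card α - 1) * x ^ 2) ^ Fintype.card ι / (x ^ 2) ^ m * ρ ^ hammingNorm z := by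
  have hα := two_le_card α
  set Q : ℝ := (Fintype.card α : ℝ)
  have hbase : 0 ≤ (Q - 1) * x ^ 2 := mul_nonneg (by linarith) (sq_nonneg x)
  have hbase' : 0 ≤ (Q - 2) * x ^ 2 := mul_nonneg (by linarith) (sq_nonneg x)
  have hgain : 2 * x + (Q - 2) * x ^ 2 ≤ (1 + (Q - 1) * x ^ 2) * ρ := by
    have hbound : 1 + (Q - 1) * x ^ 2 ≤ Q := by nlinarith [pow_le_one₀ hx0.le hx1 (n := 2)]
    have hloss : (1 + (Q - 1) * x ^ 2) * ((1 - x) ^ 2 / Q) ≤ (1 - x) ^ 2 := by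
      rw [mul_div_assoc', div_le_iff₀ (by linarith), mul_comm]
      exact mul_le_mul_of_nonneg_left hbound (sq_nonneg _)
    linarith [mul_le_mul_of_nonneg_left hρ (by linarith : 0 ≤ 1 + (Q - 1) * x ^ 2)]
  have hcoord (i : ι) : ∑ a : α, (if a = 0 then 1 else x) * (if a + z i = 0 then 1 else x) =
      if z i = 0 then 1 + (Q - 1) * x ^ 2 else 2 * x + (Q - 2) * x ^ 2 := by
    split_ifs with hz
    · rw [← sum_ite_eq_zero]
      refine sum_congr rfl fun b _ => ?_
      rw [hz, add_zero]
      split_ifs <;> ring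
    · exact sum_ite_eq_zero_mul_ite_add_eq_zero hz x
  rw [div_mul_eq_mul_div, le_div_iff₀ (by positivity)]
  calc _ ≤ ∑ s : ι → α, x ^ hammingNorm s * x ^ hammingNorm (s + z) := by
        rw [← nsmul_eq_mul, ← sum_const]
        refine (sum_le_sum fun s hs => ?_).trans
          (sum_le_sum_of_subset_of_nonneg (subset_univ _) fun _ _ _ => by positivity)
        obtain ⟨hs, hsz⟩ := (mem_filter.1 hs).2
        rw [← pow_add, ← pow_mul]
        exact pow_le_pow_of_le_one hx0.le hx1 (by lia)
    _ = ∏ i, if z i = 0 then 1 + (Q - 1) * x ^ 2 else 2 * x + (Q - 2) * x ^ 2 := by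
        simp only [pow_hammingNorm, ← prod_mul_distrib, ← hcoord]
        rw [Fintype.prod_sum]
        rfl
    _ ≤ _ := prod_ite_eq_zero_le z (by linarith) (by linarith) hgain

end Translate

section Support

variable [Zero α] [Fintype α] [DecidableEq ι]

lemma sum_filter_support_eq {R : Type*} [CommSemiring R] {g : ι → α → R} (hg : ∀ i, g i 0 = 1)
    (T : Finset ι) :
    ∑ s : ι → α with ({i | s i ≠ 0} : Finset ι) = T, ∏ i, g i (s i) =
      ∏ i ∈ T, ∑ a with a ≠ 0, g i a := by
  have hpi : ({s : ι → α | ({i | s i ≠ 0} : Finset ι) = T} : Finset (ι → α)) =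
      Fintype.piFinset fun i => if i ∈ T then ({a | a ≠ 0} : Finset α) else {0} := by
    ext s
    simp only [mem_filter, mem_univ, true_and, Fintype.mem_piFinset, Finset.ext_iff]
    refine forall_congr' fun i => ?_
    by_cases hi : i ∈ T <;> simp [hi]
  rw [hpi, ← prod_univ_sum, ← prod_subset (subset_univ T)]
  · exact prod_congr rfl fun i hi => by rw [if_pos hi]
  · exact fun i _ hi => by rw [if_neg hi, sum_singleton, hg]

lemma sum_filter_hammingNorm {R : Type*} [CommSemiring R] {g : ι → α → R} (hg : ∀ i, g i 0 = 1)
    (P : ℕ → Prop) [DecidablePred P] :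
    ∑ s : ι → α with P (hammingNorm s), ∏ i, g i (s i) =
      ∑ T : Finset ι with P #T, ∏ i ∈ T, ∑ a with a ≠ 0, g i a := by
  rw [← sum_fiberwise_of_maps_to (s := {s : ι → α | P (hammingNorm s)})
    (g := fun s : ι → α => ({i | s i ≠ 0} : Finset ι)) (t := {T : Finset ι | P #T})
    fun s hs => mem_filter.2 ⟨mem_univ _, (mem_filter.1 hs).2⟩]
  refine sum_congr rfl fun T hT => ?_
  rw [← sum_filter_support_eq hg, filter_filter]
  refine sum_congr (filter_congr fun s _ => and_iff_right_of_imp ?_) fun _ _ => rfl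
  rintro rfl
  exact (mem_filter.1 hT).2

lemma card_hammingNorm_eq (j : ℕ) :
    #{s : ι → α | hammingNorm s = j} = (Fintype.card ι).choose j * (Fintype.card α - 1) ^ j := by
  have hnonzero : #({a | a ≠ 0} : Finset α) = Fintype.card α - 1 := by
    rw [filter_ne', card_erase_of_mem (mem_univ _), card_univ]
  have hsum := sum_filter_hammingNorm (ι := ι) (g := fun _ (_ : α) => 1) (fun _ => rfl) (· = j)
  simp only [prod_const_one, sum_const, smul_eq_mul, mul_one, prod_const, hnonzero] at hsum
  rw [hsum, sum_congr rfl fun T hT => by rw [(mem_filter.1 hT).2], sum_const, smul_eq_mul,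
    univ_filter_card_eq, card_powersetCard, card_univ]

lemma card_hammingNorm_lt (d : ℕ) :
    #{s : ι → α | hammingNorm s < d} =
      ∑ i ∈ range d, (Fintype.card ι).choose i * (Fintype.card α - 1) ^ i := by
  rw [card_eq_sum_card_fiberwise (f := hammingNorm) (t := range d) fun s hs => by simpa using hs]
  refine sum_congr rfl fun i hi => ?_
  rw [← card_hammingNorm_eq, filter_filter]
  congr 1
  refine filter_congr fun s _ => and_iff_right_of_imp ?_
  rintro rfl
  exact mem_range.1 hi

lemma norm_sum_hammingNorm_le_le (m : ℕ) {y : ℝ} (hy0 : 0 < y) (hy1 : y ≤ 1) {g : ι → α → ℂ}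
    (hg : ∀ i, g i 0 = 1) (z : ι → α) {a b ζ : ℝ} (ha : 0 ≤ a) (hb : 0 ≤ b)
    (hab : 1 + b * y ≤ (1 + a * y) * ζ)
    (hsum : ∀ i, ‖∑ c with c ≠ 0, g i c‖ ≤ if z i = 0 then a else b) :
    ‖∑ s : ι → α with hammingNorm s ≤ m, ∏ i, g i (s i)‖ ≤
      (1 + a * y) ^ Fintype.card ι / y ^ m * ζ ^ hammingNorm z := by
  set c : ι → ℝ := fun i => if z i = 0 then a else b
  have hc (i : ι) : 0 ≤ c i := (norm_nonneg _).trans (hsum i)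
  rw [sum_filter_hammingNorm hg (· ≤ m), div_mul_eq_mul_div, le_div_iff₀ (by positivity)]
  calc _ ≤ (∑ T : Finset ι with #T ≤ m, ∏ i ∈ T, c i) * y ^ m := by
        refine mul_le_mul_of_nonneg_right ((norm_sum_le _ _).trans (sum_le_sum fun T _ => ?_))
          (by positivity)
        rw [norm_prod]
        exact prod_le_prod (fun _ _ => norm_nonneg _) fun i _ => hsum i
    _ ≤ ∑ T : Finset ι, ∏ i ∈ T, c i * y := by
        rw [sum_mul]
        refine (sum_le_sum fun T hT => ?_).trans (sum_le_sum_of_subset_of_nonneg (subset_univ _)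
          fun T _ _ => prod_nonneg fun i _ => mul_nonneg (hc i) hy0.le)
        rw [prod_mul_distrib, prod_const]
        exact mul_le_mul_of_nonneg_left
          (pow_le_pow_of_le_one hy0.le hy1 (mem_filter.1 hT).2) (prod_nonneg fun i _ => hc i)
    _ = ∏ i, if z i = 0 then 1 + a * y else 1 + b * y := by
        rw [← powerset_univ, ← prod_one_add]
        refine prod_congr rfl fun i _ => ?_
        simp only [c]
        split_ifs <;> rfl
    _ ≤ _ := prod_ite_eq_zero_le z (by positivity) (by positivity) hab

end Support

end Hamming

section Mode

variable {n m j : ℕ} {v : ℝ}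

lemma choose_mul_pow_succ_mul (hv : v * (n - m) = m) (hj : j ≤ n) :
    n.choose (j + 1) * v ^ (j + 1) * ((j + 1) * (n - m)) =
      n.choose j * v ^ j * ((n - j) * m) := by
  have hchoose : (n.choose (j + 1) : ℝ) * (j + 1) = n.choose j * (n - j) := by
    rw [← Nat.cast_sub hj]
    exact_mod_cast Nat.choose_succ_right_eq n j
  rw [pow_succ]
  linear_combination (v ^ j * v * (n - m)) * hchoose + (n.choose j * v ^ j * (n - j)) * hv

lemma choose_mul_pow_le_mode (hm : m < n) (hv0 : 0 ≤ v) (hv : v * (n - m) = m) (hj : j ≤ n) :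
    n.choose j * v ^ j ≤ n.choose m * v ^ m := by
  have hmn : (m : ℝ) < n := mod_cast hm
  obtain hmj | hjm := le_total m j
  · induction j, hmj using Nat.le_induction with
    | base => rfl
    | succ j hmj ih =>
      refine le_trans ?_ (ih (Nat.le_of_succ_le hj))
      have hmj' : (m : ℝ) ≤ j := mod_cast hmj
      have hstep := choose_mul_pow_succ_mul hv (Nat.le_of_succ_le hj)
      refine le_of_mul_le_mul_right (hstep.trans_le ?_)
        (mul_pos (by positivity) (sub_pos.2 hmn) : (0 : ℝ) < (j + 1) * (n - m))
      refine mul_le_mul_of_nonneg_left ?_ (by positivity)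
      nlinarith
  · induction hjm using Nat.decreasingInduction with
    | self => rfl
    | of_succ j hjm ih =>
      refine le_trans ?_ (ih (hjm.trans hm))
      have hjm' : (j : ℝ) + 1 ≤ m := mod_cast hjm
      have hstep := choose_mul_pow_succ_mul hv hj
      refine le_of_mul_le_mul_right (hstep.symm.trans_le ?_)
        (mul_pos (by linarith) (by linarith) : (0 : ℝ) < (n - j) * m)
      refine mul_le_mul_of_nonneg_left ?_ (by positivity)
      nlinarith

lemma one_add_pow_le_mul_mode (hm : m < n) (hv0 : 0 ≤ v) (hv : v * (n - m) = m) :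
    (1 + v) ^ n ≤ (n + 1) * (n.choose m * v ^ m) :=
  calc (1 + v) ^ n = ∑ j ∈ range (n + 1), n.choose j * v ^ j := by
        rw [add_comm, add_pow]
        exact sum_congr rfl fun j _ => by ring
    _ ≤ #(range (n + 1)) • (n.choose m * v ^ m) := sum_le_card_nsmul _ _ _ fun j hj =>
        choose_mul_pow_le_mode hm hv0 hv (Nat.lt_succ_iff.1 (mem_range.1 hj))
    _ = _ := by rw [card_range, nsmul_eq_mul, Nat.cast_succ]

end Mode

section RegularBall

/-- The tilt `x` for which the terms `(n choose j) * ((q ^ 2 - 1) * x ^ 2) ^ j` of the generating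
function of the Hamming weight on `(F × F) ^ n` peak at `j = m`, together with a factor `ζ`
dominating the gain per coordinate in each of the estimates of `IsRegularBall`. -/
structure IsSaddlePoint (q : ℝ) (n m : ℕ) (x ζ : ℝ) : Prop where
  one_le : 1 ≤ m
  lt : m < n
  pos : 0 < x
  le_one : x ≤ 1
  le_one' : ζ ≤ 1
  sq_eq : x ^ 2 = m / ((n - m) * (q ^ 2 - 1))
  le : x ≤ ζ
  one_sub_sq_div_le : 1 - (1 - x) ^ 2 / q ^ 2 ≤ ζ
  one_sub_div_le : 1 - x ^ 2 / q ^ 2 ≤ ζ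

/-- Chernoff's bound, with tilt `x ^ 2`, for the volume of the ball of radius `m` in
`(F × F) ^ n`. -/
noncomputable def chernoffBound (q : ℝ) (n m : ℕ) (x : ℝ) : ℝ :=
  (1 + (q ^ 2 - 1) * x ^ 2) ^ n / (x ^ 2) ^ m

lemma one_add_mul_sq_pos {q : ℝ} (hq : 2 ≤ q) (x : ℝ) : 0 < 1 + (q ^ 2 - 1) * x ^ 2 :=
  add_pos_of_pos_of_nonneg one_pos (mul_nonneg (by nlinarith) (sq_nonneg x))

namespace IsSaddlePoint

variable {q x ζ : ℝ} {n m : ℕ}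

lemma zeta_pos (h : IsSaddlePoint q n m x ζ) : 0 < ζ := h.pos.trans_le h.le

lemma sq_le_one (h : IsSaddlePoint q n m x ζ) : x ^ 2 ≤ 1 := pow_le_one₀ h.pos.le h.le_one

lemma chernoffBound_pos (h : IsSaddlePoint q n m x ζ) (hq : 2 ≤ q) : 0 < chernoffBound q n m x :=
  div_pos (pow_pos (one_add_mul_sq_pos hq x) n) (pow_pos (pow_pos h.pos 2) m)

lemma zeta_pow_le (h : IsSaddlePoint q n m x ζ) {j : ℕ} (hj : m ≤ 2 * j) :
    ζ ^ j ≤ ζ ^ (m / 2) :=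
  pow_le_pow_of_le_one h.zeta_pos.le h.le_one' (by lia)

lemma pow_le (h : IsSaddlePoint q n m x ζ) : x ^ m ≤ ζ ^ (m / 2) :=
  (pow_le_pow_left₀ h.pos.le h.le m).trans (h.zeta_pow_le (by lia))

lemma one_add_le_mul_zeta (h : IsSaddlePoint q n m x ζ) (hq : 2 ≤ q) :
    1 + (q ^ 2 - 2) * x ^ 2 ≤ (1 + (q ^ 2 - 1) * x ^ 2) * ζ := by
  have hgain := mul_le_mul_of_nonneg_left h.one_sub_div_le (one_add_mul_sq_pos hq x).le
  have hloss : (1 + (q ^ 2 - 1) * x ^ 2) * (x ^ 2 / q ^ 2) ≤ x ^ 2 := by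
    rw [mul_div_assoc', div_le_iff₀ (by positivity)]
    have hbase : 1 + (q ^ 2 - 1) * x ^ 2 ≤ q ^ 2 := by
      linarith [mul_le_mul_of_nonneg_left h.sq_le_one (by nlinarith : 0 ≤ q ^ 2 - 1)]
    linarith [mul_le_mul_of_nonneg_right hbase (sq_nonneg x)]
  linarith

end IsSaddlePoint

variable {F ι : Type*} [Field F] [Fintype F] [Fintype ι]

variable (F ι) in
/-- The nonzero vectors of symplectic weight at most `m`. -/
noncomputable def puncturedBall (m : ℕ) : Finset (ι → F × F) :=
  {s | 1 ≤ hammingNorm s ∧ hammingNorm s ≤ m}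

lemma mem_puncturedBall {m : ℕ} {s : ι → F × F} :
    s ∈ puncturedBall F ι m ↔ 1 ≤ hammingNorm s ∧ hammingNorm s ≤ m := by
  simp [puncturedBall]

variable (F ι) in
/-- The punctured ball `B` of radius `m` is `η`-regular: few of its points have a translate of
small weight or with vanishing first component, few stay in `B` under a large translation, and
`s ↦ sympForm s z` is nearly equidistributed on `B` for every `z` of large weight. -/
structure IsRegularBall (m : ℕ) (η : ℝ) : Prop where
  card_add_degenerate_le : ∀ z : ι → F × F,
    (#{s ∈ puncturedBall F ι m | 2 * hammingNorm (s + z) < m ∨ fstPart (s + z) = 0} : ℝ) ≤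
      η * #(puncturedBall F ι m)
  card_add_mem_le : ∀ z : ι → F × F, m ≤ 2 * hammingNorm z →
    (#{s ∈ puncturedBall F ι m | s + z ∈ puncturedBall F ι m} : ℝ) ≤ η * #(puncturedBall F ι m)
  norm_sum_char_le : ∀ χ : AddChar F ℂ, χ ≠ 1 → ∀ z : ι → F × F, m ≤ 2 * hammingNorm z →
    ‖∑ s ∈ puncturedBall F ι m, χ (sympForm s z)‖ ≤ η * #(puncturedBall F ι m)
  one_le : 1 ≤ η * #(puncturedBall F ι m)

lemma sum_addChar_symplectic (χ : AddChar F ℂ) (hχ : χ ≠ 1) {b : F × F} (hb : b ≠ 0) :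
    ∑ a : F × F, χ (a.1 * b.2 - a.2 * b.1) = 0 := by
  have hsurj (c : F) : ∃ a : F × F, a.1 * b.2 - a.2 * b.1 = c := by
    by_cases hb2 : b.2 = 0
    · have hb1 : b.1 ≠ 0 := fun hb1 => hb (Prod.ext hb1 hb2)
      exact ⟨(0, -c / b.1), by simp [hb1]⟩
    · exact ⟨(c / b.2, 0), by simp [hb2]⟩
  let f : F × F →+ F :=
    AddMonoidHom.mk' (fun a => a.1 * b.2 - a.2 * b.1) fun a c => by
      simp only [Prod.fst_add, Prod.snd_add]
      ring
  refine AddChar.sum_eq_zero_of_ne_one (ψ := χ.compAddMonoidHom f) fun h => hχ ?_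
  ext c
  obtain ⟨a, rfl⟩ := hsurj c
  exact DFunLike.congr_fun h a

lemma norm_sum_addChar_symplectic_le (χ : AddChar F ℂ) (hχ : χ ≠ 1) (b : F × F) :
    ‖∑ a : F × F with a ≠ 0, χ (a.1 * b.2 - a.2 * b.1)‖ ≤
      if b = 0 then (Fintype.card F : ℝ) ^ 2 - 1 else 1 := by
  rw [filter_ne']
  split_ifs with hb
  · refine (norm_sum_le _ _).trans_eq ?_
    simp only [AddChar.norm_apply, sum_const, nsmul_eq_mul, mul_one]
    rw [card_erase_of_mem (mem_univ _), card_univ, Nat.cast_pred Fintype.card_pos,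
      Fintype.card_prod, Nat.cast_mul, sq]
  · have hsum := sum_addChar_symplectic χ hχ hb
    rw [← sum_erase_add _ _ (mem_univ (0 : F × F))] at hsum
    rw [eq_neg_of_add_eq_zero_left hsum, norm_neg, AddChar.norm_apply]

omit [Fintype F] in
lemma addChar_sympForm (χ : AddChar F ℂ) (s z : ι → F × F) :
    χ (sympForm s z) = ∏ i, χ ((s i).1 * (z i).2 - (s i).2 * (z i).1) := by
  rw [sympForm_eq_sum]
  exact map_prod χ.toMonoidHom (fun i => Multiplicative.ofAdd _) univ

omit [Field F] in
lemma cast_card_prod_self : (Fintype.card (F × F) : ℝ) = (Fintype.card F : ℝ) ^ 2 := by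
  rw [Fintype.card_prod, Nat.cast_mul, sq]

lemma filter_hammingNorm_le_eq_insert (m : ℕ) :
    ({s : ι → F × F | hammingNorm s ≤ m} : Finset (ι → F × F)) =
      insert 0 (puncturedBall F ι m) := by
  ext s
  simp only [mem_filter, mem_univ, true_and, mem_insert, mem_puncturedBall,
    Nat.one_le_iff_ne_zero, hammingNorm_ne_zero_iff]
  by_cases hs : s = 0
  · simp [hs]
  · simp [hs]

namespace IsSaddlePoint

variable {m : ℕ} {x ζ : ℝ}

local notation "Ξ" => chernoffBound (Fintype.card F) (Fintype.card ι) m x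

lemma card_two_mul_hammingNorm_lt_le (h : IsSaddlePoint (Fintype.card F) (Fintype.card ι) m x ζ) :
    (#{s : ι → F × F | 2 * hammingNorm s < m} : ℝ) ≤ Ξ * ζ ^ (m / 2) := by
  have hcount := _root_.card_two_mul_hammingNorm_lt_le (ι := ι) (α := F × F) m h.pos h.le_one
  rw [cast_card_prod_self] at hcount
  exact hcount.trans
    (mul_le_mul_of_nonneg_left h.pow_le (h.chernoffBound_pos (two_le_card F)).le)

lemma one_le_chernoffBound_mul (h : IsSaddlePoint (Fintype.card F) (Fintype.card ι) m x ζ) :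
    1 ≤ Ξ * ζ ^ (m / 2) := by
  have hzero : (0 : ι → F × F) ∈ ({s | 2 * hammingNorm s < m} : Finset (ι → F × F)) :=
    mem_filter.2 ⟨mem_univ _, by rw [hammingNorm_zero]; exact h.one_le⟩
  exact le_trans (mod_cast card_pos.2 ⟨0, hzero⟩) h.card_two_mul_hammingNorm_lt_le

lemma card_hammingNorm_le_le (h : IsSaddlePoint (Fintype.card F) (Fintype.card ι) m x ζ) :
    (#{s : ι → F | hammingNorm s ≤ m} : ℝ) ≤ Ξ * ζ ^ (m / 2) := by
  have hq := two_le_card F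
  set q : ℝ := (Fintype.card F : ℝ)
  have hcoord : 1 + (q - 1) * x ^ 2 ≤ (1 + (q ^ 2 - 1) * x ^ 2) * ζ :=
    le_trans (by nlinarith [mul_nonneg (by nlinarith : 0 ≤ q ^ 2 - q - 1) (sq_nonneg x)])
      (h.one_add_le_mul_zeta hq)
  have hnonneg : 0 ≤ 1 + (q - 1) * x ^ 2 :=
    add_nonneg zero_le_one (mul_nonneg (by linarith) (sq_nonneg x))
  calc _ ≤ (1 + (q - 1) * x ^ 2) ^ Fintype.card ι / (x ^ 2) ^ m :=
        _root_.card_hammingNorm_le_le m (pow_pos h.pos 2) h.sq_le_one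
    _ ≤ ((1 + (q ^ 2 - 1) * x ^ 2) * ζ) ^ Fintype.card ι / (x ^ 2) ^ m := by gcongr
    _ = Ξ * ζ ^ Fintype.card ι := by rw [mul_pow, mul_div_right_comm, chernoffBound]
    _ ≤ Ξ * ζ ^ (m / 2) := mul_le_mul_of_nonneg_left (h.zeta_pow_le (by linarith [h.lt]))
        (h.chernoffBound_pos hq).le

lemma chernoffBound_le (h : IsSaddlePoint (Fintype.card F) (Fintype.card ι) m x ζ) :
    Ξ ≤ (Fintype.card ι + 1) * #(puncturedBall F ι m) := by
  have hq := two_le_card F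
  have hx := h.pos
  have hn : (Fintype.card ι : ℝ) - m ≠ 0 := (sub_pos.2 (mod_cast h.lt)).ne'
  have hq2 : (Fintype.card F : ℝ) ^ 2 - 1 ≠ 0 := by nlinarith
  have hsphere : #{s : ι → F × F | hammingNorm s = m} ≤ #(puncturedBall F ι m) :=
    card_le_card fun s hs => by
      rw [mem_puncturedBall, (mem_filter.1 hs).2]
      exact ⟨h.one_le, le_rfl⟩
  rw [card_hammingNorm_eq, ← Nat.cast_le (α := ℝ), Nat.cast_mul, Nat.cast_pow,
    Nat.cast_pred Fintype.card_pos, cast_card_prod_self] at hsphere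
  rw [chernoffBound, div_le_iff₀ (by positivity)]
  calc _ ≤ (Fintype.card ι + 1) * ((Fintype.card ι).choose m *
          (((Fintype.card F : ℝ) ^ 2 - 1) * x ^ 2) ^ m) :=
        one_add_pow_le_mul_mode h.lt (mul_nonneg (by nlinarith) (sq_nonneg x)) (by
          rw [h.sq_eq]
          field_simp)
    _ = (Fintype.card ι + 1) * ((Fintype.card ι).choose m *
          ((Fintype.card F : ℝ) ^ 2 - 1) ^ m) * (x ^ 2) ^ m := by rw [mul_pow]; ring
    _ ≤ _ := by gcongr

lemma chernoffBound_mul_le (h : IsSaddlePoint (Fintype.card F) (Fintype.card ι) m x ζ) :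
    2 * (Ξ * ζ ^ (m / 2)) ≤
      2 * (Fintype.card ι + 1) * ζ ^ (m / 2) * #(puncturedBall F ι m) := by
  linarith [mul_le_mul_of_nonneg_right h.chernoffBound_le (pow_nonneg h.zeta_pos.le (m / 2))]

lemma card_add_degenerate_le (h : IsSaddlePoint (Fintype.card F) (Fintype.card ι) m x ζ)
    (z : ι → F × F) :
    (#{s ∈ puncturedBall F ι m | 2 * hammingNorm (s + z) < m ∨ fstPart (s + z) = 0} : ℝ) ≤
      2 * (Ξ * ζ ^ (m / 2)) := by
  have hsmall : #{s ∈ puncturedBall F ι m | 2 * hammingNorm (s + z) < m} ≤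
      #{s : ι → F × F | 2 * hammingNorm s < m} :=
    card_le_card_of_injOn (· + z)
      (fun s hs => mem_filter.2 ⟨mem_univ _, (mem_filter.1 hs).2⟩)
      fun a _ b _ hab => add_right_cancel hab
  have hfst : #{s ∈ puncturedBall F ι m | fstPart (s + z) = 0} ≤
      #{s : ι → F | hammingNorm s ≤ m} := by
    refine card_le_card_of_injOn sndPart (fun s hs => ?_) fun a ha b hb hab => ?_
    · refine mem_filter.2 ⟨mem_univ _, le_trans ?_ (mem_puncturedBall.1 (mem_filter.1 hs).1).2⟩
      refine hammingNorm_comp_le_hammingNorm (fun _ => Prod.snd) fun _ => rfl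
    · have hfst : fstPart (a + z) = fstPart (b + z) :=
        (mem_filter.1 ha).2.trans (mem_filter.1 hb).2.symm
      rw [← sub_eq_zero]
      refine eq_zero_of_fstPart_of_sndPart ?_ (by rw [map_sub, hab, sub_self])
      rw [map_sub, sub_eq_zero]
      simpa only [map_add, add_left_inj] using hfst
  rw [filter_or, two_mul]
  refine (Nat.cast_le.2 (card_union_le _ _)).trans ?_
  rw [Nat.cast_add]
  exact add_le_add ((Nat.cast_le.2 hsmall).trans h.card_two_mul_hammingNorm_lt_le)
    ((Nat.cast_le.2 hfst).trans h.card_hammingNorm_le_le)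

lemma card_add_mem_le (h : IsSaddlePoint (Fintype.card F) (Fintype.card ι) m x ζ)
    {z : ι → F × F} (hz : m ≤ 2 * hammingNorm z) :
    (#{s ∈ puncturedBall F ι m | s + z ∈ puncturedBall F ι m} : ℝ) ≤ Ξ * ζ ^ (m / 2) := by
  have hsub : #{s ∈ puncturedBall F ι m | s + z ∈ puncturedBall F ι m} ≤
      #{s : ι → F × F | hammingNorm s ≤ m ∧ hammingNorm (s + z) ≤ m} :=
    card_le_card fun s hs => by
      rw [mem_filter, mem_puncturedBall, mem_puncturedBall] at hs
      exact mem_filter.2 ⟨mem_univ _, hs.1.2, hs.2.2⟩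
  have hcount := card_hammingNorm_le_and_hammingNorm_add_le_le (ρ := ζ) m h.pos h.le_one
    (by rw [cast_card_prod_self]; exact h.one_sub_sq_div_le) z
  rw [cast_card_prod_self] at hcount
  exact (Nat.cast_le.2 hsub).trans (hcount.trans (mul_le_mul_of_nonneg_left (h.zeta_pow_le hz)
    (h.chernoffBound_pos (two_le_card F)).le))

lemma norm_sum_char_le (h : IsSaddlePoint (Fintype.card F) (Fintype.card ι) m x ζ)
    {χ : AddChar F ℂ} (hχ : χ ≠ 1) {z : ι → F × F} (hz : m ≤ 2 * hammingNorm z) :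
    ‖∑ s ∈ puncturedBall F ι m, χ (sympForm s z)‖ ≤ Ξ * ζ ^ (m / 2) + 1 := by
  have hq := two_le_card F
  have hcoeff : 1 + 1 * x ^ 2 ≤ 1 + ((Fintype.card F : ℝ) ^ 2 - 2) * x ^ 2 := by
    gcongr
    nlinarith
  have hball := norm_sum_hammingNorm_le_le (ι := ι) m (pow_pos h.pos 2) h.sq_le_one
    (g := fun i (a : F × F) => χ (a.1 * (z i).2 - a.2 * (z i).1)) (fun i => by simp) z
    (a := (Fintype.card F : ℝ) ^ 2 - 1) (b := 1) (by nlinarith) zero_le_one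
    (hcoeff.trans (h.one_add_le_mul_zeta hq))
    (fun i => norm_sum_addChar_symplectic_le χ hχ (z i))
  simp only [← addChar_sympForm] at hball
  rw [filter_hammingNorm_le_eq_insert, sum_insert (by simp [mem_puncturedBall])] at hball
  calc _ = ‖(χ (sympForm 0 z) + ∑ s ∈ puncturedBall F ι m, χ (sympForm s z)) -
          χ (sympForm 0 z)‖ := by rw [add_sub_cancel_left]
    _ ≤ Ξ * ζ ^ hammingNorm z + 1 :=
        (norm_sub_le _ _).trans (add_le_add hball (AddChar.norm_apply _ _).le)
    _ ≤ _ := by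
        gcongr ?_ + 1
        exact mul_le_mul_of_nonneg_left (h.zeta_pow_le hz) (h.chernoffBound_pos hq).le

theorem isRegularBall (h : IsSaddlePoint (Fintype.card F) (Fintype.card ι) m x ζ) :
    IsRegularBall F ι m (2 * (Fintype.card ι + 1) * ζ ^ (m / 2)) where
  card_add_degenerate_le z := (h.card_add_degenerate_le z).trans h.chernoffBound_mul_le
  card_add_mem_le z hz :=
    (h.card_add_mem_le hz).trans (by linarith [h.chernoffBound_mul_le, h.one_le_chernoffBound_mul])
  norm_sum_char_le χ hχ z hz :=
    (h.norm_sum_char_le hχ hz).trans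
      (by linarith [h.chernoffBound_mul_le, h.one_le_chernoffBound_mul])
  one_le := by linarith [h.chernoffBound_mul_le, h.one_le_chernoffBound_mul]

end IsSaddlePoint

end RegularBall

section LineRepresentatives

variable (F : Type*) {V : Type*} [Field F] [AddCommGroup V] [Module F V]

/-- A chosen generator of the line through `x`. -/
noncomputable def lineRep (x : V) : V := (Quotient.mk (MulAction.orbitRel Fˣ V) x).out

/-- The chosen generators of lines that belong to `s`; if `s` is closed under nonzero scalars, they
contain one point of each line meeting `s`. -/
noncomputable def lineReps (s : Finset V) : Finset V := {x ∈ s | lineRep F x = x}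

lemma exists_smul_eq_lineRep (x : V) : ∃ c : Fˣ, c • x = lineRep F x :=
  Quotient.mk_out (s := MulAction.orbitRel Fˣ V) x

variable {F}

lemma mem_lineReps {s : Finset V} {x : V} : x ∈ lineReps F s ↔ x ∈ s ∧ lineRep F x = x :=
  mem_filter

lemma lineRep_smul (c : Fˣ) (x : V) : lineRep F (c • x) = lineRep F x :=
  congrArg Quotient.out (Quotient.sound (s := MulAction.orbitRel Fˣ V) ⟨c, rfl⟩)

lemma lineRep_mem_lineReps {s : Finset V} (hs : ∀ c : F, c ≠ 0 → ∀ x ∈ s, c • x ∈ s) {x : V}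
    (hx : x ∈ s) : lineRep F x ∈ lineReps F s := by
  obtain ⟨c, hc⟩ := exists_smul_eq_lineRep F x
  rw [mem_lineReps, ← hc, lineRep_smul]
  exact ⟨hs c c.ne_zero x hx, hc.symm⟩

lemma eq_of_mem_lineReps_of_eq_smul {s : Finset V} (h0 : (0 : V) ∉ s) {x y : V}
    (hx : x ∈ lineReps F s) (hy : y ∈ lineReps F s) {c : F} (hxy : x = c • y) : x = y := by
  rw [mem_lineReps] at hx hy
  have hc : c ≠ 0 := by
    rintro rfl
    exact h0 (zero_smul F y ▸ hxy ▸ hx.1)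
  rw [← hx.2, ← hy.2, ← lineRep_smul (Units.mk0 c hc) y, hxy]
  rfl

lemma card_eq_mul_card_lineReps [Fintype F] {s : Finset V} (h0 : (0 : V) ∉ s)
    (hs : ∀ c : F, c ≠ 0 → ∀ x ∈ s, c • x ∈ s) :
    (#s : ℝ) = (Fintype.card F - 1) * #(lineReps F s) := by
  have hfiber : ∀ y ∈ lineReps F s, #{x ∈ s | lineRep F x = y} = Fintype.card Fˣ := by
    intro y hy
    obtain ⟨hys, hy⟩ := mem_lineReps.1 hy
    have hy0 : y ≠ 0 := fun hy0 => h0 (hy0 ▸ hys)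
    have himage : {x ∈ s | lineRep F x = y} = univ.image fun c : Fˣ => c • y := by
      ext x
      simp only [mem_filter, mem_image, mem_univ, true_and]
      constructor
      · rintro ⟨-, rfl⟩
        obtain ⟨c, hc⟩ := exists_smul_eq_lineRep F x
        exact ⟨c⁻¹, by rw [← hc, inv_smul_smul]⟩
      · rintro ⟨c, rfl⟩
        exact ⟨hs c c.ne_zero y hys, by rw [lineRep_smul, hy]⟩
    have hinj : Function.Injective fun c : Fˣ => c • y := fun c d hcd =>
      Units.ext (smul_left_injective F hy0 hcd)
    rw [himage, card_image_of_injective _ hinj, card_univ]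
  rw [card_eq_sum_card_fiberwise fun x hx => lineRep_mem_lineReps hs hx, sum_congr rfl hfiber,
    sum_const, smul_eq_mul, Fintype.card_units, Nat.cast_mul, Nat.cast_pred Fintype.card_pos,
    mul_comm]

lemma card_filter_eq_mul_card_filter_lineReps [Fintype F] {s : Finset V} (h0 : (0 : V) ∉ s)
    (hs : ∀ c : F, c ≠ 0 → ∀ x ∈ s, c • x ∈ s) (P : V → Prop) [DecidablePred P]
    (hP : ∀ c : F, c ≠ 0 → ∀ x, P x → P (c • x)) :
    (#{x ∈ s | P x} : ℝ) = (Fintype.card F - 1) * #{x ∈ lineReps F s | P x} := by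
  rw [card_eq_mul_card_lineReps (F := F) (fun h => h0 (mem_filter.1 h).1) fun c hc x hx =>
    mem_filter.2 ⟨hs c hc x (mem_filter.1 hx).1, hP c hc x (mem_filter.1 hx).2⟩]
  rw [lineReps, lineReps, filter_filter, filter_filter]
  simp only [and_comm]

end LineRepresentatives

section Equidistribution

variable {F V : Type*} [Field F] [AddCommGroup V] [Module F V]
  {ω : LinearMap.BilinForm F V} {χ : AddChar F ℂ}

lemma sum_addChar_submodule (hχ : χ ≠ 1) (W : Submodule F V) [Fintype W] (x : V) :
    ∑ w : W, χ (ω x w) = if ∀ w ∈ W, ω x w = 0 then (Fintype.card W : ℂ) else 0 := by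
  let f : W →+ F := ((ω x) ∘ₗ W.subtype).toAddMonoidHom
  have hker : χ.compAddMonoidHom f = 0 ↔ ∀ w ∈ W, ω x w = 0 := by
    refine ⟨fun h w hw => by_contra fun hxw => hχ ?_, fun h => ?_⟩
    · ext c
      have hval := DFunLike.congr_fun h ((c / ω x w) • ⟨w, hw⟩)
      have hf : f ((c / ω x w) • ⟨w, hw⟩) = c := by
        change ω x ((c / ω x w) • w) = c
        rw [map_smul, smul_eq_mul, div_mul_cancel₀ _ hxw]
      rwa [AddChar.compAddMonoidHom_apply, hf] at hval
    · ext w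
      rw [AddChar.compAddMonoidHom_apply, show f w = 0 from h w w.2, AddChar.map_zero_eq_one,
        AddChar.zero_apply]
  have hsum := AddChar.sum_eq_ite (χ.compAddMonoidHom f)
  simp only [hker] at hsum
  exact hsum

lemma abs_card_orthogonal_sub_card_div_le (hχ : χ ≠ 1) (W : Submodule F V) [Fintype W]
    (s : Finset V) {B : ℝ} (hB0 : 0 ≤ B)
    (hB : ∀ w ∈ W, w ≠ 0 → ‖∑ x ∈ s, χ (ω x w)‖ ≤ B) :
    |(#{x ∈ s | ∀ w ∈ W, ω x w = 0} : ℝ) - #s / Fintype.card W| ≤ B := by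
  set N := #{x ∈ s | ∀ w ∈ W, ω x w = 0}
  have hW : (0 : ℝ) < Fintype.card W := mod_cast Fintype.card_pos
  have htotal : (N : ℂ) * Fintype.card W = ∑ w : W, ∑ x ∈ s, χ (ω x w) := by
    rw [sum_comm]
    simp only [sum_addChar_submodule hχ, sum_ite, sum_const_zero, add_zero, sum_const,
      nsmul_eq_mul, N]
  rw [← add_sum_erase _ _ (mem_univ (0 : W))] at htotal
  simp only [ZeroMemClass.coe_zero, map_zero, AddChar.map_zero_eq_one, sum_const, nsmul_eq_mul,
    mul_one] at htotal
  have hnorm : |(N : ℝ) * Fintype.card W - #s| ≤ Fintype.card W * B := by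
    rw [← Real.norm_eq_abs, ← Complex.norm_real]
    push_cast
    rw [htotal, add_sub_cancel_left]
    calc _ ≤ ∑ _w ∈ univ.erase (0 : W), B := norm_sum_le_of_le _ fun w hw =>
          hB w w.2 fun h => ne_of_mem_erase hw (Subtype.ext h)
      _ ≤ ∑ _w : W, B := sum_le_sum_of_subset_of_nonneg (erase_subset _ _) fun _ _ _ => hB0
      _ = _ := by rw [sum_const, card_univ, nsmul_eq_mul]
  rw [sub_div' hW.ne', abs_div, abs_of_pos hW, div_le_iff₀ hW, mul_comm B]
  exact hnorm

lemma abs_card_orthogonal_sub_card_div_pow_le [Fintype F] (hχ : χ ≠ 1) {t : Finset V}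
    [DecidablePred fun x => ∀ y ∈ t, ω x y = 0] (ht : LinearIndepOn F id (t : Set V))
    (s : Finset V) {B : ℝ} (hB0 : 0 ≤ B)
    (hB : ∀ w ∈ Submodule.span F (t : Set V), w ≠ 0 → ‖∑ x ∈ s, χ (ω x w)‖ ≤ B) :
    |(#{x ∈ s | ∀ y ∈ t, ω x y = 0} : ℝ) - #s / (Fintype.card F : ℝ) ^ #t| ≤ B := by
  have : Module.Finite F (Submodule.span F (t : Set V)) := inferInstance
  have : Fintype (Submodule.span F (t : Set V)) := @Fintype.ofFinite _ (Module.finite_of_finite F)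
  have hcard : (Fintype.card (Submodule.span F (t : Set V)) : ℝ) = (Fintype.card F : ℝ) ^ #t := by
    rw [Module.card_eq_pow_finrank (K := F), finrank_span_finset_eq_card ht, Nat.cast_pow]
  have horth (x : V) : (∀ w ∈ Submodule.span F (t : Set V), ω x w = 0) ↔ ∀ y ∈ t, ω x y = 0 :=
    Submodule.span_le (p := LinearMap.ker (ω x))
  rw [← hcard]
  simpa only [horth] using
    abs_card_orthogonal_sub_card_div_le hχ (Submodule.span F (t : Set V)) s hB0 hB

end Equidistribution

section Cylinder

variable {ι α : Type*} (κ : Type*) [Fintype ι] [Fintype κ] [Fintype α]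

/-- The vectors indexed by `ι ⊕ κ` whose restriction to `ι` lies in `s`. -/
noncomputable def cylinderOver (s : Finset (ι → α)) : Finset (ι ⊕ κ → α) :=
  {x | x ∘ Sum.inl ∈ s}

variable {κ}

lemma mem_cylinderOver {s : Finset (ι → α)} {x : ι ⊕ κ → α} :
    x ∈ cylinderOver κ s ↔ x ∘ Sum.inl ∈ s := by
  simp [cylinderOver]

lemma sum_cylinderOver {R : Type*} [CommSemiring R] (s : Finset (ι → α)) (f : (ι → α) → R)
    (g : (κ → α) → R) :
    ∑ x ∈ cylinderOver κ s, f (x ∘ Sum.inl) * g (x ∘ Sum.inr) = (∑ u ∈ s, f u) * ∑ v, g v := by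
  rw [sum_mul_sum, ← sum_product']
  refine sum_equiv (Equiv.sumArrowEquivProdArrow ι κ α) (fun x => ?_) fun x _ => rfl
  simp only [mem_cylinderOver, mem_product, mem_univ, and_true]
  rfl

lemma card_cylinderOver (s : Finset (ι → α)) :
    #(cylinderOver κ s) = #s * Fintype.card α ^ Fintype.card κ := by
  simpa using sum_cylinderOver (R := ℕ) (κ := κ) s (fun _ => 1) (fun _ => 1)

end Cylinder

section Instantiation

variable {F ι κ : Type*} [Field F] [Fintype F] [Fintype ι] [Fintype κ] {m : ℕ} {η : ℝ}

variable (F ι κ) in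
/-- The vectors whose restriction to `ι` has weight less than `m / 2` or vanishing first part. -/
def degenerateSet (m : ℕ) : Set (ι ⊕ κ → F × F) :=
  {y | 2 * hammingNorm (y ∘ Sum.inl) < m ∨ fstPart (y ∘ Sum.inl) = 0}

variable (F ι κ) in
/-- One point on each line of vectors whose restriction to `ι` is nonzero of weight at most `m`. -/
noncomputable def lowWeightReps (m : ℕ) : Finset (ι ⊕ κ → F × F) :=
  lineReps F (cylinderOver κ (puncturedBall F ι m))

omit [Fintype F] in
lemma hammingNorm_smul_of_ne_zero {c : F} (hc : c ≠ 0) (x : ι → F × F) :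
    hammingNorm (c • x) = hammingNorm x :=
  hammingNorm_smul (fun _ => IsSMulRegular.of_ne_zero hc) x

omit [Fintype F] in
lemma sympForm_eq_add (x y : ι ⊕ κ → F × F) :
    sympForm x y = sympForm (x ∘ Sum.inl) (y ∘ Sum.inl) + sympForm (x ∘ Sum.inr) (y ∘ Sum.inr) := by
  simp only [sympForm_eq_sum, Fintype.sum_sum_type, Function.comp_apply]

lemma zero_notMem_cylinderOver_puncturedBall :
    (0 : ι ⊕ κ → F × F) ∉ cylinderOver κ (puncturedBall F ι m) := by
  rw [mem_cylinderOver, mem_puncturedBall, show (0 : ι ⊕ κ → F × F) ∘ Sum.inl = 0 from rfl,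
    hammingNorm_zero]
  lia

lemma smul_mem_cylinderOver_puncturedBall (c : F) (hc : c ≠ 0) (x : ι ⊕ κ → F × F)
    (hx : x ∈ cylinderOver κ (puncturedBall F ι m)) :
    c • x ∈ cylinderOver κ (puncturedBall F ι m) := by
  rw [mem_cylinderOver, mem_puncturedBall] at hx ⊢
  rwa [show (c • x) ∘ Sum.inl = c • (x ∘ Sum.inl) from rfl, hammingNorm_smul_of_ne_zero hc]

omit [Fintype F] [Fintype κ] in
lemma smul_mem_degenerateSet (c : F) (hc : c ≠ 0) (x : ι ⊕ κ → F × F)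
    (hx : x ∈ degenerateSet F ι κ m) : c • x ∈ degenerateSet F ι κ m :=
  hx.imp (fun hwt => (congrArg (2 * ·) (hammingNorm_smul_of_ne_zero hc _)).trans_lt hwt)
    fun hfst => (map_smul fstPart c (x ∘ Sum.inl)).trans (by rw [hfst, smul_zero])

omit [Fintype F] [Fintype κ] in
lemma le_of_notMem_degenerateSet {y : ι ⊕ κ → F × F} (hy : y ∉ degenerateSet F ι κ m) :
    m ≤ 2 * hammingNorm (y ∘ Sum.inl) :=
  not_lt.1 fun h => hy (Or.inl h)

lemma card_cylinderOver_puncturedBall :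
    (#(cylinderOver κ (puncturedBall F ι m)) : ℝ) =
      (Fintype.card F - 1) * #(lowWeightReps F ι κ m) :=
  card_eq_mul_card_lineReps zero_notMem_cylinderOver_puncturedBall
    smul_mem_cylinderOver_puncturedBall

lemma card_puncturedBall_mul_pow :
    (#(puncturedBall F ι m) : ℝ) * ((Fintype.card F : ℝ) ^ 2) ^ Fintype.card κ =
      (Fintype.card F - 1) * #(lowWeightReps F ι κ m) := by
  rw [← card_cylinderOver_puncturedBall, card_cylinderOver, Nat.cast_mul, Nat.cast_pow,
    cast_card_prod_self]

lemma card_filter_lowWeightReps_le {P : (ι ⊕ κ → F × F) → Prop} [DecidablePred P]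
    {R : (ι → F × F) → Prop} [DecidablePred R] (hPR : ∀ x, P x → R (x ∘ Sum.inl))
    (hR : (#{s ∈ puncturedBall F ι m | R s} : ℝ) ≤ η * #(puncturedBall F ι m)) :
    (#{x ∈ lowWeightReps F ι κ m | P x} : ℝ) ≤
      (Fintype.card F - 1) * η * #(lowWeightReps F ι κ m) := by
  have hsub : {x ∈ lowWeightReps F ι κ m | P x} ⊆
      cylinderOver κ {s ∈ puncturedBall F ι m | R s} := fun x hx => by
    obtain ⟨hx, hPx⟩ := mem_filter.1 hx
    exact mem_cylinderOver.2 (mem_filter.2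
      ⟨mem_cylinderOver.1 (mem_lineReps.1 hx).1, hPR x hPx⟩)
  calc _ ≤ (#(cylinderOver κ {s ∈ puncturedBall F ι m | R s}) : ℝ) :=
        mod_cast card_le_card hsub
    _ = #{s ∈ puncturedBall F ι m | R s} * ((Fintype.card F : ℝ) ^ 2) ^ Fintype.card κ := by
        rw [card_cylinderOver, Nat.cast_mul, Nat.cast_pow, cast_card_prod_self]
    _ ≤ η * #(puncturedBall F ι m) * ((Fintype.card F : ℝ) ^ 2) ^ Fintype.card κ := by gcongr
    _ = _ := by rw [mul_assoc, card_puncturedBall_mul_pow]; ring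

namespace IsRegularBall

lemma nonneg (h : IsRegularBall F ι m η) : 0 ≤ η :=
  not_lt.1 fun hη => absurd h.one_le (not_le.2
    ((mul_nonpos_of_nonpos_of_nonneg hη.le (Nat.cast_nonneg _)).trans_lt one_pos))

lemma norm_sum_char_cylinderOver_le (h : IsRegularBall F ι m η) {χ : AddChar F ℂ} (hχ : χ ≠ 1)
    {z : ι ⊕ κ → F × F} (hz : z ∉ degenerateSet F ι κ m) :
    ‖∑ x ∈ cylinderOver κ (puncturedBall F ι m), χ (sympForm x z)‖ ≤
      η * #(cylinderOver κ (puncturedBall F ι m)) := by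
  have hfactor := sum_cylinderOver (κ := κ) (puncturedBall F ι m)
    (fun u => χ (sympForm u (z ∘ Sum.inl))) fun v => χ (sympForm v (z ∘ Sum.inr))
  simp only [← AddChar.map_add_eq_mul, ← sympForm_eq_add] at hfactor
  have htail : ‖∑ v : κ → F × F, χ (sympForm v (z ∘ Sum.inr))‖ ≤ Fintype.card (κ → F × F) :=
    (norm_sum_le _ _).trans_eq (by
      simp only [AddChar.norm_apply, sum_const, nsmul_eq_mul, mul_one, card_univ])
  rw [hfactor, norm_mul, card_cylinderOver, ← Fintype.card_fun, Nat.cast_mul, ← mul_assoc]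
  exact mul_le_mul (h.norm_sum_char_le χ hχ _ (le_of_notMem_degenerateSet hz)) htail
    (norm_nonneg _) (mul_nonneg h.nonneg (Nat.cast_nonneg _))

lemma abs_card_orthogonal_sub_le (h : IsRegularBall F ι m η) {t : Finset (ι ⊕ κ → F × F)}
    [DecidablePred fun x : ι ⊕ κ → F × F => ∀ y ∈ t, sympForm x y = 0]
    (ht : LinearIndepOn F id (t : Set (ι ⊕ κ → F × F)))
    (hspan : ∀ v ∈ Submodule.span F (t : Set (ι ⊕ κ → F × F)), v ∈ degenerateSet F ι κ m → v = 0) :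
    |(#{x ∈ lowWeightReps F ι κ m | ∀ y ∈ t, sympForm x y = 0} : ℝ) -
        #(lowWeightReps F ι κ m) / (Fintype.card F : ℝ) ^ #t| ≤
      (Fintype.card F - 1) * η * #(lowWeightReps F ι κ m) := by
  have hq : (0 : ℝ) < Fintype.card F - 1 := by linarith [two_le_card F]
  obtain ⟨χ, hχ⟩ := AddChar.exists_apply_ne_zero.2 (one_ne_zero (α := F))
  have hχ : χ ≠ 1 := by
    rintro rfl
    exact hχ (AddChar.one_apply 1)
  have hcyl := abs_card_orthogonal_sub_card_div_pow_le hχ ht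
    (cylinderOver κ (puncturedBall F ι m)) (mul_nonneg h.nonneg (Nat.cast_nonneg _))
    fun w hw hw0 => h.norm_sum_char_cylinderOver_le hχ fun hwZ => hw0 (hspan w hw hwZ)
  rw [card_filter_eq_mul_card_filter_lineReps (F := F) zero_notMem_cylinderOver_puncturedBall
    smul_mem_cylinderOver_puncturedBall (fun x => ∀ y ∈ t, sympForm x y = 0)
    fun c _ x hx y hy => by rw [map_smul, LinearMap.smul_apply, hx y hy, smul_zero],
    card_cylinderOver_puncturedBall, mul_div_assoc, ← mul_sub, abs_mul, abs_of_pos hq] at hcyl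
  refine (le_of_mul_le_mul_left (hcyl.trans_eq (mul_left_comm _ _ _)) hq).trans ?_
  gcongr
  exact le_mul_of_one_le_left h.nonneg (by linarith [two_le_card F])

lemma card_add_mem_degenerateSet_le (h : IsRegularBall F ι m η) (y : ι ⊕ κ → F × F)
    [DecidablePred fun x => x + y ∈ degenerateSet F ι κ m] :
    (#{x ∈ lowWeightReps F ι κ m | x + y ∈ degenerateSet F ι κ m} : ℝ) ≤
      (Fintype.card F - 1) * η * #(lowWeightReps F ι κ m) :=
  card_filter_lowWeightReps_le
    (R := fun s => 2 * hammingNorm (s + y ∘ Sum.inl) < m ∨ fstPart (s + y ∘ Sum.inl) = 0)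
    (fun _ hx => hx) (h.card_add_degenerate_le (y ∘ Sum.inl))

lemma card_add_mem_cylinderOver_le (h : IsRegularBall F ι m η) {y : ι ⊕ κ → F × F}
    [DecidablePred fun x => x + y ∈ cylinderOver κ (puncturedBall F ι m)]
    (hy : y ∉ degenerateSet F ι κ m) :
    (#{x ∈ lowWeightReps F ι κ m | x + y ∈ cylinderOver κ (puncturedBall F ι m)} : ℝ) ≤
      (Fintype.card F - 1) * η * #(lowWeightReps F ι κ m) :=
  card_filter_lowWeightReps_le (R := fun s => s + y ∘ Sum.inl ∈ puncturedBall F ι m)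
    (fun _ hx => mem_cylinderOver.1 hx)
    (h.card_add_mem_le (y ∘ Sum.inl) (le_of_notMem_degenerateSet hy))

theorem isPseudorandom (h : IsRegularBall F ι m η) :
    IsPseudorandom sympForm (cylinderOver κ (puncturedBall F ι m) : Set (ι ⊕ κ → F × F))
      (degenerateSet F ι κ m) (lowWeightReps F ι κ m) ((Fintype.card F - 1) * η) where
  nonneg := mul_nonneg (by linarith [two_le_card F]) h.nonneg
  zero_notMem := zero_notMem_cylinderOver_puncturedBall
  zero_mem := Or.inr rfl
  smul_mem_I := smul_mem_cylinderOver_puncturedBall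
  smul_mem_Z := smul_mem_degenerateSet
  subset x hx := (mem_lineReps.1 hx).1
  eq_of_eq_smul x hx y hy c hxy :=
    eq_of_mem_lineReps_of_eq_smul zero_notMem_cylinderOver_puncturedBall hx hy hxy
  card_add_mem_Z_le y := h.card_add_mem_degenerateSet_le y
  card_add_mem_I_le y hy := by
    simpa only [mem_coe] using h.card_add_mem_cylinderOver_le hy
  abs_card_orthogonal_sub_le t ht := by
    convert h.abs_card_orthogonal_sub_le ht.linearIndepOn ht.eq_zero_of_mem

end IsRegularBall

end Instantiation

section Extraction

variable {F ι κ : Type*} [Field F] [Fintype ι]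

lemma finrank_pi_prod : Module.finrank F (ι → F × F) = 2 * Fintype.card ι := by
  rw [Module.finrank_pi_fintype, sum_const, Module.finrank_prod, Module.finrank_self, card_univ,
    smul_eq_mul, mul_comm]

lemma orthogonal_matrixGraph {A : Matrix ι ι F} (hA : A.IsSymm) :
    sympForm.orthogonal (matrixGraph A) = matrixGraph A := by
  refine le_antisymm (fun x hx => ?_) fun x hx y hy => isIsotropic_matrixGraph hA y hy x hx
  refine mem_matrixGraph.2 (sub_eq_zero.1 (dotProduct_eq_zero _ fun a => ?_))
  have hax : sympForm (fun i => (a i, A.mulVec a i)) x = 0 := hx _ rfl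
  rw [sympForm_apply] at hax
  change a ⬝ᵥ sndPart x - A.mulVec a ⬝ᵥ fstPart x = 0 at hax
  rw [sub_dotProduct, dotProduct_comm _ a, dotProduct_comm _ a, Matrix.dotProduct_mulVec,
    ← Matrix.mulVec_transpose, hA.eq, ← neg_sub, hax, neg_zero]

variable [Fintype κ]

-- `C` is the orthogonal complement of the projection `D` of `L`. Since `L` is maximal isotropic, it
-- contains the extension by zero of every vector of `C`; hence `C ≤ D`, the complement of `C`.
lemma exists_isIsotropic_of_orthogonal_eq {L : Submodule F (ι ⊕ κ → F × F)}
    (hL : sympForm.orthogonal L = L) (hker : ∀ z ∈ L, z ∘ Sum.inl = 0 → z = 0) :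
    ∃ C : Submodule F (ι → F × F), Module.finrank F C + Fintype.card κ = Fintype.card ι ∧
      IsIsotropic sympForm (C : Set (ι → F × F)) ∧
      ∀ x, (∀ y ∈ C, sympForm x y = 0) → ∃ z ∈ L, z ∘ Sum.inl = x := by
  have hrefl : (sympForm : LinearMap.BilinForm F (ι → F × F)).IsRefl := sympForm_isAlt.isRefl
  let π : (ι ⊕ κ → F × F) →ₗ[F] (ι → F × F) := LinearMap.funLeft F (F × F) Sum.inl
  have hdual : sympForm.orthogonal (sympForm.orthogonal (L.map π)) = L.map π :=
    LinearMap.BilinForm.orthogonal_orthogonal sympForm_nondegenerate hrefl _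
  refine ⟨sympForm.orthogonal (L.map π), ?_, fun x hx y hy => ?_, fun x hx => ?_⟩
  · have hinj : Module.finrank F (L.map π) = Module.finrank F L := by
      rw [← LinearMap.range_domRestrict]
      refine LinearMap.finrank_range_of_inj ((injective_iff_map_eq_zero _).2 fun z hz => ?_)
      exact Subtype.ext (hker z z.2 hz)
    have hL' := LinearMap.BilinForm.finrank_orthogonal (sympForm_nondegenerate) L
    have hC := LinearMap.BilinForm.finrank_orthogonal (sympForm_nondegenerate) (L.map π)
    have hle := Submodule.finrank_le (L.map π)
    rw [hL, finrank_pi_prod, Fintype.card_sum] at hL'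
    rw [finrank_pi_prod] at hC hle
    lia
  · have hxL : (Sum.elim x 0 : ι ⊕ κ → F × F) ∈ L := by
      rw [← hL]
      intro z hz
      change sympForm z _ = 0
      rw [sympForm_eq_add, Sum.elim_comp_inl, Sum.elim_comp_inr, map_zero, add_zero]
      exact hx _ ⟨z, hz, rfl⟩
    exact hy x ⟨_, hxL, rfl⟩
  · have hx : x ∈ L.map π := hdual ▸ fun y hy => hrefl _ _ (hx y hy)
    exact hx

variable [Fintype F]

lemma card_symmThrough_singleton_mul_le {x : ι → F × F} (hx : x ≠ 0) :
    #(symmThrough {x}) * (Fintype.card F : ℝ) ^ Fintype.card ι ≤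
      #(symmThrough (∅ : Finset (ι → F × F))) := by
  have hsymm : (0 : ℝ) < #(symmThrough (∅ : Finset (ι → F × F))) :=
    Nat.cast_pos.2 symmThrough_empty_nonempty.card_pos
  have hdensity : symmDensity {x} ≤ _ :=
    symmDensity_le_of_linearIndepOn (by rw [coe_singleton]; exact LinearIndepOn.singleton hx)
  rw [symmDensity, card_singleton, one_mul, Nat.choose_succ_self, pow_zero,
    div_le_div_iff₀ hsymm (by positivity), one_mul] at hdensity
  exact hdensity

lemma exists_mem_forall_notMem_matrixGraph {S : Finset (Matrix ι ι F)} (hS : S ⊆ symmThrough ∅)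
    {X : Finset (ι → F × F)} (h0 : (0 : ι → F × F) ∉ X)
    (hX : (#X : ℝ) * #(symmThrough (∅ : Finset (ι → F × F))) <
      #S * (Fintype.card F : ℝ) ^ Fintype.card ι) :
    ∃ A ∈ S, ∀ x ∈ X, x ∉ matrixGraph A := by
  by_contra! hcover
  have hsub : S ⊆ X.biUnion fun x => symmThrough {x} := fun A hA => by
    obtain ⟨x, hx, hxA⟩ := hcover A hA
    refine mem_biUnion.2 ⟨x, hx, mem_symmThrough.2 ⟨(mem_symmThrough.1 (hS hA)).1, ?_⟩⟩
    simpa only [mem_singleton, forall_eq] using mem_matrixGraph.1 hxA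
  refine hX.not_ge ?_
  calc _ ≤ (∑ x ∈ X, #(symmThrough {x}) : ℝ) * (Fintype.card F : ℝ) ^ Fintype.card ι := by
        gcongr
        exact_mod_cast (card_le_card hsub).trans card_biUnion_le
    _ ≤ ∑ _x ∈ X, (#(symmThrough (∅ : Finset (ι → F × F))) : ℝ) := by
        rw [sum_mul]
        exact sum_le_sum fun x hx =>
          card_symmThrough_singleton_mul_le (ne_of_mem_of_not_mem hx h0)
    _ = _ := by rw [sum_const, nsmul_eq_mul]

variable {m : ℕ} {η : ℝ}

lemma lt_hammingNorm_of_disjoint_lowWeightReps {L : Submodule F (ι ⊕ κ → F × F)}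
    (hL : ∀ x ∈ lowWeightReps F ι κ m, x ∉ L) {z : ι ⊕ κ → F × F} (hz : z ∈ L)
    (hz0 : z ∘ Sum.inl ≠ 0) : m < hammingNorm (z ∘ Sum.inl) := by
  by_contra! hwt
  have hball : z ∈ cylinderOver κ (puncturedBall F ι m) :=
    mem_cylinderOver.2 (mem_puncturedBall.2 ⟨hammingNorm_pos_iff.2 hz0, hwt⟩)
  obtain ⟨c, hc⟩ := exists_smul_eq_lineRep F z
  refine hL _ (lineRep_mem_lineReps smul_mem_cylinderOver_puncturedBall hball) ?_
  rw [← hc]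
  exact L.smul_mem c hz

lemma IsRegularBall.card_symmThrough_empty_le (h : IsRegularBall F ι m η) {J : ℕ} (hJ : Odd J)
    (hμ : 8 * (#(puncturedBall F ι m) : ℝ) * (Fintype.card F : ℝ) ^ Fintype.card κ ≤
      J * ((Fintype.card F - 1) * (Fintype.card F : ℝ) ^ Fintype.card ι))
    (hη : 20 * ((Fintype.card F - 1) * η) * (Fintype.card F : ℝ) ^ (7 * J ^ 2) ≤ 1) :
    (#(symmThrough (∅ : Finset (ι ⊕ κ → F × F))) : ℝ) ≤
      #{A ∈ symmThrough ∅ | ∀ x ∈ lowWeightReps F ι κ m, x ∉ matrixGraph A} *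
        (4 * (Fintype.card F : ℝ) ^ (2 * J)) := by
  have hq := two_le_card F
  have hmean : 8 * expectedCount (lowWeightReps F ι κ m) ≤ J := by
    rw [expectedCount, ← mul_div_assoc, div_le_iff₀ (by positivity), Fintype.card_sum, pow_add]
    refine le_of_mul_le_mul_left ?_ (by linarith : (0 : ℝ) < Fintype.card F - 1)
    rw [mul_left_comm, ← card_puncturedBall_mul_pow, sq, mul_pow]
    linarith [mul_le_mul_of_nonneg_right hμ
      (by positivity : (0 : ℝ) ≤ (Fintype.card F : ℝ) ^ Fintype.card κ)]
  have hZ : ∀ x : ι ⊕ κ → F × F, fstPart x = 0 → x ∈ degenerateSet F ι κ m :=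
    fun x hx => Or.inr (funext fun i => congrFun hx (Sum.inl i))
  have hcore := h.isPseudorandom.card_symmThrough_empty_le hZ hJ hmean hη
  rw [div_le_iff₀ (by positivity)] at hcore
  refine hcore.trans_eq ?_
  congr!

lemma IsRegularBall.exists_isSymm_forall_notMem_matrixGraph (h : IsRegularBall F ι m η)
    {J : ℕ} (hJ : Odd J)
    (hμ : 8 * (#(puncturedBall F ι m) : ℝ) * (Fintype.card F : ℝ) ^ Fintype.card κ ≤
      J * ((Fintype.card F - 1) * (Fintype.card F : ℝ) ^ Fintype.card ι))
    (hη : 20 * ((Fintype.card F - 1) * η) * (Fintype.card F : ℝ) ^ (7 * J ^ 2) ≤ 1)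
    (hX : 4 * (Fintype.card F : ℝ) ^ (2 * J) * (Fintype.card F : ℝ) ^ Fintype.card κ <
      (Fintype.card F : ℝ) ^ Fintype.card ι) :
    ∃ A : Matrix (ι ⊕ κ) (ι ⊕ κ) F, A.IsSymm ∧
      (∀ x ∈ lowWeightReps F ι κ m, x ∉ matrixGraph A) ∧
      ∀ z ∈ matrixGraph A, z ∘ Sum.inl = 0 → z = 0 := by
  have hcore := h.card_symmThrough_empty_le hJ hμ hη
  have hsymm : (0 : ℝ) < #(symmThrough (∅ : Finset (ι ⊕ κ → F × F))) :=
    Nat.cast_pos.2 symmThrough_empty_nonempty.card_pos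
  have hS := pos_of_mul_pos_left (hsymm.trans_le hcore) (by positivity)
  have hcard : (#((cylinderOver κ {0}).erase (0 : ι ⊕ κ → F × F)) : ℝ) ≤
      ((Fintype.card F : ℝ) ^ 2) ^ Fintype.card κ := by
    refine (Nat.cast_le.2 (card_le_card (erase_subset _ _))).trans_eq ?_
    rw [card_cylinderOver, card_singleton, one_mul, Nat.cast_pow, cast_card_prod_self]
  obtain ⟨A, hA, hAX⟩ := exists_mem_forall_notMem_matrixGraph (filter_subset _ _)
    (notMem_erase (0 : ι ⊕ κ → F × F) (cylinderOver κ {0})) <| by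
      rw [Fintype.card_sum, pow_add]
      refine (mul_le_mul hcard hcore hsymm.le (by positivity)).trans_lt ?_
      refine lt_of_eq_of_lt ?_ (mul_lt_mul_of_pos_left
        (mul_lt_mul_of_pos_right hX (by positivity :
          (0 : ℝ) < (Fintype.card F : ℝ) ^ Fintype.card κ)) hS)
      ring
  obtain ⟨hA, hAI⟩ := mem_filter.1 hA
  refine ⟨A, (mem_symmThrough.1 hA).1, hAI, fun z hz hz0 => by_contra fun hne => hAX z ?_ hz⟩
  exact mem_erase.2 ⟨hne, mem_cylinderOver.2 (mem_singleton.2 hz0)⟩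

theorem IsRegularBall.exists_isIsotropic (h : IsRegularBall F ι m η) {k : ℕ}
    (hk : k ≤ Fintype.card ι) {J : ℕ} (hJ : Odd J)
    (hμ : 8 * (#(puncturedBall F ι m) : ℝ) ≤ J * ((Fintype.card F - 1) * (Fintype.card F : ℝ) ^ k))
    (hη : 20 * ((Fintype.card F - 1) * η) * (Fintype.card F : ℝ) ^ (7 * J ^ 2) ≤ 1)
    (hX : 4 * (Fintype.card F : ℝ) ^ (2 * J) < (Fintype.card F : ℝ) ^ k) :
    ∃ C : Submodule F (ι → F × F), Module.finrank F C = k ∧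
      IsIsotropic sympForm (C : Set (ι → F × F)) ∧
      ∀ x, (∀ y ∈ C, sympForm x y = 0) → x ≠ 0 → m < hammingNorm x := by
  obtain ⟨r, hr⟩ := Nat.exists_eq_add_of_le hk
  have hpow : (Fintype.card F : ℝ) ^ Fintype.card ι =
      (Fintype.card F : ℝ) ^ k * (Fintype.card F : ℝ) ^ Fintype.card (Fin r) := by
    rw [Fintype.card_fin, ← pow_add, hr]
  obtain ⟨A, hA, hAI, hAX⟩ := h.exists_isSymm_forall_notMem_matrixGraph (κ := Fin r) hJ
    (by rw [hpow, ← mul_assoc, ← mul_assoc, mul_assoc (J : ℝ)]; gcongr) hη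
    (by rw [hpow]; gcongr)
  obtain ⟨C, hC, hiso, hdual⟩ :=
    exists_isIsotropic_of_orthogonal_eq (orthogonal_matrixGraph hA) hAX
  rw [hr, Fintype.card_fin] at hC
  refine ⟨C, Nat.add_right_cancel hC, hiso, fun x hx hx0 => ?_⟩
  obtain ⟨z, hz, rfl⟩ := hdual x hx
  exact lt_hammingNorm_of_disjoint_lowWeightReps hAI hz hx0

end Extraction

section Parameters

variable {q δ ζ : ℝ}

lemma saddle_le {n m : ℝ} (hq : 2 ≤ q) (hδ : δ < 1) (hmn : m < n) (hm : m ≤ δ * n) :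
    m / ((n - m) * (q ^ 2 - 1)) ≤ δ / ((1 - δ) * (q ^ 2 - 1)) := by
  have hq2 : 0 < q ^ 2 - 1 := by nlinarith
  rw [← div_div, ← div_div]
  refine div_le_div_of_nonneg_right ?_ hq2.le
  rw [div_le_div_iff₀ (sub_pos.2 hmn) (sub_pos.2 hδ)]
  linarith

lemma le_saddle {n m : ℝ} (hq : 2 ≤ q) (hδ : 0 < δ) (hm0 : 0 < m) (hmn : m < n)
    (hm : δ * n / 2 ≤ m) : δ / (2 * q ^ 2) ≤ m / ((n - m) * (q ^ 2 - 1)) := by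
  have hq2 : 0 < q ^ 2 - 1 := by nlinarith
  have hn : 0 < n - m := sub_pos.2 hmn
  rw [div_le_div_iff₀ (by positivity) (by positivity)]
  calc δ * ((n - m) * (q ^ 2 - 1)) ≤ δ * (n * q ^ 2) := by gcongr <;> linarith
    _ = δ * n / 2 * (2 * q ^ 2) := by ring
    _ ≤ m * (2 * q ^ 2) := by gcongr

lemma exists_isSaddlePoint (hq : 2 ≤ q) (hδ0 : 0 < δ) (hδ1 : δ < 1 - 1 / q ^ 2) :
    ∃ ζ : ℝ, 0 < ζ ∧ ζ < 1 ∧ ∀ n m : ℕ, 1 ≤ m → δ * n / 2 ≤ m → (m : ℝ) ≤ δ * n →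
      ∃ x, IsSaddlePoint q n m x ζ := by
  have hq2 : 0 < q ^ 2 - 1 := by nlinarith
  have hδ : δ < 1 := hδ1.trans (sub_lt_self _ (by positivity))
  have hδ' : 0 < (1 - δ) * (q ^ 2 - 1) := mul_pos (sub_pos.2 hδ) hq2
  set X := √(δ / ((1 - δ) * (q ^ 2 - 1)))
  have hX0 : 0 < X := Real.sqrt_pos.2 (by positivity)
  have hX1 : X < 1 := by
    rw [Real.sqrt_lt' one_pos, one_pow, div_lt_one hδ']
    rw [lt_sub_iff_add_lt, ← lt_sub_iff_add_lt', div_lt_iff₀ (by positivity)] at hδ1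
    linarith
  have h1X : 0 < 1 - X := sub_pos.2 hX1
  set ζ := max X (max (1 - (1 - X) ^ 2 / q ^ 2) (1 - δ / (2 * q ^ 2) / q ^ 2))
  have hζ1 : ζ < 1 :=
    max_lt hX1 (max_lt (sub_lt_self _ (by positivity)) (sub_lt_self _ (by positivity)))
  refine ⟨ζ, lt_max_of_lt_left hX0, hζ1, fun n m hm1 hmlo hmup => ?_⟩
  have hm0 : (0 : ℝ) < m := mod_cast hm1
  have hn : (0 : ℝ) < n := pos_of_mul_pos_right (hm0.trans_le hmup) hδ0.le
  have hmn : (m : ℝ) < n := hmup.trans_lt (mul_lt_of_lt_one_left hn hδ)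
  have hxX := Real.sqrt_le_sqrt (saddle_le hq hδ hmn hmup)
  have hx := le_saddle hq hδ0 hm0 hmn hmlo
  set y := (m : ℝ) / ((n - m) * (q ^ 2 - 1))
  have hy0 : 0 < y := lt_of_lt_of_le (by positivity) hx
  refine ⟨√y, hm1, mod_cast hmn, Real.sqrt_pos.2 hy0, hxX.trans hX1.le, hζ1.le,
    Real.sq_sqrt hy0.le, hxX.trans (le_max_left _ _), ?_, ?_⟩
  · refine le_trans ?_ ((le_max_left _ _).trans (le_max_right _ _))
    gcongr
  · rw [Real.sq_sqrt hy0.le]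
    refine le_trans ?_ ((le_max_right _ _).trans (le_max_right _ _))
    gcongr

lemma pow_half_mul_pow_le {K : ℝ} (hq : 1 < q) (hζ0 : 0 < ζ) (hζ1 : ζ ≤ 1) {n m J : ℕ}
    (hm : δ * n / 2 ≤ m) (hJ : (J : ℝ) ≤ K * √n) :
    ζ ^ (m / 2) * q ^ (7 * J ^ 2) ≤
      Real.exp (-Real.log ζ / 2) * Real.exp (δ / 4 * Real.log ζ + 7 * K ^ 2 * Real.log q) ^ n := by
  have hm2 : δ * n / 4 - 1 / 2 ≤ ((m / 2 : ℕ) : ℝ) := by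
    have hfloor : (m : ℝ) ≤ 2 * (m / 2 : ℕ) + 1 := mod_cast (by lia : m ≤ 2 * (m / 2) + 1)
    linarith
  have hJ2 : (J : ℝ) ^ 2 ≤ K ^ 2 * n :=
    (pow_le_pow_left₀ (Nat.cast_nonneg _) hJ 2).trans_eq
      (by rw [mul_pow, Real.sq_sqrt (Nat.cast_nonneg n)])
  have hζlog := mul_le_mul_of_nonpos_right hm2 (Real.log_nonpos hζ0.le hζ1)
  have hqlog := mul_le_mul_of_nonneg_right hJ2 (Real.log_pos hq).le
  rw [← Real.exp_nat_mul, ← Real.exp_add, ← Real.log_le_iff_le_exp (by positivity),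
    Real.log_mul (by positivity) (by positivity), Real.log_pow, Real.log_pow]
  push_cast
  linarith

lemma exists_eventually_mul_pow_lt_one (hq : 1 < q) (hδ : 0 < δ) (hζ0 : 0 < ζ) (hζ1 : ζ < 1) :
    ∃ K : ℝ, 0 < K ∧ ∀ C : ℝ, 0 ≤ C → ∀ᶠ n : ℕ in Filter.atTop, ∀ m J : ℕ, δ * n / 2 ≤ m →
      (J : ℝ) ≤ K * √n → C * n ^ 2 * (ζ ^ (m / 2) * q ^ (7 * J ^ 2)) < 1 := by
  have hlogζ : 0 < -Real.log ζ := neg_pos.2 (Real.log_neg hζ0 hζ1)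
  have hlogq : 0 < Real.log q := Real.log_pos hq
  set K := √(δ * -Real.log ζ / (56 * Real.log q))
  have hK : 7 * K ^ 2 * Real.log q = δ / 8 * -Real.log ζ := by
    rw [Real.sq_sqrt (by positivity)]
    field_simp
    ring
  refine ⟨K, Real.sqrt_pos.2 (by positivity), fun C hC => ?_⟩
  set r := Real.exp (δ / 4 * Real.log ζ + 7 * K ^ 2 * Real.log q)
  have hr : |r| < 1 := by
    rw [abs_of_pos (Real.exp_pos _), Real.exp_lt_one_iff, hK]
    linarith [mul_pos hδ hlogζ]
  have hlim := (tendsto_pow_const_mul_const_pow_of_abs_lt_one 2 hr).const_mul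
    (C * Real.exp (-Real.log ζ / 2))
  rw [mul_zero] at hlim
  filter_upwards [hlim.eventually_lt_const one_pos] with n hn m J hm hJ
  refine lt_of_le_of_lt ?_ hn
  calc _ ≤ C * n ^ 2 * (Real.exp (-Real.log ζ / 2) * r ^ n) :=
        mul_le_mul_of_nonneg_left (pow_half_mul_pow_le hq hζ0 hζ1.le hm hJ) (by positivity)
    _ = _ := by ring

lemma exists_odd_natCast_le {y : ℝ} (hy : 1 ≤ y) : ∃ J : ℕ, Odd J ∧ y - 2 < J ∧ (J : ℝ) ≤ y := by
  have hle := Nat.floor_le (by linarith : 0 ≤ (y - 1) / 2)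
  have hlt := Nat.lt_floor_add_one ((y - 1) / 2)
  refine ⟨2 * ⌊(y - 1) / 2⌋₊ + 1, odd_two_mul_add_one _, ?_, ?_⟩ <;>
  · push_cast
    linarith

lemma exists_floor_eq_add_one {y : ℝ} (hy : 1 ≤ y) :
    ∃ m : ℕ, ⌊y⌋₊ = m + 1 ∧ y - 2 < m ∧ (m : ℝ) ≤ y := by
  obtain ⟨m, hm⟩ := Nat.exists_eq_add_of_le' (Nat.one_le_floor_iff y |>.2 hy)
  have hle := Nat.floor_le (by linarith : 0 ≤ y)
  have hlt := Nat.lt_floor_add_one y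
  rw [hm] at hle hlt
  push_cast at hle hlt
  exact ⟨m, hm, by linarith, by linarith⟩

lemma mul_add_one_mul_mul_lt_one {n a y P Q : ℝ} (hq : 1 < q) (hn : 1 ≤ n) (hy : y ≤ 20 * n)
    (ha : 0 ≤ a) (hP0 : 0 ≤ P) (hPQ : P ≤ Q) (h : 80 * (q - 1) * n ^ 2 * (a * Q) < 1) :
    y * ((q - 1) * (2 * (n + 1) * a)) * P < 1 := by
  have hq1 : 0 < q - 1 := sub_pos.2 hq
  calc y * ((q - 1) * (2 * (n + 1) * a)) * P
      ≤ 20 * n * ((q - 1) * (2 * (n + n) * a)) * Q := by gcongr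
    _ = 80 * (q - 1) * n ^ 2 * (a * Q) := by ring
    _ < 1 := h

lemma exists_parameters (hq : 2 ≤ q) (hδ0 : 0 < δ) (hδ1 : δ < 1 - 1 / q ^ 2) :
    ∃ c : ℝ, 0 < c ∧ ∀ᶠ n : ℕ in Filter.atTop, ∃ (m J : ℕ) (x ζ : ℝ), ⌊δ * n⌋₊ = m + 1 ∧
      IsSaddlePoint q n m x ζ ∧ Odd J ∧ 16 * (c * √n) ≤ J ∧
      20 * ((q - 1) * (2 * (n + 1) * ζ ^ (m / 2))) * q ^ (7 * J ^ 2) ≤ 1 ∧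
      8 * (c * √n) * ((q - 1) * (2 * (n + 1) * ζ ^ (m / 2))) * q ^ (2 * J) < 1 := by
  obtain ⟨ζ, hζ0, hζ1, hsaddle⟩ := exists_isSaddlePoint hq hδ0 hδ1
  have hq1 : 1 < q := by linarith
  obtain ⟨K, hK, hdecay⟩ := exists_eventually_mul_pow_lt_one hq1 hδ0 hζ0 hζ1
  have hlin : Filter.Tendsto (fun n : ℕ => δ * n) Filter.atTop Filter.atTop :=
    tendsto_natCast_atTop_atTop.const_mul_atTop hδ0
  have hsqrt : Filter.Tendsto (fun n : ℕ => K * √n) Filter.atTop Filter.atTop :=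
    (Real.tendsto_sqrt_atTop.comp tendsto_natCast_atTop_atTop).const_mul_atTop hK
  refine ⟨min (K / 32) 1, by positivity, ?_⟩
  filter_upwards [hdecay (80 * (q - 1)) (by linarith), hlin.eventually_ge_atTop 4,
    hsqrt.eventually_ge_atTop 4, Filter.eventually_ge_atTop 1] with n hsmall hδn hKn hn
  obtain ⟨m, hm, hmlo, hmup⟩ := exists_floor_eq_add_one (by linarith : 1 ≤ δ * n)
  obtain ⟨J, hJ, hJlo, hJup⟩ := exists_odd_natCast_le (by linarith : 1 ≤ K * √n)
  have hm1 : (1 : ℝ) < m := by linarith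
  obtain ⟨x, hx⟩ := hsaddle n m (by exact_mod_cast hm1.le) (by linarith) hmup
  have hsmall := hsmall m J (by linarith) hJup
  have hn : (1 : ℝ) ≤ n := mod_cast hn
  have hsqrtn : √(n : ℝ) ≤ n := Real.sqrt_le_left (by positivity) |>.2 (by nlinarith)
  have hζ : 0 ≤ ζ ^ (m / 2) := by positivity
  have hpow : q ^ (2 * J) ≤ q ^ (7 * J ^ 2) :=
    pow_le_pow_right₀ (by linarith) (by nlinarith [hJ.pos])
  refine ⟨m, J, x, ζ, hm, hx, hJ, ?_, ?_, ?_⟩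
  · linarith [mul_le_mul_of_nonneg_right (min_le_left (K / 32) 1) (Real.sqrt_nonneg n)]
  · exact (mul_add_one_mul_mul_lt_one hq1 hn (by linarith) hζ (by positivity) le_rfl hsmall).le
  · refine mul_add_one_mul_mul_lt_one hq1 hn ?_ hζ (by positivity) hpow hsmall
    linarith [mul_le_mul_of_nonneg_right (min_le_right (K / 32) 1) (Real.sqrt_nonneg n)]

lemma lt_of_div_lt_mul_pow_div {V T : ℝ} {N k : ℕ} (hq : 2 ≤ q) (hk : k < N) (hV : 0 < V)
    (h : (q ^ (N - k) - 1) / (q - 1) < T * q ^ N / V) : V < 2 * T * ((q - 1) * q ^ k) := by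
  obtain ⟨p, rfl⟩ := Nat.exists_eq_add_of_lt hk
  rw [add_assoc, Nat.add_sub_cancel_left, div_lt_div_iff₀ (by linarith) hV,
    pow_add q k (p + 1)] at h
  have hp : 2 ≤ q ^ (p + 1) := hq.trans (le_self_pow₀ (by linarith) p.succ_ne_zero)
  refine lt_of_mul_lt_mul_left ?_ (by linarith : 0 ≤ q ^ (p + 1))
  calc q ^ (p + 1) * V ≤ 2 * ((q ^ (p + 1) - 1) * V) := by
        linarith [mul_le_mul_of_nonneg_right hp hV.le]
    _ < 2 * (T * (q ^ k * q ^ (p + 1)) * (q - 1)) := by linarith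
    _ = _ := by ring

end Parameters

section Conclusion

variable {F ι : Type*} [Field F] [Fintype F] [Fintype ι] {m : ℕ} {η : ℝ}

lemma cast_card_puncturedBall_le :
    (#(puncturedBall F ι m) : ℝ) ≤ ∑ i ∈ range (m + 1),
      ((Fintype.card ι).choose i : ℝ) * ((Fintype.card F : ℝ) ^ 2 - 1) ^ i := by
  have hsub : puncturedBall F ι m ⊆ ({s | hammingNorm s < m + 1} : Finset (ι → F × F)) :=
    fun s hs => mem_filter.2 ⟨mem_univ _, Nat.lt_succ_of_le (mem_puncturedBall.1 hs).2⟩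
  refine (Nat.cast_le.2 ((card_le_card hsub).trans_eq (card_hammingNorm_lt _))).trans_eq ?_
  simp only [Nat.cast_sum, Nat.cast_mul, Nat.cast_pow, Nat.cast_pred Fintype.card_pos,
    cast_card_prod_self]

lemma IsRegularBall.card_pos (h : IsRegularBall F ι m η) :
    (0 : ℝ) < #(puncturedBall F ι m) :=
  pos_of_mul_pos_right (one_pos.trans_le h.one_le) h.nonneg

lemma IsRegularBall.exists_isIsotropic_of_card_le (h : IsRegularBall F ι m η) {k : ℕ}
    (hk : k ≤ Fintype.card ι) {J : ℕ} (hJ : Odd J) {T : ℝ} (hTJ : 16 * T ≤ J)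
    (hball : #(puncturedBall F ι m) ≤ 2 * T * ((Fintype.card F - 1) * (Fintype.card F : ℝ) ^ k))
    (hη : 20 * ((Fintype.card F - 1) * η) * (Fintype.card F : ℝ) ^ (7 * J ^ 2) ≤ 1)
    (hT : 8 * T * ((Fintype.card F - 1) * η) * (Fintype.card F : ℝ) ^ (2 * J) < 1) :
    ∃ C : Submodule F (ι → F × F), Module.finrank F C = k ∧
      IsIsotropic sympForm (C : Set (ι → F × F)) ∧
      ∀ x, (∀ y ∈ C, sympForm x y = 0) → x ≠ 0 → m < hammingNorm x := by
  have hq := two_le_card F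
  have hq1 : (0 : ℝ) < Fintype.card F - 1 := by linarith
  refine h.exists_isIsotropic hk hJ ?_ hη ?_
  · calc 8 * (#(puncturedBall F ι m) : ℝ)
        ≤ 16 * T * ((Fintype.card F - 1) * (Fintype.card F : ℝ) ^ k) := by linarith
      _ ≤ _ := by gcongr
  · have hlarge := h.one_le.trans (mul_le_mul_of_nonneg_left hball h.nonneg)
    calc 4 * (Fintype.card F : ℝ) ^ (2 * J)
        ≤ 4 * (Fintype.card F : ℝ) ^ (2 * J) *
            (η * (2 * T * ((Fintype.card F - 1) * (Fintype.card F : ℝ) ^ k))) :=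
          le_mul_of_one_le_right (by positivity) hlarge
      _ = 8 * T * ((Fintype.card F - 1) * η) * (Fintype.card F : ℝ) ^ (2 * J) *
            (Fintype.card F : ℝ) ^ k := by ring
      _ < _ := mul_lt_of_lt_one_left (by positivity) hT

end Conclusion

/-- For a prime power `q` (realized as the cardinality of a finite field `F`)
and a constant `δ ∈ (0, 1 - 1/q²)`, there is a constant `c_δ > 0` such that for all
sufficiently large `n`, with `d = ⌊δn⌋`: if `1 ≤ k ≤ n` satisfies
`(q^{2n-k} - 1)/(q - 1) < c_δ·√n·q^{2n} / ∑_{i=0}^{d-1} C(n,i)(q²-1)^i`, then there exists a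
`k`-dimensional symplectic self-orthogonal subspace `C` of `F^{2n}` such that every nonzero
vector of the symplectic dual `C^{⊥_S}` has symplectic weight at least `d`. -/
theorem quantum_gv_bound_sqrt_improvement
    (q : ℕ) (F : Type) [Field F] [Fintype F] [DecidableEq F] (hF : Fintype.card F = q)
    (δ : ℝ) (hδ0 : 0 < δ) (hδ1 : δ < 1 - 1 / (q : ℝ) ^ 2) :
    ∃ c : ℝ, 0 < c ∧ ∃ N : ℕ, ∀ n : ℕ, N ≤ n → ∀ k : ℕ, 1 ≤ k → k ≤ n →
      ((q : ℝ) ^ (2 * n - k) - 1) / ((q : ℝ) - 1) <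
        c * Real.sqrt n * (q : ℝ) ^ (2 * n) /
          (∑ i ∈ Finset.range ⌊δ * (n : ℝ)⌋₊, (n.choose i : ℝ) * ((q : ℝ) ^ 2 - 1) ^ i) →
      ∃ C : Submodule F (Fin n → F × F), Module.finrank F C = k ∧
        (∀ x ∈ C, ∀ y ∈ C, sympInner x y = 0) ∧
        ∀ x : Fin n → F × F, (∀ c' ∈ C, sympInner x c' = 0) → x ≠ 0 →
          ⌊δ * (n : ℝ)⌋₊ ≤ sympWt x := by
  subst hF
  have hq := two_le_card F
  obtain ⟨c, hc, hparams⟩ := exists_parameters hq hδ0 hδ1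
  obtain ⟨N, hN⟩ := Filter.eventually_atTop.1 hparams
  refine ⟨c, hc, N, fun n hn k _ hkn hvol => ?_⟩
  obtain ⟨m, J, x, ζ, hm, hsaddle, hJ, hcJ, hη, hT⟩ := hN n hn
  have hregular : IsRegularBall F (Fin n) m (2 * (n + 1) * ζ ^ (m / 2)) := by
    simpa only [Fintype.card_fin] using IsSaddlePoint.isRegularBall (F := F) (ι := Fin n)
      (by simpa only [Fintype.card_fin] using hsaddle)
  have hball := cast_card_puncturedBall_le (F := F) (ι := Fin n) (m := m)
  rw [hm] at hvol ⊢
  rw [Fintype.card_fin] at hball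
  have hV := hregular.card_pos.trans_le hball
  have hle := lt_of_div_lt_mul_pow_div hq (by have := hsaddle.lt; lia) hV hvol
  obtain ⟨C, hC, hiso, hdual⟩ := hregular.exists_isIsotropic_of_card_le
    (hkn.trans_eq (Fintype.card_fin n).symm) hJ hcJ (hball.trans hle.le) hη hT
  simp only [sympForm_eq_sum, IsIsotropic] at hiso hdual
  refine ⟨C, hC, hiso, fun x hx hx0 => (Nat.succ_le_of_lt (hdual x hx hx0)).trans_eq ?_⟩
  rw [sympWt]
  congr!
end

section
/- Let q be a prime power and let δ ∈ (0, 1 − 1/q) be a constant. There exists a constant h_δ ∈ (0,1), depending only on q and δ, such that for all sufficiently large n the following holds with d − 1 = ⌊δn⌋: let G be a uniformly random k × n matrix over 𝔽_q, and let x_1, …, x_r ∈ 𝔽_q^k (with r ≤ n) be nonzero vectors that are pairwise non-proportional (no one is a scalar multiple of another), such that {x_1, …, x_s} is a maximal linearly independent subset of {x_1, …, x_r} with s < r. Then the probability that wt(x_i G) ≤ d − 1 for every i ∈ {1,…,r} is at most (Vol_q(n, d−1)/q^n)^s · 2^{−h_δ n}. -/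
open Finset
open scoped Classical

/-!
Choose a dependent vector `y = ∑ aᵢ xᵢ` among the `xⱼ`. Non-proportionality forces two nonzero
coefficients `a`, `b`, and linear independence makes the `xᵢ G` independent uniform words. After
conditioning on all the other words, it remains to bound the number of pairs `(u, v)` of words of
weight at most `ρ = ⌊δn⌋` for which `a u + b v + z` also has weight at most `ρ`, by
`Vol(n, ρ)² · 2^{-hn}`, uniformly in `z`.

Let the coordinates of `u` and `v` be independent, equal to `0` with probability `1 - δ` and
otherwise uniform. Every word of weight at most `ρ` then has probability at least `1 / Vol(n, ρ)` up
to a factor linear in `n`, because a binomial distribution has its mode at its mean. By the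
rearrangement inequality, a coordinate of `a u + b v + z` vanishes with probability at most
`(1 - δ)² + δ² / (q - 1) < 1 - δ`. The expected weight hence exceeds `δn` by a linear amount, and
Chernoff's bound makes the probability that `a u + b v + z` has weight at most `ρ` exponentially
small.
-/

section HammingBall

variable {ι α : Type*} [Fintype ι] [Fintype α] [Zero α] [DecidableEq ι] [DecidableEq α]

/-- The Hamming ball of radius `r` around `0` in `ι → α`. -/
def hammingBall (ι α : Type*) [Fintype ι] [Fintype α] [Zero α] [DecidableEq ι] [DecidableEq α]
    (r : ℕ) : Finset (ι → α) := {y | hammingNorm y ≤ r}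

@[simp]
lemma mem_hammingBall {r : ℕ} {y : ι → α} : y ∈ hammingBall ι α r ↔ hammingNorm y ≤ r := by
  simp [hammingBall]

/-- The volume `Vol_q(n, r)` of a Hamming ball. The alphabet size `q` is a real number here, so that
`q - 1` is not a truncated subtraction. -/
def hammingVol (q : ℝ) (n r : ℕ) : ℝ := ∑ i ∈ range (r + 1), (n.choose i : ℝ) * (q - 1) ^ i

lemma choose_mul_pow_le_hammingVol {q : ℝ} (hq : 1 ≤ q) (n r : ℕ) :
    (n.choose r : ℝ) * (q - 1) ^ r ≤ hammingVol q n r :=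
  single_le_sum (f := fun i ↦ (n.choose i : ℝ) * (q - 1) ^ i)
    (fun i _ ↦ mul_nonneg (Nat.cast_nonneg _) (pow_nonneg (sub_nonneg.2 hq) i))
    (self_mem_range_succ r)

lemma card_filter_support_eq (S : Finset ι) :
    #{y : ι → α | ({i | y i ≠ 0} : Finset ι) = S} = (Fintype.card α - 1) ^ #S := by
  have h : ({y : ι → α | ({i | y i ≠ 0} : Finset ι) = S} : Finset (ι → α)) =
      Fintype.piFinset fun i ↦ if i ∈ S then {0}ᶜ else {0} := by
    ext y
    simp only [mem_filter_univ, Finset.ext_iff, Fintype.mem_piFinset]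
    exact forall_congr' fun i ↦ by by_cases hi : i ∈ S <;> simp [hi]
  have hcard (i : ι) : #(if i ∈ S then {0}ᶜ else {0} : Finset α) =
      if i ∈ S then Fintype.card α - 1 else 1 := by
    split_ifs <;> simp [card_compl]
  simp [h, hcard]

lemma card_filter_hammingNorm_eq (i : ℕ) :
    #{y : ι → α | hammingNorm y = i} =
      (Fintype.card ι).choose i * (Fintype.card α - 1) ^ i := by
  have h := sum_card_fiberwise_eq_card_filter (univ : Finset (ι → α)) (powersetCard i univ)
    fun y ↦ ({j | y j ≠ 0} : Finset ι)
  rw [sum_congr rfl fun S hS ↦ by rw [card_filter_support_eq, (mem_powersetCard.1 hS).2]] at h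
  simpa [mem_powersetCard, hammingNorm] using h.symm

lemma card_hammingBall (r : ℕ) :
    (#(hammingBall ι α r) : ℝ) = hammingVol (Fintype.card α) (Fintype.card ι) r := by
  have h := sum_card_fiberwise_eq_card_filter (univ : Finset (ι → α)) (range (r + 1)) hammingNorm
  simp only [card_filter_hammingNorm_eq, mem_range, Nat.lt_succ_iff] at h
  rw [hammingBall, ← h, hammingVol]
  push_cast [Nat.cast_sub (Fintype.card_pos (α := α))]
  rfl

end HammingBall

lemma prod_ite_eq_pow_hammingNorm {ι α M : Type*} [Fintype ι] [Zero α] [DecidableEq α]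
    [CommMonoid M] (t : M) (y : ι → α) :
    ∏ i, (if y i = 0 then 1 else t) = t ^ hammingNorm y := by
  simp [prod_ite, hammingNorm]

section BinomialMode

variable {n i : ℕ} {g : ℝ}

lemma choose_succ_mul_pow_succ (n i : ℕ) (g : ℝ) :
    (i + 1) * (n.choose (i + 1) * g ^ (i + 1)) = (n - i) * g * (n.choose i * g ^ i) := by
  have h : (n.choose (i + 1) : ℝ) * (i + 1) = n.choose i * (n - i) := by
    rcases le_or_gt i n with hi | hi
    · rw [← Nat.cast_sub hi]
      exact_mod_cast Nat.choose_succ_right_eq n i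
    · simp [Nat.choose_eq_zero_of_lt hi, Nat.choose_eq_zero_of_lt (hi.trans i.lt_succ_self)]
  linear_combination g ^ (i + 1) * h

lemma choose_mul_pow_le_succ (hg : 0 ≤ g) (h : i + 1 ≤ (n - i) * g) :
    n.choose i * g ^ i ≤ n.choose (i + 1) * g ^ (i + 1) := by
  have hi : (0 : ℝ) < i + 1 := by positivity
  refine le_of_mul_le_mul_left ?_ hi
  rw [choose_succ_mul_pow_succ]
  gcongr

lemma choose_succ_mul_pow_succ_le {c : ℝ} (hg : 0 ≤ g) (h : (n - i) * g ≤ c * (i + 1)) :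
    n.choose (i + 1) * g ^ (i + 1) ≤ c * (n.choose i * g ^ i) := by
  have hi : (0 : ℝ) < i + 1 := by positivity
  refine le_of_mul_le_mul_left ?_ hi
  rw [choose_succ_mul_pow_succ]
  calc (n - i) * g * (n.choose i * g ^ i) ≤ c * (i + 1) * (n.choose i * g ^ i) := by gcongr
    _ = (i + 1) * (c * (n.choose i * g ^ i)) := by ring

variable {m : ℕ}

lemma choose_mul_pow_le_choose_mul_pow (hg : 0 ≤ g) (hm : m ≤ (n - m) * g)
    (hm' : (n - (m + 1)) * g ≤ m + 1) (i : ℕ) :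
    n.choose i * g ^ i ≤ (1 + g) * (n.choose m * g ^ m) := by
  have hm₀ : 0 ≤ n.choose m * g ^ m := by positivity
  rcases le_or_gt i m with hi | hi
  · have hmono : n.choose i * g ^ i ≤ n.choose m * g ^ m := by
      induction hi using Nat.decreasingInduction with
      | self => exact le_rfl
      | of_succ k hk ih =>
        have hk' : (k : ℝ) + 1 ≤ m := by exact_mod_cast hk
        exact (choose_mul_pow_le_succ hg (by nlinarith)).trans ih
    nlinarith
  · induction i, hi using Nat.le_induction with
    | base => exact choose_succ_mul_pow_succ_le hg (by nlinarith)
    | succ k hk ih =>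
      have hk' : (m : ℝ) + 1 ≤ k := by exact_mod_cast hk
      simpa using (choose_succ_mul_pow_succ_le (c := 1) hg (by nlinarith)).trans
        ((one_mul _).trans_le ih)

/-- The hypotheses say that `m` is, up to one step, a mode of the binomial distribution with `n`
trials and odds `g`. -/
lemma one_add_pow_le_choose_mul_pow (hg : 0 ≤ g) (hm : m ≤ (n - m) * g)
    (hm' : (n - (m + 1)) * g ≤ m + 1) :
    (1 + g) ^ n ≤ (n + 1) * ((1 + g) * (n.choose m * g ^ m)) := by
  rw [add_comm, add_pow, add_comm g]
  calc ∑ i ∈ range (n + 1), g ^ i * 1 ^ (n - i) * n.choose i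
      ≤ ∑ _i ∈ range (n + 1), (1 + g) * (n.choose m * g ^ m) := by
        refine sum_le_sum fun i _ ↦ ?_
        simpa [mul_comm] using choose_mul_pow_le_choose_mul_pow hg hm hm' i
    _ = (n + 1) * ((1 + g) * (n.choose m * g ^ m)) := by simp

end BinomialMode

section SymmetricNoise

lemma div_card_sub_one_lt {α : Type*} [Fintype α] [Nontrivial α] {δ : ℝ}
    (hδ : δ < 1 - 1 / Fintype.card α) :
    δ / (Fintype.card α - 1) < 1 - δ := by
  have hα : (1 : ℝ) < Fintype.card α := by exact_mod_cast Fintype.one_lt_card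
  rw [div_lt_iff₀ (sub_pos.2 hα)]
  rw [lt_sub_comm, div_lt_iff₀ (by linarith)] at hδ
  linarith

variable {α : Type*} [Fintype α] [Zero α] [DecidableEq α] {δ : ℝ}

/-- The error distribution of the symmetric channel with crossover probability `δ` over the alphabet
`α`: the mass `δ` is spread evenly over the nonzero symbols. -/
noncomputable def symmetricNoise (α : Type*) [Fintype α] [Zero α] [DecidableEq α] (δ : ℝ) (x : α) :
    ℝ := if x = 0 then 1 - δ else δ / (Fintype.card α - 1)

lemma symmetricNoise_nonneg (hδ0 : 0 ≤ δ) (hδ1 : δ ≤ 1) (x : α) : 0 ≤ symmetricNoise α δ x := by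
  have hα : (1 : ℝ) ≤ Fintype.card α := by exact_mod_cast Fintype.card_pos
  unfold symmetricNoise
  split_ifs
  · exact sub_nonneg.2 hδ1
  · exact div_nonneg hδ0 (sub_nonneg.2 hα)

lemma sum_symmetricNoise_pow (k : ℕ) :
    ∑ x, symmetricNoise α δ x ^ k =
      (1 - δ) ^ k + (Fintype.card α - 1) * (δ / (Fintype.card α - 1)) ^ k := by
  rw [← add_sum_erase univ _ (mem_univ (0 : α)), sum_congr rfl fun x hx ↦ by
    rw [symmetricNoise, if_neg (ne_of_mem_erase hx)], sum_const, nsmul_eq_mul,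
    card_erase_of_mem (mem_univ _), card_univ, Nat.cast_sub Fintype.card_pos]
  simp [symmetricNoise]

variable [Nontrivial α]

lemma sum_symmetricNoise : ∑ x, symmetricNoise α δ x = 1 := by
  have hα : (1 : ℝ) < Fintype.card α := by exact_mod_cast Fintype.one_lt_card
  have h := sum_symmetricNoise_pow (α := α) (δ := δ) 1
  simp only [pow_one, mul_div_cancel₀ δ (sub_pos.2 hα).ne'] at h
  rw [h, sub_add_cancel]

lemma sum_symmetricNoise_sq_lt (hδ0 : 0 < δ) (hδ1 : δ < 1 - 1 / Fintype.card α) :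
    ∑ x, symmetricNoise α δ x ^ 2 < 1 - δ := by
  have hα : (1 : ℝ) < Fintype.card α := by exact_mod_cast Fintype.one_lt_card
  have h : ∑ x, symmetricNoise α δ x ^ 2 = (1 - δ) ^ 2 + δ * (δ / (Fintype.card α - 1)) := by
    have := (sub_pos.2 hα).ne'
    rw [sum_symmetricNoise_pow]
    field_simp
  rw [h]
  nlinarith [div_card_sub_one_lt hδ1]

lemma pow_mul_pow_le_prod_symmetricNoise {ι : Type*} [Fintype ι] (hδ0 : 0 ≤ δ)
    (hδ1 : δ < 1 - 1 / Fintype.card α) {r : ℕ} {y : ι → α} (hy : hammingNorm y ≤ r) :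
    (1 - δ) ^ Fintype.card ι * (δ / (1 - δ) / (Fintype.card α - 1)) ^ r ≤
      ∏ i, symmetricNoise α δ (y i) := by
  have hα : (1 : ℝ) < Fintype.card α := by exact_mod_cast Fintype.one_lt_card
  have hδ := div_card_sub_one_lt hδ1
  have hδα : 0 ≤ δ / (Fintype.card α - 1) := div_nonneg hδ0 (sub_pos.2 hα).le
  have hδ' : 0 < 1 - δ := hδα.trans_lt hδ
  rw [div_right_comm]
  set l := δ / (Fintype.card α - 1) / (1 - δ) with hl
  have hnoise (x : α) : symmetricNoise α δ x = (1 - δ) * if x = 0 then 1 else l := by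
    rw [symmetricNoise, hl]
    split_ifs <;> field_simp
  simp only [hnoise, prod_mul_distrib, prod_const, card_univ, prod_ite_eq_pow_hammingNorm]
  exact mul_le_mul_of_nonneg_left (pow_le_pow_of_le_one (div_nonneg hδα hδ'.le)
    ((div_le_one hδ').2 hδ.le) hy) (pow_nonneg hδ'.le _)

end SymmetricNoise

lemma one_le_mul_hammingVol_floor {q δ : ℝ} (hq : 1 < q) (hδ0 : 0 ≤ δ) (hδ1 : δ < 1) (n : ℕ) :
    1 ≤ (n + 1) / (1 - δ) *
      ((1 - δ) ^ n * (δ / (1 - δ) / (q - 1)) ^ ⌊δ * n⌋₊ * hammingVol q n ⌊δ * n⌋₊) := by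
  have hδ : 0 < 1 - δ := sub_pos.2 hδ1
  have hq' : 0 < q - 1 := sub_pos.2 hq
  set m := ⌊δ * n⌋₊
  set g := δ / (1 - δ) with hg
  have hg0 : 0 ≤ g := div_nonneg hδ0 hδ.le
  have h1g : 1 + g = (1 - δ)⁻¹ := by
    rw [hg]
    field_simp
    ring
  have hm : m ≤ (n - m) * g := by
    have := Nat.floor_le (mul_nonneg hδ0 n.cast_nonneg)
    rw [hg, ← mul_div_assoc, le_div_iff₀ hδ]
    linarith
  have hm' : (n - (m + 1)) * g ≤ m + 1 := by
    have := Nat.lt_floor_add_one (δ * n)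
    rw [hg, ← mul_div_assoc, div_le_iff₀ hδ]
    linarith
  have hgm : (g / (q - 1)) ^ m * (q - 1) ^ m = g ^ m := by rw [← mul_pow, div_mul_cancel₀ g hq'.ne']
  have hmode := one_add_pow_le_choose_mul_pow hg0 hm hm'
  rw [h1g, inv_pow] at hmode
  calc (1 : ℝ) = (1 - δ) ^ n * ((1 - δ) ^ n)⁻¹ := (mul_inv_cancel₀ (pow_ne_zero n hδ.ne')).symm
    _ ≤ (1 - δ) ^ n * ((n + 1) * ((1 - δ)⁻¹ * (n.choose m * g ^ m))) := by gcongr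
    _ = (n + 1) / (1 - δ) * ((1 - δ) ^ n * (g / (q - 1)) ^ m * (n.choose m * (q - 1) ^ m)) := by
      rw [← hgm]
      ring
    _ ≤ (n + 1) / (1 - δ) * ((1 - δ) ^ n * (g / (q - 1)) ^ m * hammingVol q n m) := by
      gcongr
      exact choose_mul_pow_le_hammingVol hq.le n m

section Chernoff

lemma sum_prod_filter_hammingNorm_le {ι α β : Type*} [Fintype ι] [DecidableEq ι] [Fintype α]
    [Zero β] [DecidableEq β] {w : α → ℝ} (hw : ∀ a, 0 ≤ w a) {t : ℝ} (ht0 : 0 < t) (ht1 : t ≤ 1)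
    {f : ι → α → β} {B : ℝ} (hB : ∀ i, ∑ a, w a * (if f i a = 0 then 1 else t) ≤ B)
    {δ : ℝ} {r : ℕ} (hr : r ≤ δ * Fintype.card ι) :
    ∑ p : ι → α with hammingNorm (fun i ↦ f i (p i)) ≤ r, ∏ i, w (p i) ≤
      (B / t ^ δ) ^ Fintype.card ι := by
  have hite (i : ι) (a : α) : 0 ≤ w a * (if f i a = 0 then 1 else t) :=
    mul_nonneg (hw a) (by split_ifs <;> positivity)
  rw [div_pow, le_div_iff₀ (by positivity), sum_mul]
  calc ∑ p : ι → α with hammingNorm (fun i ↦ f i (p i)) ≤ r,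
        (∏ i, w (p i)) * (t ^ δ) ^ Fintype.card ι
      ≤ ∑ p : ι → α with hammingNorm (fun i ↦ f i (p i)) ≤ r,
          ∏ i, w (p i) * (if f i (p i) = 0 then 1 else t) := by
        refine sum_le_sum fun p hp ↦ ?_
        have hp' : (hammingNorm (fun i ↦ f i (p i)) : ℝ) ≤ δ * Fintype.card ι :=
          (Nat.cast_le.2 (mem_filter.1 hp).2).trans hr
        rw [prod_mul_distrib, ← Real.rpow_mul_natCast ht0.le]
        refine mul_le_mul_of_nonneg_left ?_ (prod_nonneg fun i _ ↦ hw _)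
        calc t ^ (δ * Fintype.card ι) ≤ t ^ (hammingNorm (fun i ↦ f i (p i)) : ℝ) :=
              Real.rpow_le_rpow_of_exponent_ge ht0 ht1 hp'
          _ = ∏ i, (if f i (p i) = 0 then 1 else t) := by
            rw [Real.rpow_natCast, ← prod_ite_eq_pow_hammingNorm]
    _ ≤ ∑ p : ι → α, ∏ i, w (p i) * (if f i (p i) = 0 then 1 else t) :=
        sum_le_sum_of_subset_of_nonneg (filter_subset _ _) fun p _ _ ↦
          prod_nonneg fun i _ ↦ hite i (p i)
    _ = ∏ i, ∑ a, w a * (if f i a = 0 then 1 else t) := by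
        rw [Fintype.prod_sum]
    _ ≤ ∏ _i : ι, B := prod_le_prod (fun i _ ↦ sum_nonneg fun a _ ↦ hite i a) fun i _ ↦ hB i
    _ = B ^ Fintype.card ι := by simp

lemma exists_add_mul_lt_rpow {δ c : ℝ} (hδ0 : 0 < δ) (hδ1 : δ < 1) (hc : c < 1 - δ) :
    ∃ t ∈ Set.Ioo (0 : ℝ) 1, t + (1 - t) * c < t ^ δ := by
  set ε := 1 - δ - c
  have hε0 : 0 < ε := sub_pos.2 hc
  have hbern : (1 + ε) ^ δ ≤ 1 + δ * ε :=
    rpow_one_add_le_one_add_mul_self (by linarith) hδ0.le hδ1.le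
  refine ⟨(1 + ε)⁻¹, ⟨by positivity, inv_lt_one_of_one_lt₀ (by linarith)⟩, ?_⟩
  calc (1 + ε)⁻¹ + (1 - (1 + ε)⁻¹) * c = (1 + ε * c) / (1 + ε) := by field_simp; ring
    _ < (1 + δ * ε)⁻¹ := by
      rw [← one_div, div_lt_div_iff₀ (by positivity) (by positivity)]
      have hδc : δ * c < 1 := by nlinarith
      nlinarith [mul_pos hε0 (mul_pos hε0 (sub_pos.2 hδc))]
    _ ≤ ((1 + ε) ^ δ)⁻¹ := by gcongr
    _ = (1 + ε)⁻¹ ^ δ := (Real.inv_rpow (by positivity) δ).symm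

lemma exists_mul_pow_le_two_rpow_neg {θ : ℝ} (hθ0 : 0 < θ) (hθ1 : θ < 1) (C : ℝ) (k : ℕ) :
    ∃ h ∈ Set.Ioo (0 : ℝ) 1, ∃ N : ℕ, ∀ n ≥ N,
      C * (n + 1) ^ k * θ ^ n ≤ (2 : ℝ) ^ (-(h * n)) := by
  obtain ⟨ψ, hψ, hψ1⟩ := exists_between (max_lt hθ1 one_half_lt_one)
  obtain ⟨hθψ, hψ2⟩ := max_lt_iff.1 hψ
  have hψ0 : 0 < ψ := hθ0.trans hθψ
  have hrpow (n : ℕ) : (2 : ℝ) ^ (-(-Real.logb 2 ψ * n)) = ψ ^ n := by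
    rw [neg_mul, neg_neg, Real.rpow_mul_natCast two_pos.le,
      Real.rpow_logb two_pos one_lt_two.ne' hψ0]
  have hlim : Filter.Tendsto (fun n : ℕ ↦ C / (θ / ψ) * (((n + 1 : ℕ) : ℝ) ^ k * (θ / ψ) ^ (n + 1)))
      Filter.atTop (nhds 0) := by
    have hθψ' : |θ / ψ| < 1 := by rwa [abs_of_pos (by positivity), div_lt_one hψ0]
    simpa using ((tendsto_pow_const_mul_const_pow_of_abs_lt_one k hθψ').comp
      (Filter.tendsto_add_atTop_nat 1)).const_mul (C / (θ / ψ))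
  obtain ⟨N, hN⟩ := Filter.eventually_atTop.1 (hlim.eventually_le_const one_pos)
  refine ⟨-Real.logb 2 ψ, ⟨neg_pos.2 (Real.logb_neg one_lt_two hψ0 hψ1), ?_⟩, N, fun n hn ↦ ?_⟩
  · rw [neg_lt, Real.lt_logb_iff_rpow_lt one_lt_two hψ0, Real.rpow_neg_one]
    simpa using hψ2
  · have hn' := hN n hn
    rw [hrpow, ← div_le_one (by positivity)]
    convert hn' using 1
    push_cast
    rw [div_pow, pow_succ, pow_succ]
    field_simp

end Chernoff

section LowWeightPairs

/-- The pairs `(u, v)` of words of weight at most `r` for which `a u + b v + z` has weight at most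
`r` as well. A pair of words is encoded as one word over `F × F`, so that sums of products over
coordinates factor. -/
def lowWeightPairs {ι F : Type*} [Fintype ι] [DecidableEq ι] [Semiring F] [Fintype F]
    [DecidableEq F] (a b : F) (z : ι → F) (r : ℕ) : Finset (ι → F × F) :=
  {p | hammingNorm (fun i ↦ (p i).1) ≤ r ∧ hammingNorm (fun i ↦ (p i).2) ≤ r ∧
    hammingNorm (fun i ↦ a * (p i).1 + b * (p i).2 + z i) ≤ r}

@[simp]
lemma mem_lowWeightPairs {ι F : Type*} [Fintype ι] [DecidableEq ι] [Semiring F] [Fintype F]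
    [DecidableEq F] {a b : F} {z : ι → F} {r : ℕ} {p : ι → F × F} :
    p ∈ lowWeightPairs a b z r ↔
      hammingNorm (fun i ↦ (p i).1) ≤ r ∧ hammingNorm (fun i ↦ (p i).2) ≤ r ∧
        hammingNorm (fun i ↦ a * (p i).1 + b * (p i).2 + z i) ≤ r := by
  simp [lowWeightPairs]

variable {F : Type*} [Field F] [Fintype F] [DecidableEq F] {a b : F}

lemma sum_filter_linear_eq_zero_le (ha : a ≠ 0) (hb : b ≠ 0) (c : F) (w : F → ℝ) :
    ∑ p : F × F with a * p.1 + b * p.2 + c = 0, w p.1 * w p.2 ≤ ∑ x, w x ^ 2 := by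
  let σ : Equiv.Perm F :=
    ((Equiv.mulLeft₀ a ha).trans (Equiv.addRight c)).trans (Equiv.mulLeft₀ (-b⁻¹) (by simpa))
  have hσ (x y : F) : a * x + b * y + c = 0 ↔ y = σ x := by
    have hσx : σ x = -b⁻¹ * (a * x + c) := rfl
    rw [hσx]
    field_simp
    grind
  calc ∑ p : F × F with a * p.1 + b * p.2 + c = 0, w p.1 * w p.2 = ∑ x, w x * w (σ x) := by
        simp [sum_filter, Fintype.sum_prod_type, hσ]
    _ ≤ ∑ x, w x * w x := (monovary_self w).sum_mul_comp_perm_le_sum_mul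
    _ = ∑ x, w x ^ 2 := by simp only [sq]

lemma sum_mul_ite_linear_eq_zero_le (ha : a ≠ 0) (hb : b ≠ 0) (c : F) {w : F → ℝ}
    (hw : ∑ x, w x = 1) {t : ℝ} (ht : t ≤ 1) :
    ∑ p : F × F, w p.1 * w p.2 * (if a * p.1 + b * p.2 + c = 0 then 1 else t) ≤
      t + (1 - t) * ∑ x, w x ^ 2 := by
  have hprod : ∑ p : F × F, w p.1 * w p.2 = 1 := by
    rw [Fintype.sum_prod_type, ← sum_mul_sum, hw, one_mul]
  calc ∑ p : F × F, w p.1 * w p.2 * (if a * p.1 + b * p.2 + c = 0 then 1 else t)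
      = t * ∑ p : F × F, w p.1 * w p.2 +
          (1 - t) * ∑ p : F × F with a * p.1 + b * p.2 + c = 0, w p.1 * w p.2 := by
        rw [sum_filter, mul_sum, mul_sum, ← sum_add_distrib]
        refine sum_congr rfl fun p _ ↦ ?_
        split_ifs <;> ring
    _ ≤ t + (1 - t) * ∑ x, w x ^ 2 := by
        rw [hprod, mul_one]
        have := sub_nonneg.2 ht
        gcongr
        exact sum_filter_linear_eq_zero_le ha hb c w

variable {δ : ℝ}

lemma card_lowWeightPairs_mul_le {ι : Type*} [Fintype ι] [DecidableEq ι] (ha : a ≠ 0) (hb : b ≠ 0)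
    (z : ι → F) (hδ0 : 0 ≤ δ) (hδ1 : δ < 1 - 1 / Fintype.card F) {t : ℝ} (ht0 : 0 < t) (ht1 : t ≤ 1)
    {r : ℕ} (hr : r ≤ δ * Fintype.card ι) :
    #(lowWeightPairs a b z r) *
        ((1 - δ) ^ Fintype.card ι * (δ / (1 - δ) / (Fintype.card F - 1)) ^ r) ^ 2 ≤
      ((t + (1 - t) * ∑ x, symmetricNoise F δ x ^ 2) / t ^ δ) ^ Fintype.card ι := by
  have hF : (1 : ℝ) < Fintype.card F := by exact_mod_cast Fintype.one_lt_card
  have hδ : 0 < 1 - δ := (div_nonneg hδ0 (sub_pos.2 hF).le).trans_lt (div_card_sub_one_lt hδ1)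
  have hw := symmetricNoise_nonneg (α := F) hδ0 (sub_pos.1 hδ).le
  set m := (1 - δ) ^ Fintype.card ι * (δ / (1 - δ) / (Fintype.card F - 1)) ^ r
  have hm0 : 0 ≤ m := mul_nonneg (pow_nonneg hδ.le _)
    (pow_nonneg (div_nonneg (div_nonneg hδ0 hδ.le) (sub_pos.2 hF).le) _)
  calc #(lowWeightPairs a b z r) * m ^ 2
      = ∑ _p ∈ lowWeightPairs a b z r, m * m := by simp [sq]
    _ ≤ ∑ p ∈ lowWeightPairs a b z r,
          ∏ i, symmetricNoise F δ (p i).1 * symmetricNoise F δ (p i).2 := by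
        refine sum_le_sum fun p hp ↦ ?_
        obtain ⟨hu, hv, -⟩ := mem_lowWeightPairs.1 hp
        rw [prod_mul_distrib]
        exact mul_le_mul (pow_mul_pow_le_prod_symmetricNoise hδ0 hδ1 hu)
          (pow_mul_pow_le_prod_symmetricNoise hδ0 hδ1 hv) hm0 (prod_nonneg fun i _ ↦ hw _)
    _ ≤ ∑ p : ι → F × F with hammingNorm (fun i ↦ a * (p i).1 + b * (p i).2 + z i) ≤ r,
          ∏ i, symmetricNoise F δ (p i).1 * symmetricNoise F δ (p i).2 := by
        refine sum_le_sum_of_subset_of_nonneg (fun p hp ↦ ?_) fun p _ _ ↦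
          prod_nonneg fun i _ ↦ mul_nonneg (hw _) (hw _)
        exact mem_filter.2 ⟨mem_univ p, (mem_lowWeightPairs.1 hp).2.2⟩
    _ ≤ ((t + (1 - t) * ∑ x, symmetricNoise F δ x ^ 2) / t ^ δ) ^ Fintype.card ι :=
        sum_prod_filter_hammingNorm_le (f := fun i (p : F × F) ↦ a * p.1 + b * p.2 + z i)
          (fun p ↦ mul_nonneg (hw p.1) (hw p.2)) ht0 ht1
          (fun i ↦ sum_mul_ite_linear_eq_zero_le ha hb (z i) sum_symmetricNoise ht1) hr

theorem exists_card_lowWeightPairs_le (hδ0 : 0 < δ) (hδ1 : δ < 1 - 1 / Fintype.card F) :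
    ∃ h ∈ Set.Ioo (0 : ℝ) 1, ∃ N : ℕ, ∀ n ≥ N, ∀ (a b : F) (z : Fin n → F), a ≠ 0 → b ≠ 0 →
      (#(lowWeightPairs a b z ⌊δ * n⌋₊) : ℝ) ≤
        hammingVol (Fintype.card F) n ⌊δ * n⌋₊ ^ 2 * (2 : ℝ) ^ (-(h * n)) := by
  have hF : (1 : ℝ) < Fintype.card F := by exact_mod_cast Fintype.one_lt_card
  have hδ : δ < 1 := hδ1.trans (sub_lt_self 1 (by positivity))
  set c := ∑ x, symmetricNoise F δ x ^ 2
  obtain ⟨t, ⟨ht0, ht1⟩, ht⟩ := exists_add_mul_lt_rpow hδ0 hδ (sum_symmetricNoise_sq_lt hδ0 hδ1)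
  have hc : 0 ≤ (1 - t) * c := mul_nonneg (sub_pos.2 ht1).le (sum_nonneg fun x _ ↦ sq_nonneg _)
  have htδ : 0 < t ^ δ := Real.rpow_pos_of_pos ht0 δ
  set θ := (t + (1 - t) * c) / t ^ δ
  obtain ⟨h, hh, N, hN⟩ := exists_mul_pow_le_two_rpow_neg
    (div_pos (add_pos_of_pos_of_nonneg ht0 hc) htδ)
    ((div_lt_one htδ).2 ht) ((1 - δ)⁻¹ ^ 2) 2
  refine ⟨h, hh, N, fun n hn a b z ha hb ↦ ?_⟩
  set ρ := ⌊δ * n⌋₊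
  set V := hammingVol (Fintype.card F) n ρ
  set m := (1 - δ) ^ n * (δ / (1 - δ) / (Fintype.card F - 1)) ^ ρ
  have hpairs : #(lowWeightPairs a b z ρ) * m ^ 2 ≤ θ ^ n := by
    simpa using card_lowWeightPairs_mul_le ha hb z hδ0.le hδ1 ht0 ht1.le
      (by simpa using Nat.floor_le (by positivity : 0 ≤ δ * n))
  have hvol : 1 ≤ (n + 1) / (1 - δ) * (m * V) := one_le_mul_hammingVol_floor hF hδ0.le hδ n
  calc (#(lowWeightPairs a b z ρ) : ℝ)
      ≤ #(lowWeightPairs a b z ρ) * ((n + 1) / (1 - δ) * (m * V)) ^ 2 :=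
        le_mul_of_one_le_right (Nat.cast_nonneg _) (one_le_pow₀ hvol)
    _ = V ^ 2 * ((1 - δ)⁻¹ ^ 2 * (n + 1) ^ 2 * (#(lowWeightPairs a b z ρ) * m ^ 2)) := by ring
    _ ≤ V ^ 2 * ((1 - δ)⁻¹ ^ 2 * (n + 1) ^ 2 * θ ^ n) := by gcongr
    _ ≤ V ^ 2 * (2 : ℝ) ^ (-(h * n)) := by
        gcongr
        exact hN n hn

end LowWeightPairs

section DependentRows

lemma exists_ne_of_sum_smul_not_proportional {σ R M : Type*} [Fintype σ] [Semiring R]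
    [AddCommMonoid M] [Module R M] {a : σ → R} {x : σ → M} (h0 : ∑ i, a i • x i ≠ 0)
    (hprop : ∀ i, ∀ t : R, ∑ l, a l • x l ≠ t • x i) : ∃ i j, i ≠ j ∧ a i ≠ 0 ∧ a j ≠ 0 := by
  obtain ⟨i, -, hi⟩ := exists_ne_zero_of_sum_ne_zero h0
  by_contra! hcon
  have hzero (j : σ) (hj : j ≠ i) : a j = 0 := hcon i j hj.symm (left_ne_zero_of_smul hi)
  exact hprop i (a i) (Fintype.sum_eq_single i fun j hj ↦ by rw [hzero j hj, zero_smul])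

variable {σ ι F : Type*} [Fintype σ] [DecidableEq σ] [Fintype ι] [DecidableEq ι] [Fintype F]
  [DecidableEq F]

/-- The matrices with all rows, and also the combination of the rows with coefficients `a`, of
weight at most `r`. -/
def lowWeightRows [Semiring F] (a : σ → F) (r : ℕ) : Finset (Matrix σ ι F) :=
  {Y | (∀ l, hammingNorm (Y l) ≤ r) ∧ hammingNorm (Matrix.vecMul a Y) ≤ r}

@[simp]
lemma mem_lowWeightRows [Semiring F] {a : σ → F} {r : ℕ} {Y : Matrix σ ι F} :
    Y ∈ lowWeightRows a r ↔
      (∀ l, hammingNorm (Y l) ≤ r) ∧ hammingNorm (Matrix.vecMul a Y) ≤ r := by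
  simp [lowWeightRows]

lemma card_lowWeightRows_le [Semiring F] {a : σ → F} {i j : σ} (hij : i ≠ j) {r M : ℕ}
    (hM : ∀ z : ι → F, #(lowWeightPairs (a i) (a j) z r) ≤ M) :
    #(lowWeightRows a r : Finset (Matrix σ ι F)) ≤
      M * #(hammingBall ι F r) ^ (Fintype.card σ - 2) := by
  let others : Finset σ := {i, j}ᶜ
  have hothers : #(Fintype.piFinset fun _ : others ↦ hammingBall ι F r) =
      #(hammingBall ι F r) ^ (Fintype.card σ - 2) := by
    rw [Fintype.card_piFinset, prod_const, card_univ, Fintype.card_coe, card_compl, card_pair hij]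
  rw [← hothers]
  refine card_le_mul_card_image_of_maps_to
    (f := fun (Y : Matrix σ ι F) (l : others) ↦ Y l) (fun Y hY ↦ ?_) M fun W _ ↦ ?_
  · exact Fintype.mem_piFinset.2 fun l ↦ mem_hammingBall.2 ((mem_lowWeightRows.1 hY).1 l)
  refine le_trans (card_le_card_of_injOn (fun Y m ↦ (Y i m, Y j m)) ?_ ?_)
    (hM (∑ l : others, a l • W l))
  · intro Y hY
    rw [mem_coe, mem_filter, mem_lowWeightRows] at hY
    obtain ⟨⟨hrows, hcomb⟩, rfl⟩ := hY
    have hsum : Matrix.vecMul a Y =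
        fun m ↦ a i * Y i m + a j * Y j m + (∑ l : others, a l • Y l) m := by
      rw [Matrix.vecMul_eq_sum, ← sum_add_sum_compl {i, j}, sum_pair hij, ← sum_coe_sort {i, j}ᶜ]
      rfl
    rw [hsum] at hcomb
    exact mem_lowWeightPairs.2 ⟨hrows i, hrows j, hcomb⟩
  · intro Y hY Y' hY' h
    have hW := (mem_filter.1 hY).2.trans (mem_filter.1 hY').2.symm
    ext l m
    by_cases hl : l ∈ others
    · exact congrFun (congrFun hW ⟨l, hl⟩) m
    · have hpair := Prod.ext_iff.1 (congrFun h m)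
      obtain rfl | rfl : l = i ∨ l = j := by simpa [others, or_iff_not_imp_left] using hl
      exacts [hpair.1, hpair.2]

lemma card_lowWeightRows_le_hammingVol_pow [Semiring F] {a : σ → F} {i j : σ} (hij : i ≠ j)
    {r : ℕ} {E : ℝ}
    (hE : ∀ z : ι → F, (#(lowWeightPairs (a i) (a j) z r) : ℝ) ≤
      hammingVol (Fintype.card F) (Fintype.card ι) r ^ 2 * E) :
    (#(lowWeightRows a r : Finset (Matrix σ ι F)) : ℝ) ≤
      hammingVol (Fintype.card F) (Fintype.card ι) r ^ Fintype.card σ * E := by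
  have hσ : 2 ≤ Fintype.card σ := Fintype.one_lt_card_iff.2 ⟨i, j, hij⟩
  rw [← card_hammingBall] at hE ⊢
  set V := #(hammingBall ι F r)
  calc (#(lowWeightRows a r : Finset (Matrix σ ι F)) : ℝ)
      ≤ ⌊(V : ℝ) ^ 2 * E⌋₊ * (V : ℝ) ^ (Fintype.card σ - 2) := by
        exact_mod_cast card_lowWeightRows_le hij fun z ↦ Nat.le_floor (hE z)
    _ ≤ (V : ℝ) ^ 2 * E * (V : ℝ) ^ (Fintype.card σ - 2) := by
        gcongr
        exact Nat.floor_le ((Nat.cast_nonneg _).trans (hE 0))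
    _ = (V : ℝ) ^ Fintype.card σ * E := by
        rw [mul_right_comm, ← pow_add, Nat.add_sub_cancel' hσ]

end DependentRows

section UniformPushforward

lemma card_filter_mem_mul_card_of_surjective {A B : Type*} [AddGroup A] [AddGroup B] [Fintype A]
    [Fintype B] [DecidableEq B] {f : A →+ B} (hf : Function.Surjective f) (t : Finset B) :
    #{x | f x ∈ t} * Fintype.card B = #t * Fintype.card A := by
  have hcount (t : Finset B) : #{x | f x ∈ t} = #t * #{x | f x = 0} := by
    rw [← sum_card_fiberwise_eq_card_filter, sum_congr rfl fun b _ ↦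
      AddMonoidHom.card_fiber_eq_of_mem_range f (hf b) (hf 0), sum_const, smul_eq_mul]
  have hA : Fintype.card A = Fintype.card B * #{x | f x = 0} := by simpa using hcount univ
  rw [hcount t, hA]
  ring

lemma card_matrix_eq_pow (m n α : Type*) [Fintype m] [Fintype n] [DecidableEq m] [DecidableEq n]
    [Fintype α] :
    Fintype.card (Matrix m n α) = Fintype.card α ^ (Fintype.card m * Fintype.card n) := by
  rw [Fintype.card_congr Matrix.of.symm]
  simp [← pow_mul, mul_comm]

lemma exists_mul_eq_one_of_linearIndependent_row {F σ κ : Type*} [Field F] [Finite σ]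
    [DecidableEq σ] [Fintype κ] {X : Matrix σ κ F} (hX : LinearIndependent F X.row) :
    ∃ N : Matrix κ σ F, X * N = 1 := by
  cases nonempty_fintype σ
  rw [← Matrix.mulVec_surjective_iff_exists_right_inverse]
  have hrange : LinearMap.range X.mulVecLin = ⊤ :=
    Submodule.eq_top_of_finrank_eq (by
      rw [Module.finrank_fintype_fun_eq_card]
      exact hX.rank_matrix)
  exact LinearMap.range_eq_top.1 hrange

variable {F σ κ ι : Type*} [Field F] [Fintype F] [DecidableEq F] [Fintype σ]
  [Fintype κ] [DecidableEq κ] [Fintype ι] [DecidableEq ι]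

lemma card_filter_mul_mem_mul_pow {X : Matrix σ κ F} (hX : LinearIndependent F X.row)
    (t : Finset (Matrix σ ι F)) :
    #{G : Matrix κ ι F | X * G ∈ t} * Fintype.card F ^ (Fintype.card σ * Fintype.card ι) =
      #t * Fintype.card F ^ (Fintype.card κ * Fintype.card ι) := by
  obtain ⟨N, hN⟩ := exists_mul_eq_one_of_linearIndependent_row hX
  have hsurj : Function.Surjective (Matrix.addMonoidHomMulLeft (n := ι) X) := fun Y ↦
    ⟨N * Y, by simp [← Matrix.mul_assoc, hN]⟩
  simpa [card_matrix_eq_pow] using card_filter_mem_mul_card_of_surjective hsurj t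

variable [DecidableEq σ]

lemma card_filter_mul_mem_lowWeightRows_le {X : Matrix σ κ F} (hX : LinearIndependent F X.row)
    {a : σ → F} (h0 : Matrix.vecMul a X ≠ 0) (hprop : ∀ i, ∀ t : F, Matrix.vecMul a X ≠ t • X i)
    {r : ℕ} {E : ℝ}
    (hE : ∀ (b c : F) (z : ι → F), b ≠ 0 → c ≠ 0 → (#(lowWeightPairs b c z r) : ℝ) ≤
      hammingVol (Fintype.card F) (Fintype.card ι) r ^ 2 * E) :
    (#{G : Matrix κ ι F | X * G ∈ lowWeightRows a r} : ℝ) ≤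
      (hammingVol (Fintype.card F) (Fintype.card ι) r / Fintype.card F ^ Fintype.card ι) ^
        Fintype.card σ * E * Fintype.card F ^ (Fintype.card κ * Fintype.card ι) := by
  rw [Matrix.vecMul_eq_sum] at h0 hprop
  obtain ⟨i, j, hij, hi, hj⟩ := exists_ne_of_sum_smul_not_proportional h0 hprop
  have hrows := card_lowWeightRows_le_hammingVol_pow hij fun z : ι → F ↦ hE _ _ z hi hj
  have hcount : (#{G : Matrix κ ι F | X * G ∈ lowWeightRows a r} : ℝ) *
      Fintype.card F ^ (Fintype.card σ * Fintype.card ι) =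
        #(lowWeightRows a r : Finset (Matrix σ ι F)) *
          Fintype.card F ^ (Fintype.card κ * Fintype.card ι) := by
    exact_mod_cast card_filter_mul_mem_mul_pow hX (lowWeightRows a r)
  rw [div_pow, ← pow_mul, mul_comm (Fintype.card ι), div_mul_eq_mul_div, div_mul_eq_mul_div,
    le_div_iff₀ (by positivity), hcount]
  gcongr

end UniformPushforward

theorem dependent_low_weight_codewords_bound_general {F : Type*} [Field F] [Fintype F]
    [DecidableEq F] {δ : ℝ} (hδ0 : 0 < δ) (hδ1 : δ < 1 - 1 / Fintype.card F) :
    ∃ h : ℝ, 0 < h ∧ h < 1 ∧ ∃ N : ℕ, ∀ n ≥ N, ∀ (k s : ℕ) (x : Fin s → Fin k → F) (y : Fin k → F),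
      LinearIndependent F x → y ∈ Submodule.span F (Set.range x) → y ≠ 0 →
      (∀ i, ∀ t : F, y ≠ t • x i) →
      (#{G : Matrix (Fin k) (Fin n) F | (∀ i, hammingNorm (Matrix.vecMul (x i) G) ≤ ⌊δ * n⌋₊) ∧
          hammingNorm (Matrix.vecMul y G) ≤ ⌊δ * n⌋₊} : ℝ) ≤
        (hammingVol (Fintype.card F) n ⌊δ * n⌋₊ / Fintype.card F ^ n) ^ s *
          (2 : ℝ) ^ (-(h * n)) * Fintype.card F ^ (k * n) := by
  obtain ⟨h, ⟨h0, h1⟩, N, hN⟩ := exists_card_lowWeightPairs_le hδ0 hδ1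
  refine ⟨h, h0, h1, N, fun n hn k s x y hx hy hy0 hprop ↦ ?_⟩
  obtain ⟨a, rfl⟩ := (Submodule.mem_span_range_iff_exists_fun F).1 hy
  have hrow (i : Fin s) : Matrix.of x i = x i := rfl
  have hvec : Matrix.vecMul a (Matrix.of x) = ∑ i, a i • x i := Matrix.vecMul_eq_sum a _
  rw [← hvec] at hy0 hprop ⊢
  have hbound := card_filter_mul_mem_lowWeightRows_le (ι := Fin n) (X := Matrix.of x) hx hy0 hprop
    fun b c z hb hc ↦ by simpa using hN n hn b c z hb hc
  simpa [Matrix.mul_apply_eq_vecMul, hrow] using hbound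

/-- For a prime power `q` (realized as the cardinality of a finite field `F`)
and a constant `δ ∈ (0, 1 - 1/q)`, there is a constant `h_δ ∈ (0,1)` such that for all
sufficiently large `n`, with `d - 1 = ⌊δn⌋`: for a uniformly random `k × n` matrix `G` over
`F`, and nonzero pairwise non-proportional vectors `x_1, …, x_r ∈ F^k` (`r ≤ n`) whose first
`s` members form a maximal linearly independent subset with `s < r`, the probability that
`wt(x_i G) ≤ d - 1` for every `i` is at most `(Vol_q(n, d-1)/q^n)^s · 2^{-h_δ n}`
(expressed by counting matrices, the total number of matrices being `q^{kn}`). -/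
theorem dependent_low_weight_codewords_bound
    (q : ℕ) (F : Type) [Field F] [Fintype F] [DecidableEq F] (hF : Fintype.card F = q)
    (δ : ℝ) (hδ0 : 0 < δ) (hδ1 : δ < 1 - 1 / (q : ℝ)) :
    ∃ h : ℝ, 0 < h ∧ h < 1 ∧ ∃ N : ℕ, ∀ n : ℕ, N ≤ n →
      ∀ k r s : ℕ, r ≤ n → ∀ hsr : s < r,
      ∀ x : Fin r → Fin k → F,
        (∀ i, x i ≠ 0) →
        (∀ i j, i ≠ j → ∀ t : F, x i ≠ t • x j) →
        LinearIndependent F (fun i : Fin s => x (Fin.castLE hsr.le i)) →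
        (∀ j, x j ∈ Submodule.span F (Set.range fun i : Fin s => x (Fin.castLE hsr.le i))) →
        (((Finset.univ : Finset (Matrix (Fin k) (Fin n) F)).filter fun G =>
            ∀ i, hammingNorm (Matrix.vecMul (x i) G) ≤ ⌊δ * (n : ℝ)⌋₊).card : ℝ) ≤
          ((∑ i ∈ Finset.range (⌊δ * (n : ℝ)⌋₊ + 1), (n.choose i : ℝ) * ((q : ℝ) - 1) ^ i) /
              (q : ℝ) ^ n) ^ s *
            (2 : ℝ) ^ (-(h * (n : ℝ))) * (q : ℝ) ^ (k * n) := by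
  subst hF
  obtain ⟨h, h0, h1, N, hN⟩ := dependent_low_weight_codewords_bound_general hδ0 hδ1
  refine ⟨h, h0, h1, N, fun n hn k r s _ hsr x hx0 hxp hli hspan ↦ ?_⟩
  refine le_trans ?_ (hN n hn k s _ _ hli (hspan ⟨s, hsr⟩) (hx0 _) fun i ↦ hxp _ _ ?_)
  · gcongr with G
    exact fun hG ↦ ⟨fun i ↦ hG _, hG _⟩
  · exact Fin.ne_of_gt i.2
end
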